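/- arXiv:2005.07674 — 4 statements merged into one kernel-verified Lean document; each statement's English description precedes it below -/
import Mathlib

section
/- Let π : (0,∞)³ → (0,∞) be a measurable prior density in the arguments (μ,α,φ). Suppose there exist 0 ≤ b₀ < b₁, a constant c > 0, and continuous functions π_μ, π_α, π_φ : (0,∞) → (0,∞) such that π(μ,α,φ) ≥ c·π_μ(μ)π_α(α)π_φ(φ) for all μ, α > 0 and all φ ∈ (b₀,b₁), that π_μ(μ) ≳ μ^k on (0,∞) for some k ∈ ℝ, and that one of the following holds: (a) k < −1; (b) k > −1 and π_α(α) ≳ α^{q₀} as α → 0⁺ for some q₀ ∈ ℝ; (c) k > −1, b₀ = 0, and π_φ(φ) ≳ φ^{r₀} as φ → 0⁺ with n < −r₀ − 1. Then ∫_{(0,∞)³} π(μ,α,φ) · L(φ,μ,α) dφ dμ dα = ∞; i.e., the posterior is improper. -/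
/-!
The divergence always comes from one corner of the parameter space, and in each case it is reduced to
`∫₀^δ dt / t = ∞` (`lintegral_eq_top_of_inv_le`).

* If `k < -1`, then for `α` small and `φ` bounded the exponent `k + nαφ` of `μ` is still at most `-1`,
  so the `μ`-integral diverges at `0` for all small `α`.
* If `-1 < k` and `πα` is bounded below by a power, restrict `μ` to the window
  `(exp (1/α), 2 exp (1/α))`. There `μ ^ α ≤ 2e`, so the exponential factor stays bounded below, while
  `∫ μ ^ k dμ` over the window is at least `exp ((k+1)/α) / 2`. This beats every power of `α` as
  `α → 0⁺`, so the `α`-integral diverges.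
* If `πφ` is bounded below by `φ ^ r₀`, then `1 / Γ(φ) ^ n ≥ const * φ ^ n` near `0`, so the
  `φ`-integrand is at least a multiple of `φ ^ (n + r₀)` with `n + r₀ < -1`, and the `φ`-integral
  already diverges for all `μ` and `α`.

In the first two cases `φ` only matters through a compact interval `[a, b] ⊆ (b₀, b₁)`, on which all
factors depending on it are bounded below (`prior_mul_stacy_lower`).
-/

open MeasureTheory Real Filter Topology

/-- The Stacy (generalized gamma) likelihood for data `x : Fin n → ℝ` at
parameters `(φ, μ, α)`. -/
noncomputable def stacyLikelihood (n : ℕ) (x : Fin n → ℝ) (φ μ α : ℝ) : ℝ :=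
  α ^ n / Real.Gamma φ ^ n * (∏ i, x i ^ (α * φ - 1)) * μ ^ ((n : ℝ) * α * φ) *
    Real.exp (-(μ ^ α * ∑ i, x i ^ α))

theorem lintegral_eq_top_of_inv_le {f : ℝ → ENNReal} {C δ : ℝ} (hC : 0 < C) (hδ : 0 < δ)
    (h : ∀ t ∈ Set.Ioo 0 δ, ENNReal.ofReal (C * t⁻¹) ≤ f t) :
    ∫⁻ t in Set.Ioi (0:ℝ), f t = ⊤ := by
  have h1 : ∫⁻ t in Set.Ioo (0:ℝ) δ, ENNReal.ofReal (C * t⁻¹) = ⊤ := by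
    by_contra hne
    have hint : IntegrableOn (fun t : ℝ => C * t⁻¹) (Set.Ioo 0 δ) := by
      refine ⟨by fun_prop, ?_⟩
      rw [hasFiniteIntegral_iff_ofReal]
      · exact lt_top_iff_ne_top.mpr hne
      · filter_upwards [ae_restrict_mem measurableSet_Ioo] with t ht
        exact mul_nonneg hC.le (inv_nonneg.mpr ht.1.le)
    have h2 : IntegrableOn (fun t : ℝ => t⁻¹) (Set.Ioo 0 δ) := by
      have := hint.const_mul C⁻¹
      refine this.congr (Eventually.of_forall fun t => ?_)
      field_simp
    have h3 : IntervalIntegrable (fun t : ℝ => t⁻¹) volume 0 δ := by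
      rw [intervalIntegrable_iff_integrableOn_Ioo_of_le hδ.le]
      exact h2
    rw [intervalIntegrable_inv_iff] at h3
    rcases h3 with h3 | h3
    · exact hδ.ne h3
    · exact h3 Set.left_mem_uIcc
  rw [eq_top_iff, ← h1]
  calc ∫⁻ t in Set.Ioo (0:ℝ) δ, ENNReal.ofReal (C * t⁻¹)
      ≤ ∫⁻ t in Set.Ioo (0:ℝ) δ, f t := setLIntegral_mono' measurableSet_Ioo h
    _ ≤ ∫⁻ t in Set.Ioi (0:ℝ), f t := lintegral_mono_set Set.Ioo_subset_Ioi_self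

theorem ofReal_mul_length_le_lintegral {f : ℝ → ENNReal} {K a b : ℝ} (hK : 0 ≤ K) (ha : 0 ≤ a)
    (h : ∀ t ∈ Set.Ioo a b, ENNReal.ofReal K ≤ f t) :
    ENNReal.ofReal (K * (b - a)) ≤ ∫⁻ t in Set.Ioi (0:ℝ), f t := by
  calc ENNReal.ofReal (K * (b - a)) = ∫⁻ _ in Set.Ioo a b, ENNReal.ofReal K := by
        rw [setLIntegral_const, Real.volume_Ioo, ENNReal.ofReal_mul hK]
    _ ≤ ∫⁻ t in Set.Ioo a b, f t := setLIntegral_mono' measurableSet_Ioo h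
    _ ≤ ∫⁻ t in Set.Ioi (0:ℝ), f t :=
        lintegral_mono_set fun t ht => lt_of_le_of_lt ha ht.1

theorem exists_pos_le_of_continuousOn_Icc {f : ℝ → ℝ} {a b : ℝ} (hab : a ≤ b)
    (hf : ContinuousOn f (Set.Icc a b)) (hpos : ∀ t ∈ Set.Icc a b, 0 < f t) :
    ∃ m > 0, ∀ t ∈ Set.Icc a b, m ≤ f t := by
  obtain ⟨t, ht, hmin⟩ := isCompact_Icc.exists_isMinOn (Set.nonempty_Icc.mpr hab) hf
  exact ⟨f t, hpos t ht, fun s hs => hmin hs⟩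

theorem exists_pos_le_rpow {P : ℝ} (hP : 0 < P) {A B : ℝ} (hAB : A ≤ B) :
    ∃ m > 0, ∀ s ∈ Set.Icc A B, m ≤ P ^ s :=
  exists_pos_le_of_continuousOn_Icc hAB
    (continuous_const.rpow continuous_id fun _ => Or.inl hP.ne').continuousOn
    fun _ _ => rpow_pos_of_pos hP _

theorem continuousOn_inv_Gamma_Ioi :
    ContinuousOn (fun t => (Real.Gamma t)⁻¹) (Set.Ioi 0) := by
  refine ContinuousOn.inv₀ (fun t ht => ?_) fun t ht => (Real.Gamma_pos_of_pos ht).ne'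
  exact (Real.differentiableOn_Gamma_Ioi.differentiableAt
    (Ioi_mem_nhds ht)).continuousAt.continuousWithinAt

/-- The finite-limsup encoding of `t ^ q ≲ g t` as `t → 0⁺` gives a pointwise lower bound on `g`
on some interval `(0, δ)`. -/
theorem exists_mul_rpow_le_of_limsup {g : ℝ → ℝ} (hg : ∀ t > 0, 0 < g t) {q : ℝ}
    (h : Filter.limsup (fun t => ENNReal.ofReal (t ^ q / g t)) (𝓝[>] (0:ℝ)) < ⊤) :
    ∃ m > 0, ∃ δ > 0, ∀ t ∈ Set.Ioo 0 δ, m * t ^ q ≤ g t := by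
  obtain ⟨M, hM, hMtop⟩ := exists_between h
  have hev := eventually_lt_of_limsup_lt hM
  obtain ⟨δ, hδ, hsub⟩ := mem_nhdsGT_iff_exists_Ioo_subset.mp hev
  have hR : 0 < M.toReal + 1 := by positivity
  refine ⟨(M.toReal + 1)⁻¹, inv_pos.mpr hR, δ, hδ, fun t ht => ?_⟩
  have h1 : ENNReal.ofReal (t ^ q / g t) < M := hsub ht
  have h2 : t ^ q / g t < M.toReal := (ENNReal.ofReal_lt_iff_lt_toReal
    (div_nonneg (rpow_nonneg ht.1.le _) (hg t ht.1).le) hMtop.ne).mp h1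
  have h3 := hg t ht.1
  rw [div_lt_iff₀ h3] at h2
  rw [inv_mul_le_iff₀ hR]
  linarith

/-- Lower bound for prior times likelihood when `φ` is confined to a compact part of `(b₀, b₁)` and
`α ≤ 1`: only the dependence on `α` and `μ` is kept. -/
theorem prior_mul_stacy_lower
    (n : ℕ) (x : Fin n → ℝ) (hx : ∀ i, 0 < x i) (prior : ℝ → ℝ → ℝ → ℝ)
    (b₀ b₁ : ℝ) (hb₀ : 0 ≤ b₀) (hb : b₀ < b₁) (c : ℝ) (hc : 0 < c)
    (πμ πα πφ : ℝ → ℝ) (hπφc : ContinuousOn πφ (Set.Ioi 0))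
    (hπα0 : ∀ t > 0, 0 < πα t) (hπφ0 : ∀ t > 0, 0 < πφ t)
    (hprod : ∀ μ > 0, ∀ α > 0, ∀ φ ∈ Set.Ioo b₀ b₁,
      c * (πμ μ * πα α * πφ φ) ≤ prior μ α φ)
    (k : ℝ) (hμk : ∃ c' > 0, ∀ t > 0, c' * t ^ k ≤ πμ t) :
    ∃ a b D S : ℝ, 0 < a ∧ a < b ∧ 0 < D ∧ 0 < S ∧
      ∀ α ∈ Set.Ioc (0:ℝ) 1, ∀ μ > 0, ∀ φ ∈ Set.Ioo a b,
        D * (πα α * α ^ n) * (μ ^ (k + (n : ℝ) * α * φ) * Real.exp (-(μ ^ α * S))) ≤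
          prior μ α φ * stacyLikelihood n x φ μ α := by
  obtain ⟨c', hc', hμk⟩ := hμk
  obtain ⟨a, ha0, hab1⟩ := exists_between hb
  obtain ⟨b, hab, hb1⟩ := exists_between hab1
  have ha : 0 < a := hb₀.trans_lt ha0
  have hsub : Set.Icc a b ⊆ Set.Ioi 0 := fun t ht => ha.trans_le ht.1
  obtain ⟨p, hp, hpφ⟩ := exists_pos_le_of_continuousOn_Icc hab.le (hπφc.mono hsub)
    fun t ht => hπφ0 t (hsub ht)
  obtain ⟨g, hg, hgφ⟩ := exists_pos_le_of_continuousOn_Icc hab.le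
    (continuousOn_inv_Gamma_Ioi.mono hsub)
    fun t ht => inv_pos.mpr (Real.Gamma_pos_of_pos (hsub ht))
  obtain ⟨m, hm, hmP⟩ := exists_pos_le_rpow (P := ∏ i, x i) (Finset.prod_pos fun i _ => hx i)
    (A := -1) (B := b - 1) (by linarith)
  have hS : 0 ≤ ∑ i, (1 + x i) := Finset.sum_nonneg fun i _ => by linarith [hx i]
  refine ⟨a, b, c * c' * p * g ^ n * m, ∑ i, (1 + x i) + 1, ha, hab, by positivity,
    by linarith, ?_⟩
  intro α hα μ hμ φ hφ
  have hφ' := Set.Ioo_subset_Icc_self hφ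
  have hφ0 : 0 < φ := hsub hφ'
  have hA := hπα0 α hα.1
  have hα0 : 0 < α := hα.1
  have h1 : c * (c' * μ ^ k * πα α * p) ≤ prior μ α φ := by
    refine le_trans ?_ (hprod μ hμ α hα0 φ ⟨ha0.trans hφ.1, hφ.2.trans hb1⟩)
    have := hμk μ hμ
    have := hpφ φ hφ'
    have : 0 ≤ πμ μ := le_trans (by positivity) (hμk μ hμ)
    gcongr
  have hprodx : m ≤ ∏ i, x i ^ (α * φ - 1) := by
    rw [Real.finsetProd_rpow _ _ fun i _ => (hx i).le]
    refine hmP _ ⟨by nlinarith, ?_⟩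
    have : α * φ ≤ 1 * b := mul_le_mul hα.2 hφ.2.le hφ0.le zero_le_one
    linarith
  have hsum : ∑ i, x i ^ α ≤ ∑ i, (1 + x i) + 1 := by
    refine le_trans (Finset.sum_le_sum fun i _ => ?_) (by linarith)
    calc x i ^ α ≤ (1 + x i) ^ α :=
          rpow_le_rpow (hx i).le (by linarith) hα0.le
      _ ≤ (1 + x i) ^ (1:ℝ) := rpow_le_rpow_of_exponent_le (by linarith [hx i]) hα.2
      _ = 1 + x i := rpow_one _
  have h2 : α ^ n * g ^ n * m * μ ^ ((n : ℝ) * α * φ) *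
      Real.exp (-(μ ^ α * (∑ i, (1 + x i) + 1))) ≤ stacyLikelihood n x φ μ α := by
    unfold stacyLikelihood
    rw [div_eq_mul_inv, ← inv_pow]
    have := hgφ φ hφ'
    have hQ := hm.trans_le hprodx
    generalize ∏ i, x i ^ (α * φ - 1) = Q at hprodx hQ ⊢
    gcongr
  calc _ = (c * (c' * μ ^ k * πα α * p)) * (α ^ n * g ^ n * m * μ ^ ((n : ℝ) * α * φ) *
      Real.exp (-(μ ^ α * (∑ i, (1 + x i) + 1)))) := by
        rw [rpow_add hμ]; ring
    _ ≤ _ := mul_le_mul h1 h2 (by positivity) (le_trans (by positivity) h1)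

/-- (Theorem 2.8, item i), of the paper.) In the Stacy model with all
three parameters unknown, if the prior `π(μ,α,φ)` dominates a product
`π_μ(μ)π_α(α)π_φ(φ)` for `φ ∈ (b₀,b₁)` with `π_μ(μ) ≳ μ^k`, and either (a) `k < -1`,
(b) `k > -1` and `π_α(α) ≳ α^{q₀}` as `α → 0⁺` for some `q₀`, or (c) `k > -1`, `b₀ = 0`
and `π_φ(φ) ≳ φ^{r₀}` as `φ → 0⁺` with `n < -r₀ - 1`, then the posterior is improper. -/
theorem stacy_posterior_improper_i
    (n : ℕ) (hn : 2 ≤ n) (x : Fin n → ℝ) (hx : ∀ i, 0 < x i) (hxne : ∃ i j, x i ≠ x j)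
    (prior : ℝ → ℝ → ℝ → ℝ)
    (hpm : Measurable fun p : ℝ × ℝ × ℝ => prior p.1 p.2.1 p.2.2)
    (hp0 : ∀ μ > 0, ∀ α > 0, ∀ φ > 0, 0 < prior μ α φ)
    (b₀ b₁ : ℝ) (hb₀ : 0 ≤ b₀) (hb : b₀ < b₁) (c : ℝ) (hc : 0 < c)
    (πμ πα πφ : ℝ → ℝ)
    (hπμc : ContinuousOn πμ (Set.Ioi 0)) (hπαc : ContinuousOn πα (Set.Ioi 0))
    (hπφc : ContinuousOn πφ (Set.Ioi 0))
    (hπμ0 : ∀ t > 0, 0 < πμ t) (hπα0 : ∀ t > 0, 0 < πα t) (hπφ0 : ∀ t > 0, 0 < πφ t)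
    (hprod : ∀ μ > 0, ∀ α > 0, ∀ φ ∈ Set.Ioo b₀ b₁,
      c * (πμ μ * πα α * πφ φ) ≤ prior μ α φ)
    (k : ℝ)
    (hμk : ∃ c' > 0, ∀ t > 0, c' * t ^ k ≤ πμ t)
    (hcase :
      k < -1 ∨
      (-1 < k ∧ ∃ q₀ : ℝ,
        Filter.limsup (fun t => ENNReal.ofReal (t ^ q₀ / πα t)) (𝓝[>] (0:ℝ)) < ⊤) ∨
      (-1 < k ∧ b₀ = 0 ∧ ∃ r₀ : ℝ,
        Filter.limsup (fun t => ENNReal.ofReal (t ^ r₀ / πφ t)) (𝓝[>] (0:ℝ)) < ⊤ ∧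
        (n : ℝ) < -r₀ - 1)) :
    (∫⁻ α in Set.Ioi (0:ℝ), ∫⁻ μ in Set.Ioi (0:ℝ), ∫⁻ φ in Set.Ioi (0:ℝ),
      ENNReal.ofReal (prior μ α φ * stacyLikelihood n x φ μ α)) = ⊤ := by
  rcases hcase with hk | ⟨hk, q₀, hq⟩ | ⟨_, hb0, r₀, hr, hn'⟩
  · obtain ⟨a, b, D, S, ha, hab, hD, hS, hlow⟩ := prior_mul_stacy_lower n x hx prior b₀ b₁ hb₀ hb c
      hc πμ πα πφ hπφc hπα0 hπφ0 hprod k hμk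
    have hn0 : (0:ℝ) < n := by exact_mod_cast (by omega : 0 < n)
    have hb0 : 0 < b := ha.trans hab
    -- For `α` below this threshold, `k + nαφ ≤ -1` for all `φ < b`.
    refine lintegral_eq_top_of_inv_le (C := 1) (δ := min 1 ((-1 - k) / (n * b))) one_pos
      (lt_min one_pos (div_pos (by linarith) (by positivity))) fun α hα => ?_
    have hα0 : 0 < α := hα.1
    have hα1 : α ≤ 1 := hα.2.le.trans (min_le_left _ _)
    have hαk : α * (n * b) ≤ -1 - k := by
      rw [← le_div_iff₀ (by positivity)]
      exact hα.2.le.trans (min_le_right _ _)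
    have hA := hπα0 α hα0
    refine le_top.trans_eq (Eq.symm ?_)
    refine lintegral_eq_top_of_inv_le (C := D * (πα α * α ^ n) * Real.exp (-S) * (b - a)) (δ := 1)
      (mul_pos (by positivity) (by linarith)) one_pos fun μ hμ => ?_
    have hμ0 : 0 < μ := hμ.1
    have e : D * (πα α * α ^ n) * Real.exp (-S) * (b - a) * μ⁻¹ =
      D * (πα α * α ^ n) * (μ⁻¹ * Real.exp (-S)) * (b - a) := by ring
    rw [e]
    refine ofReal_mul_length_le_lintegral (by positivity) ha.le fun φ hφ => ?_
    refine ENNReal.ofReal_le_ofReal (le_trans ?_ (hlow α ⟨hα0, hα1⟩ μ hμ0 φ hφ))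
    have h1 : μ⁻¹ ≤ μ ^ (k + (n : ℝ) * α * φ) := by
      rw [← rpow_neg_one]
      refine rpow_le_rpow_of_exponent_ge hμ0 hμ.2.le ?_
      have : (n : ℝ) * α * φ ≤ n * α * b := by have := hφ.2.le; gcongr
      nlinarith
    have h2 : μ ^ α * S ≤ S := by
      have := rpow_le_one hμ0.le hμ.2.le hα0.le
      nlinarith
    gcongr
  · obtain ⟨a, b, D, S, ha, hab, hD, hS, hlow⟩ := prior_mul_stacy_lower n x hx prior b₀ b₁ hb₀ hb c
      hc πμ πα πφ hπφc hπα0 hπφ0 hprod k hμk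
    obtain ⟨m, hm, δ, hδ, hmq⟩ := exists_mul_rpow_le_of_limsup hπα0 hq
    have hexp : ∀ᶠ α in 𝓝[>] (0:ℝ), 1 ≤ Real.exp ((k + 1) * α⁻¹) / α⁻¹ ^ (n + q₀ + 1) :=
      ((tendsto_exp_mul_div_rpow_atTop (n + q₀ + 1) (k + 1) (by linarith)).comp
        tendsto_inv_nhdsGT_zero).eventually_ge_atTop 1
    obtain ⟨δ', hδ', hsub⟩ := mem_nhdsGT_iff_exists_Ioo_subset.mp hexp
    have hδ'0 : 0 < δ' := hδ'
    have hba : 0 < b - a := by linarith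
    refine lintegral_eq_top_of_inv_le
      (C := D * m * Real.exp (-(2 * Real.exp 1 * S)) * (b - a) / 2)
      (δ := min 1 (min δ δ')) (by positivity) (by positivity) fun α hα => ?_
    have hα0 : 0 < α := hα.1
    have hα1 : α ≤ 1 := hα.2.le.trans (min_le_left _ _)
    have hαm := hmq α ⟨hα0, hα.2.trans_le ((min_le_right _ _).trans (min_le_left _ _))⟩
    have hαe : 1 ≤ Real.exp ((k + 1) * α⁻¹) / α⁻¹ ^ (n + q₀ + 1) :=
      hsub ⟨hα0, hα.2.trans_le ((min_le_right _ _).trans (min_le_right _ _))⟩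
    have hA := hπα0 α hα0
    set E := Real.exp α⁻¹ with hE
    have hE0 : 0 < E := Real.exp_pos _
    have hE1 : 1 ≤ E := Real.one_le_exp (by positivity)
    have hEk : Real.exp ((k + 1) * α⁻¹) = E ^ (k + 1) := by
      rw [hE, ← Real.exp_mul]; congr 1; ring
    -- Integrating `μ ^ k` over `(E, 2E)` produces at least `E ^ (k + 1) / 2`.
    have hmain : ENNReal.ofReal (D * (πα α * α ^ n) * (E ^ (k + 1) * (2 * E)⁻¹ *
        Real.exp (-(2 * Real.exp 1 * S))) * (b - a) * (2 * E - E)) ≤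
        ∫⁻ μ in Set.Ioi (0:ℝ), ∫⁻ φ in Set.Ioi (0:ℝ),
          ENNReal.ofReal (prior μ α φ * stacyLikelihood n x φ μ α) := by
      refine ofReal_mul_length_le_lintegral (by positivity) hE0.le fun μ hμ => ?_
      have hμ0 : 0 < μ := hE0.trans hμ.1
      refine ofReal_mul_length_le_lintegral (by positivity) ha.le fun φ hφ => ?_
      refine ENNReal.ofReal_le_ofReal (le_trans ?_ (hlow α ⟨hα0, hα1⟩ μ hμ0 φ hφ))
      have hφ0 : 0 < φ := ha.trans hφ.1
      have h1 : E ^ (k + 1) * (2 * E)⁻¹ ≤ μ ^ (k + (n : ℝ) * α * φ) := by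
        calc E ^ (k + 1) * (2 * E)⁻¹ ≤ μ ^ (k + 1) * μ⁻¹ := by
              have h3 := hμ.1.le
              have h4 := hμ.2.le
              have h5 : 0 ≤ k + 1 := by linarith
              gcongr
          _ = μ ^ k := by
              rw [rpow_add_one hμ0.ne', mul_assoc, mul_inv_cancel₀ hμ0.ne', mul_one]
          _ ≤ _ := rpow_le_rpow_of_exponent_le (hE1.trans hμ.1.le)
              (by have : 0 ≤ (n : ℝ) * α * φ := by positivity
                  linarith)
      have h2 : μ ^ α ≤ 2 * Real.exp 1 := by
        calc μ ^ α ≤ (2 * E) ^ α := rpow_le_rpow hμ0.le hμ.2.le hα0.le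
          _ = 2 ^ α * Real.exp 1 := by
              rw [mul_rpow two_pos.le hE0.le, hE, ← Real.exp_mul, inv_mul_cancel₀ hα0.ne']
          _ ≤ 2 ^ (1:ℝ) * Real.exp 1 := by
              have := rpow_le_rpow_of_exponent_le (one_le_two (α := ℝ)) hα1
              gcongr
          _ = 2 * Real.exp 1 := by rw [rpow_one]
      gcongr
    refine le_trans (ENNReal.ofReal_le_ofReal ?_) hmain
    have hpow : α⁻¹ ≤ α ^ q₀ * α ^ n * E ^ (k + 1) := by
      rw [hEk, inv_rpow hα0.le, div_inv_eq_mul, rpow_add hα0, rpow_add hα0, rpow_natCast,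
        rpow_one] at hαe
      rw [inv_le_iff_one_le_mul₀ hα0]
      linarith
    calc D * m * Real.exp (-(2 * Real.exp 1 * S)) * (b - a) / 2 * α⁻¹
        ≤ D * m * Real.exp (-(2 * Real.exp 1 * S)) * (b - a) / 2 *
            (α ^ q₀ * α ^ n * E ^ (k + 1)) := by gcongr
      _ = D * (m * α ^ q₀ * α ^ n) * (E ^ (k + 1) * (2 * E)⁻¹ *
            Real.exp (-(2 * Real.exp 1 * S))) * (b - a) * (2 * E - E) := by
          field_simp; ring
      _ ≤ _ := by
          have : 0 ≤ 2 * E - E := by linarith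
          gcongr
  · obtain ⟨m, hm, δ, hδ, hmr⟩ := exists_mul_rpow_le_of_limsup hπφ0 hr
    subst hb0
    -- `1 / Γ(φ) = φ / Γ(φ + 1)`, and `Γ` is bounded on `[1, 2]`.
    obtain ⟨g, hg, hgφ⟩ := exists_pos_le_of_continuousOn_Icc (one_le_two (α := ℝ))
      (continuousOn_inv_Gamma_Ioi.mono fun t ht => one_pos.trans_le ht.1)
      fun t ht => inv_pos.mpr (Real.Gamma_pos_of_pos (one_pos.trans_le ht.1))
    refine lintegral_eq_top_of_inv_le one_pos one_pos fun α hα => ?_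
    refine le_top.trans_eq (Eq.symm ?_)
    refine lintegral_eq_top_of_inv_le one_pos one_pos fun μ hμ => ?_
    refine le_top.trans_eq (Eq.symm ?_)
    have hα0 : 0 < α := hα.1
    have hμ0 : 0 < μ := hμ.1
    have hA := hπα0 α hα0
    have hM := hπμ0 μ hμ0
    obtain ⟨w, hw, hwP⟩ := exists_pos_le_rpow (P := ∏ i, x i) (Finset.prod_pos fun i _ => hx i)
      (A := -1) (B := α - 1) (by linarith)
    obtain ⟨v, hv, hvμ⟩ := exists_pos_le_rpow hμ0 (A := 0) (B := n * α) (by positivity)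
    refine lintegral_eq_top_of_inv_le
      (C := c * (πμ μ * πα α * m) *
        (α ^ n * g ^ n * w * v * Real.exp (-(μ ^ α * ∑ i, x i ^ α))))
      (δ := min 1 (min δ b₁)) (by positivity) (by positivity) fun φ hφ => ?_
    have hφ0 : 0 < φ := hφ.1
    have hφ1 : φ ≤ 1 := hφ.2.le.trans (min_le_left _ _)
    have hφm := hmr φ ⟨hφ0, hφ.2.trans_le ((min_le_right _ _).trans (min_le_left _ _))⟩
    have hφb : φ < b₁ := hφ.2.trans_le ((min_le_right _ _).trans (min_le_right _ _))
    have h1 : c * (πμ μ * πα α * (m * φ ^ r₀)) ≤ prior μ α φ :=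
      le_trans (by gcongr) (hprod μ hμ0 α hα0 φ ⟨hφ0, hφb⟩)
    have hΓ : φ * g ≤ (Real.Gamma φ)⁻¹ := by
      have := hgφ (φ + 1) ⟨by linarith, by linarith⟩
      rw [Real.Gamma_add_one hφ0.ne', mul_inv, le_inv_mul_iff₀ hφ0] at this
      exact this
    have hprodx : w ≤ ∏ i, x i ^ (α * φ - 1) := by
      rw [Real.finsetProd_rpow _ _ fun i _ => (hx i).le]
      exact hwP _ ⟨by nlinarith, by nlinarith⟩
    have hμφ : v ≤ μ ^ ((n : ℝ) * α * φ) :=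
      hvμ _ ⟨by positivity, mul_le_of_le_one_right (by positivity) hφ1⟩
    have h2 : α ^ n * (φ * g) ^ n * w * v * Real.exp (-(μ ^ α * ∑ i, x i ^ α)) ≤
        stacyLikelihood n x φ μ α := by
      unfold stacyLikelihood
      rw [div_eq_mul_inv, ← inv_pow]
      have hQ := hw.trans_le hprodx
      generalize ∏ i, x i ^ (α * φ - 1) = Q at hprodx hQ ⊢
      gcongr
    have hpow : φ⁻¹ ≤ φ ^ r₀ * φ ^ n := by
      rw [← rpow_neg_one, ← rpow_natCast, ← rpow_add hφ0]
      exact rpow_le_rpow_of_exponent_ge hφ0 hφ1 (by linarith)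
    refine ENNReal.ofReal_le_ofReal ?_
    calc _ ≤ c * (πμ μ * πα α * m) *
        (α ^ n * g ^ n * w * v * Real.exp (-(μ ^ α * ∑ i, x i ^ α))) * (φ ^ r₀ * φ ^ n) := by
          gcongr
      _ = c * (πμ μ * πα α * (m * φ ^ r₀)) * (α ^ n * (φ * g) ^ n * w * v *
          Real.exp (-(μ ^ α * ∑ i, x i ^ α))) := by rw [mul_pow]; ring
      _ ≤ _ := mul_le_mul h1 h2 (by positivity) (le_trans (by positivity) h1)
end

section
/- Let π : (0,∞)³ → (0,∞) be a measurable prior density in the arguments (μ,α,φ). Suppose there are continuous functions π_μ, π_α, π_φ : (0,∞) → (0,∞) with π(μ,α,φ) ≳ π_μ(μ)π_α(α)π_φ(φ) on (0,∞)³ and π_μ(μ) ≳ μ^{−1} on (0,∞), and that one of the following holds: (a) π_φ(φ) ≳ φ^{r₀} as φ → 0⁺ and π_α(α) ≳ α^{q_∞} as α → ∞, where q_∞ ≥ r₀ or n ≤ −r₀; (b) π_α(α) ≳ α^{q₀} as α → 0⁺ and π_φ(φ) ≳ φ^{r_∞} as φ → ∞, where 2r_∞ + 1 ≥ q₀ or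 n ≤ −q₀. Then ∫_{(0,∞)³} π(μ,α,φ) · L(φ,μ,α) dφ dμ dα = ∞; i.e., the posterior is improper. -/
/-!
Bound the prior below by a multiple of `μ⁻¹ πα(α) πφ(φ)`. By Tonelli the `μ`-integral can be done
first, and it is a Gamma integral: with `S(α) = ∑ x_i^α` it leaves
`α^(n-1) · Γ(nφ) / Γ(φ)^n · ∏ x_i^(αφ-1) · S(α)^(-nφ)` (`stacyMarginal`, `exists_posterior_ge`).
It remains to see that the double integral of `πα(α) πφ(φ)` times this function diverges.

*Small `φ`.* Here `Γ(nφ)/Γ(φ)^n ≳ φ^(n-1)`, and the data factor is at least a constant times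
`e^(-nBαφ)` for some `B`. So the marginal is `≳ (αφ)^(n-1)` where `αφ ≤ 2`
(`exists_stacyMarginal_ge_of_le_one`). If `q_∞ ≥ r₀`, integrating over the strip
`φ ∈ [1/α, 2/α]` gives `≳ α^(q_∞-r₀-1)`, not integrable at infinity; if `n ≤ -r₀`, the
`φ`-integral itself diverges at `0`.

*Large `φ`, small `α`.* By Stirling (upper and lower bounds proved for real arguments, up to
constants) `Γ(nφ)/Γ(φ)^n ≳ n^(nφ) φ^((n-1)/2)`. Expanding `S(α)` around the mean `m` of the
`log x_i`, the linear terms cancel and `S(α) ≤ n e^(αm + Cα²)`. The factors `n^(nφ)` cancel, and the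
marginal is `≳ α^(n-1) φ^((n-1)/2)` where `α² φ ≤ 2` (`exists_stacyMarginal_ge_of_one_le`). If
`q₀ ≤ 2 r_∞ + 1`, integrating over the strip `φ ∈ [α⁻², 2α⁻²]` gives `≳ α^(q₀-2r_∞-2)`, not
integrable at `0`; if `n ≤ -q₀`, the slab `φ ∈ [1, 2]` suffices.
-/

open MeasureTheory Real Filter Topology

/-! ### Stirling bounds and ratios of Gamma functions -/

/-- Stirling's main term `y^(y - 1/2) e^(-y)`, in exponential form. -/
noncomputable def stirlingTerm (y : ℝ) : ℝ := Real.exp ((y - 1 / 2) * Real.log y - y)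

/-- The ratio `Γ(y) / stirlingTerm y` does not increase under `y ↦ y + 1`, because
`log (1 + 1/y) ≥ 1 / (y + 1/2)`. -/
lemma Gamma_add_one_le_mul_stirlingTerm {y : ℝ} (hy : 0 < y) {C : ℝ}
    (h : Real.Gamma y ≤ C * stirlingTerm y) :
    Real.Gamma (y + 1) ≤ C * stirlingTerm (y + 1) := by
  have hG := Real.Gamma_pos_of_pos hy
  have hs : 0 < stirlingTerm y := Real.exp_pos _
  have hC : 0 < C := by
    by_contra hC
    nlinarith
  rw [Real.Gamma_add_one hy.ne']
  have key : y * stirlingTerm y ≤ stirlingTerm (y + 1) := by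
    unfold stirlingTerm
    nth_rewrite 1 [← Real.exp_log hy]
    rw [← Real.exp_add]
    apply Real.exp_le_exp.2
    have h1 := Real.le_log_one_add_of_nonneg (x := 1 / y) (by positivity)
    have h2 : Real.log (y + 1) = Real.log y + Real.log (1 + 1 / y) := by
      rw [← Real.log_mul hy.ne' (by positivity)]
      congr 1
      field_simp
    have h3 : 2 * (1 / y) / (1 / y + 2) = 1 / (y + 1 / 2) := by field_simp; ring
    rw [h3, div_le_iff₀ (by positivity)] at h1
    rw [h2]
    nlinarith
  calc y * Real.Gamma y ≤ y * (C * stirlingTerm y) := by gcongr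
    _ = C * (y * stirlingTerm y) := by ring
    _ ≤ _ := by gcongr

lemma continuousOn_Gamma_Ioi_zero : ContinuousOn Real.Gamma (Set.Ioi 0) := fun y hy =>
  (Real.differentiableAt_Gamma fun m => by
    have : (0:ℝ) < y := hy
    have : (0:ℝ) ≤ m := m.cast_nonneg
    linarith).continuousAt.continuousWithinAt

lemma exists_bounds_Icc {f : ℝ → ℝ} (hf : ContinuousOn f (Set.Ioi 0)) (hf0 : ∀ t > 0, 0 < f t)
    {a b : ℝ} (ha : 0 < a) (hab : a ≤ b) :
    ∃ c > 0, ∃ C > 0, ∀ t ∈ Set.Icc a b, c ≤ f t ∧ f t ≤ C := by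
  have hc : ContinuousOn f (Set.Icc a b) := hf.mono fun t ht => lt_of_lt_of_le ha ht.1
  have hne : (Set.Icc a b).Nonempty := Set.nonempty_Icc.2 hab
  obtain ⟨s, hs, hs'⟩ := isCompact_Icc.exists_isMinOn hne hc
  obtain ⟨t, ht, ht'⟩ := isCompact_Icc.exists_isMaxOn hne hc
  exact ⟨f s, hf0 s (lt_of_lt_of_le ha hs.1), f t, hf0 t (lt_of_lt_of_le ha ht.1),
    fun u hu => ⟨hs' hu, ht' hu⟩⟩

/-- Stirling upper bound: shift down to `[1, 2]` by `Gamma_add_one_le_mul_stirlingTerm`;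
there continuity gives the constant. -/
lemma exists_Gamma_le_stirlingTerm :
    ∃ C > 0, ∀ y ≥ 1, Real.Gamma y ≤ C * stirlingTerm y := by
  have hst : ContinuousOn (fun y => Real.Gamma y / stirlingTerm y) (Set.Ioi 0) := by
    refine continuousOn_Gamma_Ioi_zero.div ?_ fun y _ => (Real.exp_pos _).ne'
    refine Real.continuous_exp.comp_continuousOn ?_
    refine ((continuousOn_id.sub continuousOn_const).mul
      (Real.continuousOn_log.mono fun y hy => ne_of_gt hy)).sub continuousOn_id
  obtain ⟨_, _, C, hC, h⟩ := exists_bounds_Icc hst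
    (fun t ht => div_pos (Real.Gamma_pos_of_pos ht) (Real.exp_pos _)) one_pos one_le_two
  refine ⟨C, hC, ?_⟩
  have key : ∀ k : ℕ, ∀ y : ℝ, 1 ≤ y → y ≤ 2 + k → Real.Gamma y ≤ C * stirlingTerm y := by
    intro k
    induction k with
    | zero =>
      intro y h1 h2
      exact (div_le_iff₀ (Real.exp_pos _)).1 (h y ⟨h1, by simpa using h2⟩).2
    | succ k ih =>
      intro y h1 h2
      rcases le_total y 2 with h3 | h3
      · exact (div_le_iff₀ (Real.exp_pos _)).1 (h y ⟨h1, h3⟩).2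
      · push_cast at h2
        have := Gamma_add_one_le_mul_stirlingTerm (by linarith)
          (ih (y - 1) (by linarith) (by linarith))
        simpa using this
  intro y hy
  obtain ⟨k, hk⟩ := exists_nat_ge y
  exact key k y hy (by linarith)

/-- Stirling lower bound, by restricting Euler's integral to `[y, y + √y]`, where the integrand
is at least a constant times its value at `y`. -/
lemma stirlingTerm_le_Gamma {y : ℝ} (hy : 1 ≤ y) :
    Real.exp (-(3 / 2)) * stirlingTerm y ≤ Real.Gamma y := by
  have hy0 : 0 < y := by linarith
  have hint := Real.GammaIntegral_convergent hy0
  set m : ℝ := Real.exp (-(3 / 2)) * Real.exp ((y - 1) * Real.log y - y) with hm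
  have hsub : Set.Ioc y (y + √y) ⊆ Set.Ioi 0 := fun t ht => hy0.trans ht.1
  have hle : ∀ t ∈ Set.Ioc y (y + √y), m ≤ Real.exp (-t) * t ^ (y - 1) := by
    intro t ht
    have ht0 : 0 < t := hy0.trans ht.1
    rw [Real.rpow_def_of_pos ht0, ← Real.exp_add, hm, ← Real.exp_add]
    apply Real.exp_le_exp.2
    -- write `t = y (1 + u)` with `0 ≤ u` and `u² y ≤ 1`
    set u := t / y - 1 with hu
    have htu : t = y * (1 + u) := by rw [hu]; field_simp; ring
    have hu0 : 0 ≤ u := by rw [hu, sub_nonneg, le_div_iff₀ hy0]; linarith [ht.1]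
    have hsq : √y * √y = y := Real.mul_self_sqrt hy0.le
    have hu1 : u * y ≤ √y := by
      have : u * y = t - y := by rw [htu]; ring
      linarith [ht.2]
    have hsqp : 0 < √y := Real.sqrt_pos.2 hy0
    have hu2 : u * √y ≤ 1 := by
      by_contra hcon
      push Not at hcon
      nlinarith
    have hu3 : u ^ 2 * y ≤ 1 := by
      have : u ^ 2 * y = (u * √y) * (u * √y) := by nth_rewrite 1 [← hsq]; ring
      rw [this]
      have : 0 ≤ u * √y := by positivity
      nlinarith
    have hu4 : u ≤ 1 := by nlinarith
    have hlog : u - u ^ 2 / 2 ≤ Real.log (1 + u) := by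
      refine le_trans ?_ (Real.le_log_one_add_of_nonneg hu0)
      rw [le_div_iff₀ (by linarith)]
      nlinarith [pow_nonneg hu0 3]
    have hl : Real.log t = Real.log y + Real.log (1 + u) := by
      rw [htu, Real.log_mul hy0.ne' (by linarith)]
    have h5 : (y - 1) * (u - u ^ 2 / 2) ≤ (y - 1) * Real.log (1 + u) := by
      apply mul_le_mul_of_nonneg_left hlog; linarith
    rw [hl]
    nlinarith
  calc Real.exp (-(3 / 2)) * stirlingTerm y = m * √y := by
        rw [hm, Real.sqrt_eq_rpow, Real.rpow_def_of_pos hy0, mul_assoc, ← Real.exp_add,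
          stirlingTerm]
        congr 2
        ring
    _ = ∫ _ in Set.Ioc y (y + √y), m := by
        simp [mul_comm]
    _ ≤ ∫ t in Set.Ioc y (y + √y), Real.exp (-t) * t ^ (y - 1) :=
        setIntegral_mono_on (by simp) (hint.mono_set hsub) measurableSet_Ioc hle
    _ ≤ ∫ t in Set.Ioi 0, Real.exp (-t) * t ^ (y - 1) := by
        refine setIntegral_mono_set hint ?_ hsub.eventuallyLE
        filter_upwards [self_mem_ae_restrict measurableSet_Ioi] with t ht
        have : (0:ℝ) < t := ht
        positivity
    _ = Real.Gamma y := (Real.Gamma_eq_integral hy0).symm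

/-- `Γ(nφ) / Γ(φ)^n ≳ n^(nφ) φ^((n-1)/2)` for `φ ≥ 1`. -/
lemma exists_Gamma_ratio_ge_of_one_le {n : ℕ} (hn : 1 ≤ n) :
    ∃ c > 0, ∀ φ ≥ 1, c * (Real.exp (n * φ * Real.log n) * φ ^ (((n:ℝ) - 1) / 2)) ≤
      Real.Gamma (n * φ) / Real.Gamma φ ^ n := by
  obtain ⟨C, hC, h⟩ := exists_Gamma_le_stirlingTerm
  have hn0 : (0:ℝ) < n := by exact_mod_cast hn
  have hn1 : (1:ℝ) ≤ n := by exact_mod_cast hn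
  refine ⟨Real.exp (-(3 / 2)) * Real.exp (-(1 / 2 * Real.log n)) / C ^ n, by positivity, ?_⟩
  intro φ hφ
  have hφ0 : 0 < φ := by linarith
  have hG := Real.Gamma_pos_of_pos hφ0
  have h1 := stirlingTerm_le_Gamma (y := n * φ) (by nlinarith)
  have h2 : Real.Gamma φ ^ n ≤ C ^ n * stirlingTerm φ ^ n := by
    rw [← mul_pow]
    exact pow_le_pow_left₀ hG.le (h φ hφ) n
  have hs : 0 < stirlingTerm φ := Real.exp_pos _
  have key : Real.exp (-(1 / 2 * Real.log n)) * Real.exp (n * φ * Real.log n) *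
      φ ^ (((n:ℝ) - 1) / 2) * stirlingTerm φ ^ n = stirlingTerm (n * φ) := by
    rw [Real.rpow_def_of_pos hφ0, stirlingTerm, stirlingTerm, ← Real.exp_nat_mul, ← Real.exp_add,
      ← Real.exp_add, ← Real.exp_add, Real.log_mul hn0.ne' hφ0.ne']
    congr 1
    ring
  calc _ = Real.exp (-(3 / 2)) * stirlingTerm (n * φ) / (C ^ n * stirlingTerm φ ^ n) := by
        rw [mul_div_mul_comm, ← key]
        field_simp
    _ ≤ _ := by
        apply div_le_div₀ (Real.Gamma_pos_of_pos (by positivity)).le h1 (by positivity) h2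

/-- `Γ(nφ) / Γ(φ)^n ≳ φ^(n-1)` for `φ ≤ 1`, from `Γ(y) = Γ(y + 1) / y`. -/
lemma exists_Gamma_ratio_ge_of_le_one {n : ℕ} (hn : 1 ≤ n) :
    ∃ c > 0, ∀ φ > 0, φ ≤ 1 → c * φ ^ ((n:ℝ) - 1) ≤
      Real.Gamma (n * φ) / Real.Gamma φ ^ n := by
  have hn0 : (0:ℝ) < n := by exact_mod_cast hn
  obtain ⟨c, hc, C, hC, h⟩ := exists_bounds_Icc continuousOn_Gamma_Ioi_zero
    (fun t => Real.Gamma_pos_of_pos) one_pos (show (1:ℝ) ≤ n + 1 by linarith)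
  refine ⟨c / n / C ^ n, by positivity, ?_⟩
  intro φ hφ hφ1
  have h1 : c / (n * φ) ≤ Real.Gamma (n * φ) := by
    have := (h (n * φ + 1) ⟨by nlinarith, by nlinarith⟩).1
    rw [Real.Gamma_add_one (by positivity)] at this
    rw [div_le_iff₀ (by positivity)]
    linarith
  have h2 : Real.Gamma φ ≤ C / φ := by
    have hn1 : (1:ℝ) ≤ n := by exact_mod_cast hn
    have := (h (φ + 1) ⟨by linarith, by linarith⟩).2
    rw [Real.Gamma_add_one (by positivity)] at this
    rw [le_div_iff₀ (by positivity)]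
    linarith
  have hG := Real.Gamma_pos_of_pos hφ
  calc _ = c / (n * φ) / (C / φ) ^ n := by
        rw [Real.rpow_sub_one hφ.ne', Real.rpow_natCast]
        rw [div_pow]
        field_simp
    _ ≤ _ := by
        apply div_le_div₀ (Real.Gamma_pos_of_pos (by positivity)).le h1 (by positivity)
        exact pow_le_pow_left₀ hG.le h2 n

/-! ### The likelihood integrated over `μ` -/

/-- The likelihood integrated against `μ⁻¹ dμ` over `(0, ∞)`, in closed form. -/
noncomputable def stacyMarginal (n : ℕ) (x : Fin n → ℝ) (α φ : ℝ) : ℝ :=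
  α ^ n / Real.Gamma φ ^ n * (∏ i, x i ^ (α * φ - 1)) *
    ((∑ i, x i ^ α) ^ (-(n * φ)) * (1 / α) * Real.Gamma (n * φ))

lemma lintegral_inv_mul_stacyLikelihood {n : ℕ} (hn : 1 ≤ n) {x : Fin n → ℝ} (hx : ∀ i, 0 < x i)
    {α φ : ℝ} (hα : 0 < α) (hφ : 0 < φ) {c : ℝ} (hc : 0 ≤ c) :
    ∫⁻ μ in Set.Ioi (0:ℝ), ENNReal.ofReal (c * μ⁻¹ * stacyLikelihood n x φ μ α) =
      ENNReal.ofReal (c * stacyMarginal n x α φ) := by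
  have hn0 : (0:ℝ) < n := by exact_mod_cast hn
  have : Nonempty (Fin n) := ⟨⟨0, hn⟩⟩
  have hS : 0 < ∑ i, x i ^ α :=
    Finset.sum_pos (fun i _ => Real.rpow_pos_of_pos (hx i) _) Finset.univ_nonempty
  have hI := integral_rpow_mul_exp_neg_mul_rpow hα (q := n * α * φ - 1)
    (by linarith [show 0 < n * α * φ by positivity]) hS
  have e1 : (n * α * φ - 1 + 1) / α = n * φ := by field_simp; ring
  have e2 : -(n * α * φ - 1 + 1) / α = -(n * φ) := by rw [neg_div, e1]
  rw [e1, e2] at hI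
  have hG : 0 < Real.Gamma (n * φ) := Real.Gamma_pos_of_pos (by positivity)
  have hint := Integrable.of_integral_ne_zero (hI.trans_ne (by positivity))
  set A := α ^ n / Real.Gamma φ ^ n * (∏ i, x i ^ (α * φ - 1)) with hA
  have hA0 : 0 ≤ A := by
    have := Real.Gamma_pos_of_pos hφ
    have : 0 ≤ ∏ i, x i ^ (α * φ - 1) :=
      Finset.prod_nonneg fun i _ => (Real.rpow_pos_of_pos (hx i) _).le
    positivity
  have : ENNReal.ofReal (c * stacyMarginal n x α φ) = ENNReal.ofReal (∫ μ in Set.Ioi (0:ℝ),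
      c * A * (μ ^ (n * α * φ - 1) * Real.exp (-(∑ i, x i ^ α) * μ ^ α))) := by
    rw [integral_const_mul, hI, stacyMarginal, mul_assoc c A]
  rw [this, ofReal_integral_eq_lintegral_ofReal (hint.const_mul _)]
  · refine setLIntegral_congr_fun measurableSet_Ioi fun μ hμ => ?_
    have hμ0 : (0:ℝ) < μ := hμ
    congr 1
    rw [stacyLikelihood, ← hA, Real.rpow_sub_one hμ0.ne', neg_mul, mul_comm (∑ i, x i ^ α)]
    ring
  · filter_upwards [self_mem_ae_restrict measurableSet_Ioi] with μ hμ
    have : (0:ℝ) < μ := hμ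
    positivity

/-- With `m` the mean of `log x i`, a bound `∑ x_i^α ≤ n e^(α m + E)` controls the data-dependent
factor of the marginal. -/
lemma data_factor_ge {n : ℕ} (hn : 1 ≤ n) {x : Fin n → ℝ} (hx : ∀ i, 0 < x i)
    {α φ E : ℝ} (hφ : 0 < φ)
    (h : ∑ i, x i ^ α ≤ n * Real.exp (α * ((∑ i, Real.log (x i)) / n) + E)) :
    Real.exp (-∑ i, Real.log (x i)) * Real.exp (-(n * φ * Real.log n)) *
      Real.exp (-(n * φ * E)) ≤
    (∏ i, x i ^ (α * φ - 1)) * (∑ i, x i ^ α) ^ (-(n * φ)) := by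
  have hn0 : (0:ℝ) < n := by exact_mod_cast hn
  have : Nonempty (Fin n) := ⟨⟨0, hn⟩⟩
  have hS : 0 < ∑ i, x i ^ α :=
    Finset.sum_pos (fun i _ => Real.rpow_pos_of_pos (hx i) _) Finset.univ_nonempty
  have hprod : ∏ i, x i ^ (α * φ - 1) = Real.exp ((α * φ - 1) * ∑ i, Real.log (x i)) := by
    rw [Finset.mul_sum, Real.exp_sum]
    refine Finset.prod_congr rfl fun i _ => ?_
    rw [Real.rpow_def_of_pos (hx i), mul_comm]
  have hlog : Real.log (∑ i, x i ^ α) ≤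
      Real.log n + (α * ((∑ i, Real.log (x i)) / n) + E) := by
    refine (Real.log_le_log hS h).trans_eq ?_
    rw [Real.log_mul hn0.ne' (Real.exp_pos _).ne', Real.log_exp]
  rw [hprod, Real.rpow_def_of_pos hS, ← Real.exp_add, ← Real.exp_add, ← Real.exp_add]
  apply Real.exp_le_exp.2
  have h1 := mul_le_mul_of_nonneg_left hlog (show 0 ≤ n * φ by positivity)
  have h2 : n * φ * (α * ((∑ i, Real.log (x i)) / n)) = φ * α * ∑ i, Real.log (x i) := by
    field_simp
  nlinarith

/-- With `m` the mean of `log x i`, a crude bound valid for all `α > 0`: the error in the exponent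
is linear in `α`. -/
lemma exists_sum_rpow_le {n : ℕ} {x : Fin n → ℝ} (hx : ∀ i, 0 < x i) :
    ∃ B ≥ 0, ∀ α > 0, ∑ i, x i ^ α ≤
      n * Real.exp (α * ((∑ i, Real.log (x i)) / n) + B * α) := by
  set m := (∑ i, Real.log (x i)) / n with hm
  refine ⟨∑ i, |Real.log (x i) - m|, Finset.sum_nonneg fun i _ => abs_nonneg _, ?_⟩
  intro α hα
  calc ∑ i, x i ^ α ≤ ∑ _i : Fin n, Real.exp (α * m + (∑ i, |Real.log (x i) - m|) * α) := by
        refine Finset.sum_le_sum fun i _ => ?_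
        rw [Real.rpow_def_of_pos (hx i)]
        apply Real.exp_le_exp.2
        have h1 := Finset.single_le_sum (f := fun i => |Real.log (x i) - m|)
          (fun i _ => abs_nonneg _) (Finset.mem_univ i)
        have h2 := (le_abs_self _).trans h1
        nlinarith
    _ = _ := by simp

/-- The first-order terms cancel around the mean of the logarithms, so the error in the exponent
is quadratic in `α`. -/
lemma exists_sum_rpow_le_sq {n : ℕ} (hn : 1 ≤ n) {x : Fin n → ℝ} (hx : ∀ i, 0 < x i) :
    ∃ C ≥ 0, ∃ a > 0, ∀ α > 0, α ≤ a → ∑ i, x i ^ α ≤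
      n * Real.exp (α * ((∑ i, Real.log (x i)) / n) + C * α ^ 2) := by
  have hn0 : (0:ℝ) < n := by exact_mod_cast hn
  set m := (∑ i, Real.log (x i)) / n with hm
  set D := ∑ i, |Real.log (x i) - m| with hD
  have hD0 : 0 ≤ D := Finset.sum_nonneg fun i _ => abs_nonneg _
  refine ⟨D ^ 2, by positivity, 1 / (D + 1), by positivity, ?_⟩
  intro α hα hαa
  rw [le_div_iff₀ (by positivity)] at hαa
  have hsum : ∑ i, (Real.log (x i) - m) = 0 := by
    rw [Finset.sum_sub_distrib, hm]
    simp
    field_simp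
    simp
  have hterm : ∀ i, x i ^ α ≤
      Real.exp (α * m) * (1 + α * (Real.log (x i) - m) + D ^ 2 * α ^ 2) := by
    intro i
    have h1 : |Real.log (x i) - m| ≤ D := Finset.single_le_sum
      (f := fun i => |Real.log (x i) - m|) (fun i _ => abs_nonneg _) (Finset.mem_univ i)
    have h2 : |α * (Real.log (x i) - m)| ≤ α * D := by
      rw [abs_mul, abs_of_pos hα]
      gcongr
    have h3 := (abs_le.1 (Real.abs_exp_sub_one_sub_id_le (h2.trans (by nlinarith)))).2
    have h4 : (α * (Real.log (x i) - m)) ^ 2 ≤ (α * D) ^ 2 := by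
      rw [← sq_abs]
      gcongr
    have h5 : x i ^ α = Real.exp (α * m) * Real.exp (α * (Real.log (x i) - m)) := by
      rw [← Real.exp_add, Real.rpow_def_of_pos (hx i)]
      ring_nf
    rw [h5]
    gcongr
    nlinarith
  calc ∑ i, x i ^ α
      ≤ ∑ i, Real.exp (α * m) * (1 + α * (Real.log (x i) - m) + D ^ 2 * α ^ 2) :=
        Finset.sum_le_sum fun i _ => hterm i
    _ = n * (Real.exp (α * m) * (D ^ 2 * α ^ 2 + 1)) := by
        rw [← Finset.mul_sum, Finset.sum_add_distrib, Finset.sum_add_distrib, ← Finset.mul_sum,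
          hsum]
        simp
        ring
    _ ≤ _ := by
        rw [Real.exp_add]
        gcongr
        exact Real.add_one_le_exp _

lemma stacyMarginal_eq {n : ℕ} {x : Fin n → ℝ} {α φ : ℝ} (hα : 0 < α) :
    stacyMarginal n x α φ = α ^ ((n:ℝ) - 1) * (Real.Gamma (n * φ) / Real.Gamma φ ^ n) *
      ((∏ i, x i ^ (α * φ - 1)) * (∑ i, x i ^ α) ^ (-(n * φ))) := by
  rw [stacyMarginal, Real.rpow_sub_one hα.ne', Real.rpow_natCast]
  ring

/-- The restriction `α φ ≤ 2` keeps the exponential factor `e^(-n B α φ)` bounded below. -/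
lemma exists_stacyMarginal_ge_of_le_one {n : ℕ} (hn : 1 ≤ n) {x : Fin n → ℝ}
    (hx : ∀ i, 0 < x i) :
    ∃ c > 0, ∀ α > 0, ∀ φ > 0, φ ≤ 1 → α * φ ≤ 2 →
      c * (α ^ ((n:ℝ) - 1) * φ ^ ((n:ℝ) - 1)) ≤ stacyMarginal n x α φ := by
  obtain ⟨c, hc, hG⟩ := exists_Gamma_ratio_ge_of_le_one hn
  obtain ⟨B, hB, hS⟩ := exists_sum_rpow_le hx
  have hlog : 0 ≤ Real.log n := Real.log_natCast_nonneg n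
  have hn0 : (0:ℝ) ≤ n := n.cast_nonneg
  refine ⟨c * (Real.exp (-∑ i, Real.log (x i)) * Real.exp (-(n * Real.log n)) *
    Real.exp (-(n * B * 2))), by positivity, ?_⟩
  intro α hα φ hφ hφ1 hαφ
  have h1 := hG φ hφ hφ1
  have h2 := data_factor_ge hn hx hφ (hS α hα)
  have h3 : Real.exp (-(n * Real.log n)) ≤ Real.exp (-(n * φ * Real.log n)) := by
    apply Real.exp_le_exp.2
    have : n * Real.log n * φ ≤ n * Real.log n * 1 := by gcongr
    linarith
  have h4 : Real.exp (-(n * B * 2)) ≤ Real.exp (-(n * φ * (B * α))) := by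
    apply Real.exp_le_exp.2
    have : n * B * (α * φ) ≤ n * B * 2 := by gcongr
    linarith
  rw [stacyMarginal_eq hα]
  calc _ = α ^ ((n:ℝ) - 1) * (c * φ ^ ((n:ℝ) - 1)) * (Real.exp (-∑ i, Real.log (x i)) *
        Real.exp (-(n * Real.log n)) * Real.exp (-(n * B * 2))) := by ring
    _ ≤ α ^ ((n:ℝ) - 1) * (Real.Gamma (n * φ) / Real.Gamma φ ^ n) *
      (Real.exp (-∑ i, Real.log (x i)) * Real.exp (-(n * φ * Real.log n)) *
        Real.exp (-(n * φ * (B * α)))) := by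
        gcongr
    _ ≤ _ := by
        have : 0 ≤ Real.Gamma (n * φ) / Real.Gamma φ ^ n := le_trans (by positivity) h1
        gcongr

/-- The factor `n^(nφ)` of the Gamma ratio cancels against the data factor, and `α² φ ≤ 2` keeps
`e^(-n C α² φ)` bounded below. -/
lemma exists_stacyMarginal_ge_of_one_le {n : ℕ} (hn : 1 ≤ n) {x : Fin n → ℝ}
    (hx : ∀ i, 0 < x i) :
    ∃ c > 0, ∃ a > 0, ∀ α > 0, α ≤ a → ∀ φ ≥ 1, α ^ 2 * φ ≤ 2 →
      c * (α ^ ((n:ℝ) - 1) * φ ^ (((n:ℝ) - 1) / 2)) ≤ stacyMarginal n x α φ := by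
  obtain ⟨c, hc, hG⟩ := exists_Gamma_ratio_ge_of_one_le hn
  obtain ⟨C, hC, a, ha, hS⟩ := exists_sum_rpow_le_sq hn hx
  have hn0 : (0:ℝ) ≤ n := n.cast_nonneg
  refine ⟨c * (Real.exp (-∑ i, Real.log (x i)) * Real.exp (-(n * C * 2))),
    by positivity, a, ha, ?_⟩
  intro α hα hαa φ hφ hαφ
  have hφ0 : 0 < φ := by linarith
  have h1 := hG φ hφ
  have h2 := data_factor_ge hn hx hφ0 (hS α hα hαa)
  have h4 : Real.exp (-(n * C * 2)) ≤ Real.exp (-(n * φ * (C * α ^ 2))) := by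
    apply Real.exp_le_exp.2
    have : n * C * (α ^ 2 * φ) ≤ n * C * 2 := by gcongr
    linarith
  rw [stacyMarginal_eq hα]
  calc _ = α ^ ((n:ℝ) - 1) * (c * (Real.exp (n * φ * Real.log n) * φ ^ (((n:ℝ) - 1) / 2))) *
        (Real.exp (-∑ i, Real.log (x i)) * Real.exp (-(n * φ * Real.log n)) *
          Real.exp (-(n * C * 2))) := by
        rw [Real.exp_neg (n * φ * Real.log n)]
        field_simp
    _ ≤ α ^ ((n:ℝ) - 1) * (Real.Gamma (n * φ) / Real.Gamma φ ^ n) *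
      (Real.exp (-∑ i, Real.log (x i)) * Real.exp (-(n * φ * Real.log n)) *
        Real.exp (-(n * φ * (C * α ^ 2)))) := by
        gcongr
    _ ≤ _ := by
        have : 0 ≤ Real.Gamma (n * φ) / Real.Gamma φ ^ n := le_trans (by positivity) h1
        gcongr

/-! ### Divergence criteria and Tonelli -/

lemma lintegral_ofReal_eq_top_of_not_integrable {s : Set ℝ} (hs : MeasurableSet s)
    (hs0 : s ⊆ Set.Ioi 0) (h : ¬ IntegrableOn (fun t : ℝ => t ^ (-1 : ℝ)) s) {c : ℝ} (hc : 0 < c) :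
    ∫⁻ t in s, ENNReal.ofReal (c * t⁻¹) = ⊤ := by
  by_contra hne
  refine h ?_
  have hm : Measurable fun t : ℝ => c * t⁻¹ := by fun_prop
  have hnn : 0 ≤ᵐ[volume.restrict s] fun t : ℝ => c * t⁻¹ := by
    filter_upwards [self_mem_ae_restrict hs] with t ht
    have : (0:ℝ) < t := hs0 ht
    positivity
  have hi : Integrable (fun t : ℝ => c * t⁻¹) (volume.restrict s) :=
    ⟨hm.aestronglyMeasurable, (hasFiniteIntegral_iff_ofReal hnn).2 (lt_top_iff_ne_top.2 hne)⟩
  have hi' := hi.const_mul c⁻¹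
  refine hi'.congr (ae_of_all _ fun t => ?_)
  beta_reduce
  rw [Real.rpow_neg_one]
  field_simp

lemma lintegral_Ioi_inv_eq_top {a c : ℝ} (ha : 0 < a) (hc : 0 < c) :
    ∫⁻ t in Set.Ioi a, ENNReal.ofReal (c * t⁻¹) = ⊤ :=
  lintegral_ofReal_eq_top_of_not_integrable measurableSet_Ioi (Set.Ioi_subset_Ioi ha.le)
    (by rw [integrableOn_Ioi_rpow_iff ha]; simp) hc

lemma lintegral_Ioo_inv_eq_top {a c : ℝ} (ha : 0 < a) (hc : 0 < c) :
    ∫⁻ t in Set.Ioo 0 a, ENNReal.ofReal (c * t⁻¹) = ⊤ :=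
  lintegral_ofReal_eq_top_of_not_integrable measurableSet_Ioo (fun _ ht => ht.1)
    (by rw [intervalIntegral.integrableOn_Ioo_rpow_iff ha]; simp) hc

/-- Divergence along the strip `φ ∈ [g α, 2 g α]`, which has width `g α` over `α`. -/
lemma lintegral_lintegral_eq_top_of_strip {F : ℝ → ℝ → ℝ} {I : Set ℝ} (hI : MeasurableSet I)
    (hI0 : I ⊆ Set.Ioi 0) {c : ℝ} (htop : ∫⁻ α in I, ENNReal.ofReal (c * α⁻¹) = ⊤)
    (g : ℝ → ℝ) (hg : ∀ α ∈ I, 0 < g α)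
    (h : ∀ α ∈ I, ∀ φ, g α ≤ φ → φ ≤ 2 * g α → c * α⁻¹ / g α ≤ F α φ) :
    ∫⁻ α in Set.Ioi (0:ℝ), ∫⁻ φ in Set.Ioi (0:ℝ), ENNReal.ofReal (F α φ) = ⊤ := by
  refine eq_top_iff.2 ?_
  rw [← htop]
  refine le_trans ?_ (lintegral_mono_set hI0)
  refine setLIntegral_mono' hI fun α hα => ?_
  have hgα := hg α hα
  have hsub : Set.Icc (g α) (2 * g α) ⊆ Set.Ioi 0 := fun t ht => lt_of_lt_of_le hgα ht.1
  refine le_trans ?_ (lintegral_mono_set hsub)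
  calc ENNReal.ofReal (c * α⁻¹) =
        ∫⁻ _ in Set.Icc (g α) (2 * g α), ENNReal.ofReal (c * α⁻¹ / g α) := by
        rw [setLIntegral_const, Real.volume_Icc, ← ENNReal.ofReal_mul' (by linarith)]
        congr 1
        field_simp
        ring
    _ ≤ _ := setLIntegral_mono' measurableSet_Icc fun φ hφ =>
        ENNReal.ofReal_le_ofReal (h α hα φ hφ.1 hφ.2)

lemma exists_rpow_ge_on_strip (p : ℝ) :
    ∃ k > (0:ℝ), ∀ g > (0:ℝ), ∀ φ, g ≤ φ → φ ≤ 2 * g → k * g ^ p ≤ φ ^ p := by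
  obtain ⟨k, hk, _, _, h⟩ := exists_bounds_Icc (f := fun t => t ^ p)
    (continuousOn_id.rpow_const fun t ht => Or.inl (ne_of_gt ht))
    (fun t ht => Real.rpow_pos_of_pos ht p) one_pos one_le_two
  refine ⟨k, hk, fun g hg φ h1 h2 => ?_⟩
  have := (h (φ / g) ⟨by rwa [one_le_div hg], by rwa [div_le_iff₀ hg]⟩).1
  rw [Real.div_rpow (by linarith) hg.le, le_div_iff₀ (by positivity)] at this
  exact this

lemma exists_eventually_ge_of_limsup_lt_top {f : ℝ → ℝ} {r : ℝ} {l : Filter ℝ}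
    (hf : ∀ t > 0, 0 < f t)
    (h : Filter.limsup (fun t => ENNReal.ofReal (t ^ r / f t)) l < ⊤) :
    ∃ c > 0, ∀ᶠ t in l, 0 < t → c * t ^ r ≤ f t := by
  obtain ⟨C, hC, hC'⟩ := exists_between h
  have hev := Filter.eventually_lt_of_limsup_lt hC
  refine ⟨1 / (C.toReal + 1), by positivity, hev.mono fun t ht ht0 => ?_⟩
  have h1 : t ^ r / f t < C.toReal := (ENNReal.ofReal_lt_iff_lt_toReal
    (div_nonneg (Real.rpow_nonneg ht0.le r) (hf t ht0).le) hC'.ne).1 ht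
  have hp := hf t ht0
  rw [div_lt_iff₀ hp] at h1
  rw [div_mul_eq_mul_div, one_mul, div_le_iff₀ (by positivity)]
  nlinarith

/-- Tonelli and the closed form of the `μ`-integral reduce the triple integral to a double one. -/
lemma exists_posterior_ge
    {n : ℕ} (hn : 1 ≤ n) {x : Fin n → ℝ} (hx : ∀ i, 0 < x i)
    {prior : ℝ → ℝ → ℝ → ℝ} {πμ πα πφ : ℝ → ℝ}
    (hπφc : ContinuousOn πφ (Set.Ioi 0))
    (hπα0 : ∀ t > 0, 0 < πα t) (hπφ0 : ∀ t > 0, 0 < πφ t)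
    (hprod : ∃ c > 0, ∀ μ > 0, ∀ α > 0, ∀ φ > 0,
      c * (πμ μ * πα α * πφ φ) ≤ prior μ α φ)
    (hμk : ∃ c > 0, ∀ t > 0, c * t ^ (-1 : ℝ) ≤ πμ t) :
    ∃ k > 0, ∫⁻ α in Set.Ioi (0:ℝ), ∫⁻ φ in Set.Ioi (0:ℝ),
        ENNReal.ofReal (k * (πα α * πφ φ) * stacyMarginal n x α φ) ≤
      ∫⁻ α in Set.Ioi (0:ℝ), ∫⁻ μ in Set.Ioi (0:ℝ), ∫⁻ φ in Set.Ioi (0:ℝ),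
        ENNReal.ofReal (prior μ α φ * stacyLikelihood n x φ μ α) := by
  obtain ⟨c, hc, hprod⟩ := hprod
  obtain ⟨d, hd, hμk⟩ := hμk
  refine ⟨c * d, by positivity, setLIntegral_mono' measurableSet_Ioi fun α hα => ?_⟩
  have hα0 : (0:ℝ) < α := hα
  have hpα := hπα0 α hα
  have hmeas : AEMeasurable (Function.uncurry fun φ μ : ℝ =>
      ENNReal.ofReal (c * d * (πα α * πφ φ) * μ⁻¹ * stacyLikelihood n x φ μ α))
      ((volume.restrict (Set.Ioi 0)).prod (volume.restrict (Set.Ioi 0))) := by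
    rw [Measure.prod_restrict]
    refine (ContinuousOn.aemeasurable ?_ (measurableSet_Ioi.prod measurableSet_Ioi)).ennreal_ofReal
    have h1 : ContinuousOn (fun p : ℝ × ℝ => p.1) (Set.Ioi 0 ×ˢ Set.Ioi 0) :=
      continuous_fst.continuousOn
    have h2 : ContinuousOn (fun p : ℝ × ℝ => p.2) (Set.Ioi 0 ×ˢ Set.Ioi 0) :=
      continuous_snd.continuousOn
    have hne : ∀ p ∈ (Set.Ioi 0 ×ˢ Set.Ioi 0 : Set (ℝ × ℝ)), p.2 ≠ 0 := fun p hp => ne_of_gt hp.2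
    have hf : ContinuousOn (fun p : ℝ × ℝ => πφ p.1) (Set.Ioi 0 ×ˢ Set.Ioi 0) :=
      hπφc.comp h1 fun p hp => hp.1
    have hG : ContinuousOn (fun p : ℝ × ℝ => Real.Gamma p.1) (Set.Ioi 0 ×ˢ Set.Ioi 0) :=
      continuousOn_Gamma_Ioi_zero.comp h1 fun p hp => hp.1
    have hx' : ContinuousOn (fun p : ℝ × ℝ => ∏ i, x i ^ (α * p.1 - 1))
        (Set.Ioi 0 ×ˢ Set.Ioi 0) := by
      refine continuousOn_finsetProd _ fun i _ => ?_
      exact continuousOn_const.rpow ((continuousOn_const.mul h1).sub continuousOn_const)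
        fun _ _ => Or.inl (hx i).ne'
    unfold stacyLikelihood
    refine ((continuousOn_const.mul (continuousOn_const.mul hf)).mul (h2.inv₀ hne)).mul ?_
    refine ((((continuousOn_const.div (hG.pow n) ?_).mul hx').mul
      (h2.rpow (continuousOn_const.mul h1) fun p hp => Or.inl (hne p hp))).mul ?_)
    · exact fun p hp => pow_ne_zero _ (Real.Gamma_pos_of_pos hp.1).ne'
    · exact Real.continuous_exp.comp_continuousOn
        ((h2.rpow_const fun p hp => Or.inl (hne p hp)).mul continuousOn_const).neg
  calc _ = ∫⁻ φ in Set.Ioi (0:ℝ), ∫⁻ μ in Set.Ioi (0:ℝ),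
        ENNReal.ofReal (c * d * (πα α * πφ φ) * μ⁻¹ * stacyLikelihood n x φ μ α) := by
        refine setLIntegral_congr_fun measurableSet_Ioi fun φ hφ => ?_
        have := hπφ0 φ hφ
        exact (lintegral_inv_mul_stacyLikelihood hn hx hα0 hφ (by positivity)).symm
    _ = ∫⁻ μ in Set.Ioi (0:ℝ), ∫⁻ φ in Set.Ioi (0:ℝ),
        ENNReal.ofReal (c * d * (πα α * πφ φ) * μ⁻¹ * stacyLikelihood n x φ μ α) :=
        lintegral_lintegral_swap hmeas
    _ ≤ _ := by
        refine setLIntegral_mono' measurableSet_Ioi fun μ hμ => ?_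
        refine setLIntegral_mono' measurableSet_Ioi fun φ hφ => ENNReal.ofReal_le_ofReal ?_
        have hμ0 : (0:ℝ) < μ := hμ
        have hφ0 : (0:ℝ) < φ := hφ
        have hpφ := hπφ0 φ hφ
        have hL : 0 ≤ stacyLikelihood n x φ μ α := by
          have := Real.Gamma_pos_of_pos hφ0
          have : 0 ≤ ∏ i, x i ^ (α * φ - 1) :=
            Finset.prod_nonneg fun i _ => (Real.rpow_pos_of_pos (hx i) _).le
          unfold stacyLikelihood
          positivity
        refine mul_le_mul_of_nonneg_right ?_ hL
        refine le_trans ?_ (hprod μ hμ α hα φ hφ)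
        have := hμk μ hμ
        rw [Real.rpow_neg_one] at this
        calc c * d * (πα α * πφ φ) * μ⁻¹ = c * (d * μ⁻¹ * πα α * πφ φ) := by ring
          _ ≤ _ := by gcongr

/-! ### The four divergent regimes -/

section Divergence

variable {n : ℕ} {x : Fin n → ℝ} {πα πφ : ℝ → ℝ} {k : ℝ}

/-- On the strip `φ ∈ [1/α, 2/α]` with `α → ∞` the integrand is `≳ α^(q-r)`, so the inner integral
is `≳ α^(q-r-1)`. -/
lemma divergence_large_alpha (hn : 1 ≤ n) (hx : ∀ i, 0 < x i) (hk : 0 < k)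
    (hπα0 : ∀ t > 0, 0 < πα t) (hπφ0 : ∀ t > 0, 0 < πφ t) {r q : ℝ} (hrq : r ≤ q)
    (hφ : Filter.limsup (fun t => ENNReal.ofReal (t ^ r / πφ t)) (𝓝[>] (0:ℝ)) < ⊤)
    (hα : Filter.limsup (fun t => ENNReal.ofReal (t ^ q / πα t)) Filter.atTop < ⊤) :
    ∫⁻ α in Set.Ioi (0:ℝ), ∫⁻ φ in Set.Ioi (0:ℝ),
      ENNReal.ofReal (k * (πα α * πφ φ) * stacyMarginal n x α φ) = ⊤ := by
  obtain ⟨c₁, hc₁, h₁⟩ := exists_eventually_ge_of_limsup_lt_top hπφ0 hφ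
  obtain ⟨c₂, hc₂, h₂⟩ := exists_eventually_ge_of_limsup_lt_top hπα0 hα
  obtain ⟨c₃, hc₃, h₃⟩ := exists_stacyMarginal_ge_of_le_one hn hx
  obtain ⟨c₄, hc₄, h₄⟩ := exists_rpow_ge_on_strip (r + ((n:ℝ) - 1))
  obtain ⟨δ, hδ, h₁⟩ := mem_nhdsGT_iff_exists_Ioo_subset.1 h₁
  have hδ : 0 < δ := hδ
  obtain ⟨A, h₂⟩ := Filter.eventually_atTop.1 h₂
  have hα2 : 0 < max A (max 2 (2 / δ)) := lt_max_of_lt_right (lt_max_of_lt_left two_pos)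
  have hc : 0 < k * c₂ * c₁ * c₃ * c₄ := by positivity
  refine lintegral_lintegral_eq_top_of_strip measurableSet_Ioi (Set.Ioi_subset_Ioi hα2.le)
    (lintegral_Ioi_inv_eq_top hα2 hc) (fun α => α⁻¹)
    (fun α hα => inv_pos.2 (hα2.trans hα)) ?_
  intro α hα φ hφ1 hφ2
  have hα0 : 0 < α := hα2.trans hα
  obtain ⟨hαA, hα'⟩ := max_lt_iff.1 (Set.mem_Ioi.1 hα)
  obtain ⟨hα2, hαδ⟩ := max_lt_iff.1 hα'
  have hφ0 : 0 < φ := (inv_pos.2 hα0).trans_le hφ1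
  have hαφ : α * φ ≤ 2 := by
    calc α * φ ≤ α * (2 * α⁻¹) := by gcongr
      _ = 2 := by field_simp
  have hφle : φ ≤ 1 := by nlinarith
  have hφδ : φ < δ := by
    rw [div_lt_iff₀ hδ] at hαδ
    by_contra hcon
    push Not at hcon
    nlinarith
  have e₁ := h₁ ⟨hφ0, hφδ⟩ hφ0
  have e₂ := h₂ α hαA.le hα0
  have e₃ := h₃ α hα0 φ hφ0 hφle hαφ
  have e₄ := h₄ α⁻¹ (inv_pos.2 hα0) φ hφ1 hφ2
  have hpα := hπα0 α hα0
  have hpφ := hπφ0 φ hφ0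
  have hpow : 1 ≤ α ^ (q - r) := Real.one_le_rpow (by linarith) (by linarith)
  calc k * c₂ * c₁ * c₃ * c₄ * α⁻¹ / α⁻¹ = k * c₂ * c₁ * c₃ * c₄ * 1 := by field_simp
    _ ≤ k * c₂ * c₁ * c₃ * c₄ * α ^ (q - r) := by gcongr
    _ = k * (c₂ * c₁) * (c₃ *
          (α ^ q * α ^ ((n:ℝ) - 1) * (c₄ * α⁻¹ ^ (r + ((n:ℝ) - 1))))) := by
        rw [Real.inv_rpow hα0.le, ← Real.rpow_neg hα0.le]
        have : α ^ (q - r) = α ^ q * α ^ ((n:ℝ) - 1) * α ^ (-(r + ((n:ℝ) - 1))) := by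
          rw [← Real.rpow_add hα0, ← Real.rpow_add hα0]
          congr 1
          ring
        rw [this]
        ring
    _ ≤ k * (c₂ * c₁) * (c₃ * (α ^ q * α ^ ((n:ℝ) - 1) * φ ^ (r + ((n:ℝ) - 1)))) := by gcongr
    _ = k * (c₂ * α ^ q * (c₁ * φ ^ r)) * (c₃ * (α ^ ((n:ℝ) - 1) * φ ^ ((n:ℝ) - 1))) := by
        rw [Real.rpow_add hφ0]
        ring
    _ ≤ _ := by gcongr

/-- For `α ∈ [1, 2]` the integrand is `≳ φ^(r+n-1)` near `0`: the `φ`-integral already diverges. -/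
lemma divergence_small_phi (hn : 1 ≤ n) (hx : ∀ i, 0 < x i) (hk : 0 < k)
    (hπαc : ContinuousOn πα (Set.Ioi 0))
    (hπα0 : ∀ t > 0, 0 < πα t) (hπφ0 : ∀ t > 0, 0 < πφ t) {r : ℝ} (hr : (n:ℝ) ≤ -r)
    (hφ : Filter.limsup (fun t => ENNReal.ofReal (t ^ r / πφ t)) (𝓝[>] (0:ℝ)) < ⊤) :
    ∫⁻ α in Set.Ioi (0:ℝ), ∫⁻ φ in Set.Ioi (0:ℝ),
      ENNReal.ofReal (k * (πα α * πφ φ) * stacyMarginal n x α φ) = ⊤ := by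
  obtain ⟨c₁, hc₁, h₁⟩ := exists_eventually_ge_of_limsup_lt_top hπφ0 hφ
  obtain ⟨c₂, hc₂, _, _, h₂⟩ := exists_bounds_Icc hπαc hπα0 one_pos one_le_two
  obtain ⟨c₃, hc₃, h₃⟩ := exists_stacyMarginal_ge_of_le_one hn hx
  obtain ⟨δ, hδ, h₁⟩ := mem_nhdsGT_iff_exists_Ioo_subset.1 h₁
  have hδ : 0 < δ := hδ
  have hδ1 : 0 < min δ 1 := lt_min hδ one_pos
  have hn1 : (1:ℝ) ≤ n := by exact_mod_cast hn
  have hinner : ∀ α ∈ Set.Icc (1:ℝ) 2, ∫⁻ φ in Set.Ioi (0:ℝ),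
      ENNReal.ofReal (k * (πα α * πφ φ) * stacyMarginal n x α φ) = ⊤ := by
    intro α hα
    have hα0 : 0 < α := by linarith [hα.1]
    refine eq_top_iff.2 ?_
    rw [← lintegral_Ioo_inv_eq_top hδ1 (show 0 < k * c₂ * c₁ * c₃ by positivity)]
    refine le_trans ?_ (lintegral_mono_set (show Set.Ioo 0 (min δ 1) ⊆ Set.Ioi (0:ℝ) from fun _ ht => ht.1))
    refine setLIntegral_mono' measurableSet_Ioo fun φ hφ => ENNReal.ofReal_le_ofReal ?_
    obtain ⟨hφ0, hφ'⟩ := hφ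
    obtain ⟨hφδ, hφ1⟩ := lt_min_iff.1 hφ'
    have e₁ := h₁ ⟨hφ0, hφδ⟩ hφ0
    have e₂ := (h₂ α hα).1
    have e₃ := h₃ α hα0 φ hφ0 hφ1.le (by nlinarith [hα.2])
    have hpα := hπα0 α hα0
    have hpφ := hπφ0 φ hφ0
    have hpow : φ⁻¹ ≤ φ ^ r * φ ^ ((n:ℝ) - 1) := by
      rw [← Real.rpow_add hφ0, ← Real.rpow_neg_one]
      exact Real.rpow_le_rpow_of_exponent_ge hφ0 hφ1.le (by linarith)
    have hαpow : 1 ≤ α ^ ((n:ℝ) - 1) := Real.one_le_rpow hα.1 (by linarith)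
    calc k * c₂ * c₁ * c₃ * φ⁻¹ = k * c₂ * c₁ * c₃ * (1 * φ⁻¹) := by ring
      _ ≤ k * c₂ * c₁ * c₃ * (α ^ ((n:ℝ) - 1) * (φ ^ r * φ ^ ((n:ℝ) - 1))) := by gcongr
      _ = k * (c₂ * (c₁ * φ ^ r)) * (c₃ * (α ^ ((n:ℝ) - 1) * φ ^ ((n:ℝ) - 1))) := by ring
      _ ≤ _ := by gcongr
  refine eq_top_iff.2 ?_
  have hsub : Set.Icc (1:ℝ) 2 ⊆ Set.Ioi 0 := fun t ht => one_pos.trans_le ht.1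
  refine le_trans ?_ (lintegral_mono_set hsub)
  rw [setLIntegral_congr_fun measurableSet_Icc hinner, setLIntegral_const, Real.volume_Icc]
  norm_num

/-- On the strip `φ ∈ [α⁻², 2α⁻²]` with `α → 0` the integrand is `≳ α^(q-2r)`, so the inner
integral is `≳ α^(q-2r-2)`. -/
lemma divergence_large_phi (hn : 1 ≤ n) (hx : ∀ i, 0 < x i) (hk : 0 < k)
    (hπα0 : ∀ t > 0, 0 < πα t) (hπφ0 : ∀ t > 0, 0 < πφ t) {q r : ℝ} (hrq : q ≤ 2 * r + 1)
    (hα : Filter.limsup (fun t => ENNReal.ofReal (t ^ q / πα t)) (𝓝[>] (0:ℝ)) < ⊤)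
    (hφ : Filter.limsup (fun t => ENNReal.ofReal (t ^ r / πφ t)) Filter.atTop < ⊤) :
    ∫⁻ α in Set.Ioi (0:ℝ), ∫⁻ φ in Set.Ioi (0:ℝ),
      ENNReal.ofReal (k * (πα α * πφ φ) * stacyMarginal n x α φ) = ⊤ := by
  obtain ⟨c₁, hc₁, h₁⟩ := exists_eventually_ge_of_limsup_lt_top hπφ0 hφ
  obtain ⟨c₂, hc₂, h₂⟩ := exists_eventually_ge_of_limsup_lt_top hπα0 hα
  obtain ⟨c₃, hc₃, a, ha, h₃⟩ := exists_stacyMarginal_ge_of_one_le hn hx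
  obtain ⟨c₄, hc₄, h₄⟩ := exists_rpow_ge_on_strip (r + ((n:ℝ) - 1) / 2)
  obtain ⟨δ, hδ, h₂⟩ := mem_nhdsGT_iff_exists_Ioo_subset.1 h₂
  have hδ : 0 < δ := hδ
  obtain ⟨R, h₁⟩ := Filter.eventually_atTop.1 h₁
  set b := min (min δ a) (1 / (|R| + 1)) with hb
  have hb0 : 0 < b := lt_min (lt_min hδ ha) (by positivity)
  have hc : 0 < k * c₂ * c₁ * c₃ * c₄ := by positivity
  refine lintegral_lintegral_eq_top_of_strip measurableSet_Ioo (fun t ht => ht.1)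
    (lintegral_Ioo_inv_eq_top hb0 hc) (fun α => (α ^ 2)⁻¹)
    (fun α hα => inv_pos.2 (pow_pos hα.1 2)) ?_
  intro α hα φ hφ1 hφ2
  obtain ⟨hα0, hα'⟩ := hα
  obtain ⟨hα'', hαR⟩ := lt_min_iff.1 hα'
  obtain ⟨hαδ, hαa⟩ := lt_min_iff.1 hα''
  rw [lt_div_iff₀ (by positivity)] at hαR
  have hR0 := abs_nonneg R
  have hα1 : α < 1 := by nlinarith
  have hsq : 0 < (α ^ 2)⁻¹ := by positivity
  have hφ0 : 0 < φ := hsq.trans_le hφ1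
  have hαφ : α ^ 2 * φ ≤ 2 := by
    calc α ^ 2 * φ ≤ α ^ 2 * (2 * (α ^ 2)⁻¹) := by gcongr
      _ = 2 := by field_simp
  -- `φ ≥ α⁻² ≥ α⁻¹ ≥ |R| + 1`
  have hφR : |R| + 1 ≤ φ := by
    refine le_trans ?_ hφ1
    rw [le_inv_comm₀ (by positivity) (by positivity), ← one_div, le_div_iff₀ (by positivity)]
    nlinarith
  have e₁ := h₁ φ (by linarith [le_abs_self R]) hφ0
  have e₂ := h₂ ⟨hα0, hαδ⟩ hα0
  have e₃ := h₃ α hα0 hαa.le φ (by linarith) hαφ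
  have e₄ := h₄ (α ^ 2)⁻¹ hsq φ hφ1 hφ2
  have hpα := hπα0 α hα0
  have hpφ := hπφ0 φ hφ0
  have hpow : α ≤ α ^ (q - 2 * r) := by
    nth_rewrite 1 [← Real.rpow_one α]
    exact Real.rpow_le_rpow_of_exponent_ge hα0 hα1.le (by linarith)
  calc k * c₂ * c₁ * c₃ * c₄ * α⁻¹ / (α ^ 2)⁻¹ = k * c₂ * c₁ * c₃ * c₄ * α := by field_simp
    _ ≤ k * c₂ * c₁ * c₃ * c₄ * α ^ (q - 2 * r) := by gcongr
    _ = k * (c₂ * c₁) * (c₃ *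
          (α ^ q * α ^ ((n:ℝ) - 1) * (c₄ * (α ^ 2)⁻¹ ^ (r + ((n:ℝ) - 1) / 2)))) := by
        rw [Real.inv_rpow (by positivity), ← Real.rpow_neg (by positivity), ← Real.rpow_natCast,
          ← Real.rpow_mul hα0.le]
        have : α ^ (q - 2 * r) =
            α ^ q * α ^ ((n:ℝ) - 1) * α ^ (((2:ℕ):ℝ) * -(r + ((n:ℝ) - 1) / 2)) := by
          rw [← Real.rpow_add hα0, ← Real.rpow_add hα0]
          congr 1
          push_cast
          ring
        rw [this]
        ring
    _ ≤ k * (c₂ * c₁) * (c₃ *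
          (α ^ q * α ^ ((n:ℝ) - 1) * φ ^ (r + ((n:ℝ) - 1) / 2))) := by gcongr
    _ = k * (c₂ * α ^ q * (c₁ * φ ^ r)) *
          (c₃ * (α ^ ((n:ℝ) - 1) * φ ^ (((n:ℝ) - 1) / 2))) := by
        rw [Real.rpow_add hφ0]
        ring
    _ ≤ _ := by gcongr

/-- For `φ ∈ [1, 2]` the integrand is `≳ α^(q+n-1)` near `α = 0`, which is not integrable. -/
lemma divergence_small_alpha (hn : 1 ≤ n) (hx : ∀ i, 0 < x i) (hk : 0 < k)
    (hπφc : ContinuousOn πφ (Set.Ioi 0))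
    (hπα0 : ∀ t > 0, 0 < πα t) (hπφ0 : ∀ t > 0, 0 < πφ t) {q : ℝ} (hq : (n:ℝ) ≤ -q)
    (hα : Filter.limsup (fun t => ENNReal.ofReal (t ^ q / πα t)) (𝓝[>] (0:ℝ)) < ⊤) :
    ∫⁻ α in Set.Ioi (0:ℝ), ∫⁻ φ in Set.Ioi (0:ℝ),
      ENNReal.ofReal (k * (πα α * πφ φ) * stacyMarginal n x α φ) = ⊤ := by
  obtain ⟨c₁, hc₁, _, _, h₁⟩ := exists_bounds_Icc hπφc hπφ0 one_pos one_le_two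
  obtain ⟨c₂, hc₂, h₂⟩ := exists_eventually_ge_of_limsup_lt_top hπα0 hα
  obtain ⟨c₃, hc₃, a, ha, h₃⟩ := exists_stacyMarginal_ge_of_one_le hn hx
  obtain ⟨δ, hδ, h₂⟩ := mem_nhdsGT_iff_exists_Ioo_subset.1 h₂
  have hδ : 0 < δ := hδ
  have hn1 : (1:ℝ) ≤ n := by exact_mod_cast hn
  have hb0 : 0 < min (min δ a) 1 := lt_min (lt_min hδ ha) one_pos
  have hc : 0 < k * c₂ * c₁ * c₃ := by positivity
  refine lintegral_lintegral_eq_top_of_strip measurableSet_Ioo (fun t ht => ht.1)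
    (lintegral_Ioo_inv_eq_top hb0 hc) (fun _ => 1) (fun _ _ => one_pos) ?_
  intro α hα φ hφ1 hφ2
  obtain ⟨hα0, hα'⟩ := hα
  obtain ⟨hα'', hα1⟩ := lt_min_iff.1 hα'
  obtain ⟨hαδ, hαa⟩ := lt_min_iff.1 hα''
  have hφ0 : 0 < φ := one_pos.trans_le hφ1
  have e₁ := (h₁ φ ⟨hφ1, by simpa using hφ2⟩).1
  have e₂ := h₂ ⟨hα0, hαδ⟩ hα0
  have e₃ := h₃ α hα0 hαa.le φ hφ1 (by nlinarith)
  have hpα := hπα0 α hα0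
  have hpφ := hπφ0 φ hφ0
  have hpow : α⁻¹ ≤ α ^ q * α ^ ((n:ℝ) - 1) := by
    rw [← Real.rpow_add hα0, ← Real.rpow_neg_one]
    exact Real.rpow_le_rpow_of_exponent_ge hα0 hα1.le (by linarith)
  have hφpow : 1 ≤ φ ^ (((n:ℝ) - 1) / 2) := Real.one_le_rpow hφ1 (by linarith)
  calc k * c₂ * c₁ * c₃ * α⁻¹ / 1 = k * c₂ * c₁ * c₃ * (α⁻¹ * 1) := by ring
    _ ≤ k * c₂ * c₁ * c₃ * (α ^ q * α ^ ((n:ℝ) - 1) * φ ^ (((n:ℝ) - 1) / 2)) := by gcongr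
    _ = k * (c₂ * α ^ q * c₁) * (c₃ * (α ^ ((n:ℝ) - 1) * φ ^ (((n:ℝ) - 1) / 2))) := by ring
    _ ≤ _ := by gcongr

end Divergence

/-! ### Conclusion -/

/-- (Theorem 2.8, item ii), of the paper.) In the Stacy model with all
three parameters unknown, if the prior `π(μ,α,φ)` dominates a product
`π_μ(μ)π_α(α)π_φ(φ)` with `π_μ(μ) ≳ μ^{-1}`, and either (a) `π_φ(φ) ≳ φ^{r₀}` as
`φ → 0⁺` and `π_α(α) ≳ α^{q_∞}` as `α → ∞` with `q_∞ ≥ r₀` or `n ≤ -r₀`, or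
(b) `π_α(α) ≳ α^{q₀}` as `α → 0⁺` and `π_φ(φ) ≳ φ^{r_∞}` as `φ → ∞` with
`2r_∞ + 1 ≥ q₀` or `n ≤ -q₀`, then the posterior is improper. -/
theorem stacy_posterior_improper_ii
    (n : ℕ) (hn : 2 ≤ n) (x : Fin n → ℝ) (hx : ∀ i, 0 < x i) (hxne : ∃ i j, x i ≠ x j)
    (prior : ℝ → ℝ → ℝ → ℝ)
    (hpm : Measurable fun p : ℝ × ℝ × ℝ => prior p.1 p.2.1 p.2.2)
    (hp0 : ∀ μ > 0, ∀ α > 0, ∀ φ > 0, 0 < prior μ α φ)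
    (πμ πα πφ : ℝ → ℝ)
    (hπμc : ContinuousOn πμ (Set.Ioi 0)) (hπαc : ContinuousOn πα (Set.Ioi 0))
    (hπφc : ContinuousOn πφ (Set.Ioi 0))
    (hπμ0 : ∀ t > 0, 0 < πμ t) (hπα0 : ∀ t > 0, 0 < πα t) (hπφ0 : ∀ t > 0, 0 < πφ t)
    (hprod : ∃ c > 0, ∀ μ > 0, ∀ α > 0, ∀ φ > 0,
      c * (πμ μ * πα α * πφ φ) ≤ prior μ α φ)
    (hμk : ∃ c > 0, ∀ t > 0, c * t ^ (-1 : ℝ) ≤ πμ t)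
    (hcase :
      (∃ r₀ qinf : ℝ,
        Filter.limsup (fun t => ENNReal.ofReal (t ^ r₀ / πφ t)) (𝓝[>] (0:ℝ)) < ⊤ ∧
        Filter.limsup (fun t => ENNReal.ofReal (t ^ qinf / πα t)) Filter.atTop < ⊤ ∧
        (r₀ ≤ qinf ∨ (n : ℝ) ≤ -r₀)) ∨
      (∃ q₀ rinf : ℝ,
        Filter.limsup (fun t => ENNReal.ofReal (t ^ q₀ / πα t)) (𝓝[>] (0:ℝ)) < ⊤ ∧
        Filter.limsup (fun t => ENNReal.ofReal (t ^ rinf / πφ t)) Filter.atTop < ⊤ ∧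
        (q₀ ≤ 2 * rinf + 1 ∨ (n : ℝ) ≤ -q₀))) :
    (∫⁻ α in Set.Ioi (0:ℝ), ∫⁻ μ in Set.Ioi (0:ℝ), ∫⁻ φ in Set.Ioi (0:ℝ),
      ENNReal.ofReal (prior μ α φ * stacyLikelihood n x φ μ α)) = ⊤ := by
  have hn1 : 1 ≤ n := one_le_two.trans hn
  obtain ⟨k, hk, hle⟩ := exists_posterior_ge hn1 hx hπφc hπα0 hπφ0 hprod hμk
  refine eq_top_iff.2 (le_trans (le_of_eq ?_) hle)
  symm
  rcases hcase with ⟨r₀, qinf, hφ, hα, h | h⟩ | ⟨q₀, rinf, hα, hφ, h | h⟩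
  · exact divergence_large_alpha hn1 hx hk hπα0 hπφ0 h hφ hα
  · exact divergence_small_phi hn1 hx hk hπαc hπα0 hπφ0 h hφ
  · exact divergence_large_phi hn1 hx hk hπα0 hπφ0 h hα hφ
  · exact divergence_small_alpha hn1 hx hk hπφc hπα0 hπφ0 h hα
end

section
/- Let π_μ, π_α, π_φ : (0,∞) → (0,∞) be continuous with π_μ(μ) ∝ μ^k on (0,∞), π_α(α) ∝ α^{q₀} as α → 0⁺, π_α(α) ∝ α^{q_∞} as α → ∞, π_φ(φ) ∝ φ^{r₀} as φ → 0⁺, and π_φ(φ) ∝ φ^{r_∞} as φ → ∞, where k, q₀, q_∞, r₀, r_∞ ∈ ℝ. Then ∫_{(0,∞)³} π_φ(φ)π_α(α)π_μ(μ) · L(φ,μ,α) dφ dμ dα < ∞ if and only if k = −1, q_∞ < r₀, 2r_∞ + 1 < q₀, n > −q₀, and n > −r₀. Moreover, when these conditions hold, for natural numbers q, r, j the integral of α^q φ^r μ^j π_φ(φ)π_α(α)π_μ(μ) · L(φ,μ,α) over (0,∞)³ is finite if and only if j = 0 and 2(r + r_∞) + 1 − q₀ < q < r + r₀ − q_∞.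 -/
/-!
Continuity and the limsup conditions make each prior comparable on all of `(0, ∞)` to a two-sided
power function `pw a b` (`t ^ a` for `t ≤ 1`, `t ^ b` for `t > 1`); see `prior_bounds`. Finiteness
of an integral of a nonnegative function is unaffected by such a comparison, and a factor
`α ^ q φ ^ r μ ^ j` only shifts the exponents (`moment_lt_top_iff`), so both claims follow from a
criterion for power priors, `model_lt_top_iff`.

*The case `k = -1`.* The substitution `s = μ ^ α` turns the `μ`-integral into a Gamma integral.
What remains is
`const · π_α(α) α ^ (n - 1) · π_φ(φ) · Γ(nφ) / (Γ(φ) ^ n n ^ (nφ)) · exp (-φ ℓ(α))`,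
where `ℓ(α)` is `n` times the logarithm of the ratio of the arithmetic to the geometric mean of the
`x_i ^ α`. Stirling's formula gives the Gamma ratio the order `φ ^ (n - 1)` at `0` and
`φ ^ ((n - 1) / 2)` at infinity (`gammaRatio_bounds`). As the data are not all equal, `ℓ(α)` is of
order `α ^ 2` at `0` and of order `α` at infinity (`ell_bounds`). This leaves the integral
`planar`, which `planar_lt_top_iff` decides: convergence follows from
`exp (-y) ≤ C y ^ (-σ)` with `σ` chosen according to the region, and each of the four conditions is
necessary because of one of the regions `φ → 0` with `α ≈ 1`, `φ ≈ 1 / α` with `α → ∞`,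
`φ ≈ 1` with `α → 0`, and `φ ≈ 1 / α ^ 2` with `α → 0`.

*The case `k < -1`.* For `φ` in a small interval `n α φ + k ≤ -1` holds with `α ∈ (1, 2]`, so the
`μ`-integral diverges at `0`.

*The case `k > -1`.* For small `α`, the range `μ ∈ (e ^ (1 / α), 2 e ^ (1 / α)]` keeps `μ ^ α`
bounded and contributes `exp ((k + 1) / α)`, which is not integrable against any power of `α`.
-/

open MeasureTheory Real Filter Topology

namespace Stacy

/-! ### Two-sided power functions -/

/-- The two-sided power function: `t ^ a` for `t ≤ 1` and `t ^ b` for `t > 1`. -/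
noncomputable def pw (a b t : ℝ) : ℝ := if t ≤ 1 then t ^ a else t ^ b

lemma pw_of_le {a b t : ℝ} (h : t ≤ 1) : pw a b t = t ^ a := if_pos h

lemma pw_of_ge {a b t : ℝ} (h : 1 ≤ t) : pw a b t = t ^ b := by
  unfold pw
  split_ifs with h1
  · rw [le_antisymm h1 h]; simp
  · rfl

lemma pw_pos {a b t : ℝ} (h : 0 < t) : 0 < pw a b t := by
  unfold pw
  split_ifs <;> positivity

lemma pw_mul {a b a' b' t : ℝ} (h : 0 < t) :
    pw a b t * pw a' b' t = pw (a + a') (b + b') t := by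
  unfold pw
  split_ifs <;> rw [rpow_add h]

lemma pw_same (a t : ℝ) : pw a a t = t ^ a := by
  unfold pw; split_ifs <;> rfl

lemma measurable_pw (a b : ℝ) : Measurable (pw a b) := by
  unfold pw
  exact Measurable.ite measurableSet_Iic (by fun_prop) (by fun_prop)

lemma exists_bounds_of_continuousOn {f : ℝ → ℝ} {a b : ℝ} (hab : a ≤ b)
    (hf : ContinuousOn f (Set.Icc a b)) (hpos : ∀ t ∈ Set.Icc a b, 0 < f t) :
    ∃ c > 0, ∃ C > 0, ∀ t ∈ Set.Icc a b, c ≤ f t ∧ f t ≤ C := by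
  have hne : (Set.Icc a b).Nonempty := Set.nonempty_Icc.2 hab
  obtain ⟨u, hu, hu'⟩ := isCompact_Icc.exists_isMinOn hne hf
  obtain ⟨v, hv, hv'⟩ := isCompact_Icc.exists_isMaxOn hne hf
  exact ⟨f u, hpos u hu, f v, hpos v hv, fun t ht => ⟨hu' ht, hv' ht⟩⟩

/-! ### Stirling bounds for the Gamma ratio -/

/-- The logarithm of `Γ x / (x ^ (x - 1/2) e ^ (-x))`, the defect in Stirling's formula. -/
noncomputable def stirlingDefect (x : ℝ) : ℝ := log (Gamma x) - (x - 1 / 2) * log x + x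

lemma stirlingDefect_sub (x : ℝ) (hx : 0 < x) :
    stirlingDefect x - stirlingDefect (x + 1) = (x + 1 / 2) * log (1 + 1 / x) - 1 := by
  have h1 : log (1 + 1 / x) = log (x + 1) - log x := by
    rw [← log_div (by positivity) hx.ne']; congr 1; field_simp
  unfold stirlingDefect
  rw [Gamma_add_one hx.ne', log_mul hx.ne' (Gamma_pos_of_pos hx).ne', h1]
  ring

/-- The defect decreases along unit steps, while `stirlingDefect x - 1 / (4 x)` increases; hence
its values on `[1, ∞)` are controlled by those on `[1, 2]`. -/
lemma stirlingDefect_step (x : ℝ) (hx : 0 < x) :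
    stirlingDefect (x + 1) ≤ stirlingDefect x ∧
      stirlingDefect x - 1 / (4 * x) ≤ stirlingDefect (x + 1) - 1 / (4 * (x + 1)) := by
  have h := stirlingDefect_sub x hx
  constructor
  · have h2 := le_log_one_add_of_nonneg (x := 1 / x) (by positivity)
    have h3 : 2 * (1 / x) / (1 / x + 2) = 1 / (x + 1 / 2) := by field_simp; ring
    rw [h3, div_le_iff₀ (by positivity)] at h2
    linarith
  · -- `log y ≤ (y - 1/y) / 2` for `y ≥ 1`, from `s ≤ sinh s`
    have h2 : log (1 + 1 / x) ≤ (2 * x + 1) / (2 * x * (x + 1)) := by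
      have h4 := self_le_sinh_iff.2 (log_nonneg (x := 1 + 1 / x) (by
        have : 0 < 1 / x := by positivity
        linarith))
      rw [sinh_eq, exp_neg, exp_log (by positivity)] at h4
      refine h4.trans (le_of_eq ?_)
      field_simp
      ring
    have h3 : (x + 1 / 2) * log (1 + 1 / x) ≤
        (x + 1 / 2) * ((2 * x + 1) / (2 * x * (x + 1))) := by gcongr
    have h5 : (x + 1 / 2) * ((2 * x + 1) / (2 * x * (x + 1)))
        = 1 + 1 / (4 * x) - 1 / (4 * (x + 1)) := by field_simp; ring
    linarith

lemma continuousOn_Gamma : ContinuousOn Gamma (Set.Ioi 0) := fun x hx =>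
  (differentiableAt_Gamma (fun m => by
    have : (0 : ℝ) < x := hx
    have : (0 : ℝ) ≤ m := m.cast_nonneg
    linarith)).continuousAt.continuousWithinAt

lemma continuousOn_stirlingDefect : ContinuousOn stirlingDefect (Set.Ioi 0) := by
  unfold stirlingDefect
  refine ((continuousOn_Gamma.log fun x hx => (Gamma_pos_of_pos hx).ne').sub ?_).add continuousOn_id
  exact (by fun_prop : ContinuousOn (fun x : ℝ => x - 1 / 2) _).mul
    (continuousOn_id.log fun x hx => ne_of_gt hx)

lemma stirlingDefect_bdd : ∃ B, ∀ x : ℝ, 1 ≤ x → |stirlingDefect x| ≤ B := by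
  obtain ⟨B, hB⟩ := isCompact_Icc.exists_bound_of_continuousOn
    (continuousOn_stirlingDefect.mono (t := Set.Icc 1 2)
      (fun x hx => lt_of_lt_of_le one_pos hx.1))
  refine ⟨B + 1, ?_⟩
  have key : ∀ m : ℕ, ∀ x : ℝ, 1 ≤ x → x ≤ m + 2 → stirlingDefect x ≤ B ∧
      -B - 1 / 4 ≤ stirlingDefect x - 1 / (4 * x) := by
    intro m
    induction m with
    | zero =>
      intro x h1 h2
      have := abs_le.1 (hB x ⟨h1, by simpa using h2⟩)
      refine ⟨this.2, ?_⟩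
      have h3 : 1 / (4 * x) ≤ 1 / 4 := by gcongr; linarith
      linarith [this.1]
    | succ m ih =>
      intro x h1 h2
      push_cast at h2
      by_cases hx : x ≤ m + 2
      · exact ih x h1 hx
      · have hm : (0 : ℝ) ≤ m := m.cast_nonneg
        have h3 := ih (x - 1) (by linarith) (by linarith)
        have h4 := stirlingDefect_step (x - 1) (by linarith)
        rw [sub_add_cancel] at h4
        exact ⟨h4.1.trans h3.1, h3.2.trans h4.2⟩
  intro x h1
  obtain ⟨m, hm⟩ := exists_nat_ge x
  have h := key m x h1 (by linarith)
  have h3 : 0 < 1 / (4 * x) := by positivity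
  rw [abs_le]
  constructor <;> linarith [h.1, h.2]

/-- The `φ`-dependent factor left after integrating out `μ`, normalised by `n ^ (n φ)`. -/
noncomputable def gammaRatio (n : ℕ) (φ : ℝ) : ℝ :=
  Gamma (n * φ) / Gamma φ ^ n * (n : ℝ) ^ (-(n * φ))

lemma gammaRatio_pos {n : ℕ} (hn : 1 ≤ n) {φ : ℝ} (h : 0 < φ) : 0 < gammaRatio n φ := by
  have hn' : (0 : ℝ) < n := by exact_mod_cast hn
  have := Gamma_pos_of_pos h
  have := Gamma_pos_of_pos (mul_pos hn' h)
  unfold gammaRatio; positivity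

/-- The exponential factors of Stirling's formula cancel in `gammaRatio`, leaving a pure power of
`φ` up to Stirling defects. -/
lemma log_gammaRatio {n : ℕ} (hn : 1 ≤ n) {φ : ℝ} (h : 0 < φ) :
    log (gammaRatio n φ) = ((n : ℝ) - 1) / 2 * log φ
      + (stirlingDefect (n * φ) - n * stirlingDefect φ - log n / 2) := by
  have hn' : (0 : ℝ) < n := by exact_mod_cast hn
  have h1 := Gamma_pos_of_pos h
  have h2 := Gamma_pos_of_pos (mul_pos hn' h)
  unfold gammaRatio stirlingDefect
  rw [log_mul (by positivity) (by positivity), log_div (by positivity) (by positivity),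
    log_pow, log_rpow hn', log_mul hn'.ne' h.ne']
  ring

/-- `gammaRatio n φ` is of order `φ ^ (n - 1)` at `0` and of order `φ ^ ((n - 1) / 2)` at
infinity. -/
lemma gammaRatio_bounds {n : ℕ} (hn : 1 ≤ n) :
    ∃ c > 0, ∃ C > 0, ∀ φ > 0,
      c * pw ((n : ℝ) - 1) (((n : ℝ) - 1) / 2) φ ≤ gammaRatio n φ ∧
      gammaRatio n φ ≤ C * pw ((n : ℝ) - 1) (((n : ℝ) - 1) / 2) φ := by
  have hn' : (1 : ℝ) ≤ n := by exact_mod_cast hn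
  have hn0 : (0 : ℝ) < n := by linarith
  -- near `0` the recurrence `Γ x = Γ (x + 1) / x` isolates the power `φ ^ (n - 1)`
  obtain ⟨c, hc, C, hC, H⟩ := exists_bounds_of_continuousOn (a := 0) (b := 1)
    (f := fun φ => Gamma (n * φ + 1) / Gamma (φ + 1) ^ n * (n : ℝ) ^ (-(n * φ)) / n) (by norm_num)
    (by
      refine ContinuousOn.div_const (ContinuousOn.mul (ContinuousOn.div ?_ ?_ ?_) ?_) _
      · refine continuousOn_Gamma.comp (by fun_prop) fun x hx => ?_
        have := mul_nonneg hn0.le hx.1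
        simp only [Set.mem_Ioi]; linarith
      · refine (continuousOn_Gamma.comp (by fun_prop) fun x hx => ?_).pow n
        have := hx.1
        simp only [Set.mem_Ioi]; linarith
      · intro x hx
        have := Gamma_pos_of_pos (s := x + 1) (by linarith [hx.1])
        positivity
      · exact (Continuous.rpow continuous_const (by fun_prop)
          (fun _ => Or.inl hn0.ne')).continuousOn)
    (by
      intro x hx
      have := Gamma_pos_of_pos (s := x + 1) (by linarith [hx.1])
      have := Gamma_pos_of_pos (s := n * x + 1) (by linarith [mul_nonneg hn0.le hx.1])
      positivity)
  obtain ⟨B, hB⟩ := stirlingDefect_bdd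
  set E := (1 + n) * B + log n with hE
  have hB0 : 0 ≤ B := (abs_nonneg _).trans (hB 1 le_rfl)
  have hlogn : 0 ≤ log n := log_nonneg hn'
  have large : ∀ φ ≥ 1, exp (-E) * φ ^ (((n : ℝ) - 1) / 2) ≤ gammaRatio n φ ∧
      gammaRatio n φ ≤ exp E * φ ^ (((n : ℝ) - 1) / 2) := by
    intro φ h1
    have h0 : 0 < φ := by linarith
    have e1 := abs_le.1 (hB φ h1)
    have e2 := abs_le.1 (hB (n * φ) (by nlinarith))
    have e3 : n * stirlingDefect φ ≤ n * B := by gcongr; exact e1.2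
    have e4 : n * (-B) ≤ n * stirlingDefect φ := by gcongr; exact e1.1
    rw [← exp_log (gammaRatio_pos hn h0), log_gammaRatio hn h0, rpow_def_of_pos h0,
      ← exp_add, ← exp_add, exp_le_exp, exp_le_exp]
    constructor <;> nlinarith
  have small : ∀ φ, 0 < φ → φ ≤ 1 → c * φ ^ ((n : ℝ) - 1) ≤ gammaRatio n φ ∧
      gammaRatio n φ ≤ C * φ ^ ((n : ℝ) - 1) := by
    intro φ h0 h1
    have e := H φ ⟨h0.le, h1⟩
    have e1 : gammaRatio n φ = (Gamma (n * φ + 1) / Gamma (φ + 1) ^ n * (n : ℝ) ^ (-(n * φ)) / n)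
        * φ ^ ((n : ℝ) - 1) := by
      have := Gamma_pos_of_pos h0
      rw [Gamma_add_one h0.ne', Gamma_add_one (by positivity), rpow_sub_one h0.ne', rpow_natCast]
      unfold gammaRatio
      field_simp
      ring
    rw [e1]
    constructor
    · gcongr; exact e.1
    · gcongr; exact e.2
  refine ⟨min c (exp (-E)), by positivity, max C (exp E), by positivity, fun φ h0 => ?_⟩
  rcases le_total φ 1 with h1 | h1
  · rw [pw_of_le h1]
    have hp : 0 < φ ^ ((n : ℝ) - 1) := by positivity
    exact ⟨(mul_le_mul_of_nonneg_right (min_le_left _ _) hp.le).trans (small φ h0 h1).1,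
      (small φ h0 h1).2.trans (mul_le_mul_of_nonneg_right (le_max_left _ _) hp.le)⟩
  · rw [pw_of_ge h1]
    have hp : 0 < φ ^ (((n : ℝ) - 1) / 2) := by positivity
    exact ⟨(mul_le_mul_of_nonneg_right (min_le_right _ _) hp.le).trans (large φ h1).1,
      (large φ h1).2.trans (mul_le_mul_of_nonneg_right (le_max_right _ _) hp.le)⟩

/-! ### The log-ratio of arithmetic and geometric means -/

lemma exp_le_quadratic (t : ℝ) : exp t ≤ 1 + t + t ^ 2 * exp |t| := by
  have h1 : 1 ≤ exp |t| := one_le_exp (abs_nonneg t)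
  rcases le_total 0 t with h | h
  · rw [abs_of_nonneg h] at *
    -- `1 - t ≤ exp (-t)` rearranges to `exp t - 1 ≤ t * exp t`
    have h2 := mul_le_mul_of_nonneg_right (add_one_le_exp (-t)) (exp_pos t).le
    rw [← exp_add, neg_add_cancel, exp_zero] at h2
    nlinarith
  · have h2 := add_one_le_exp t
    have h4 : exp t ≤ 1 := exp_le_one_iff.2 h
    have h5 : t * (exp t - 1) ≤ t ^ 2 := by nlinarith
    have h6 : t ^ 2 ≤ t ^ 2 * exp |t| := le_mul_of_one_le_right (sq_nonneg t) h1
    have h3 := mul_le_mul_of_nonneg_right (add_one_le_exp (-t)) (exp_pos t).le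
    rw [← exp_add, neg_add_cancel, exp_zero] at h3
    nlinarith

/-- The log-ratio of the arithmetic to the geometric mean of `exp (α z i)`, for centred `z`, is
of order `α ^ 2` at `0` and of order `α` at infinity. -/
lemma log_mean_exp_bounds {n : ℕ} (hn : 1 ≤ n) (z : Fin n → ℝ) (hz : ∑ i, z i = 0)
    (i₀ : Fin n) (hi₀ : 0 < z i₀) :
    ∃ c > 0, ∃ C > 0, ∀ α > 0, c * pw 2 1 α ≤ log ((∑ i, exp (α * z i)) / n) ∧
      log ((∑ i, exp (α * z i)) / n) ≤ C * pw 2 1 α := by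
  have hn0 : (0 : ℝ) < n := by exact_mod_cast hn
  set d := z i₀ ^ 2 / (2 * n) with hd
  have hd0 : 0 < d := by positivity
  have hlow : ∀ α > 0, 1 + α ^ 2 * d ≤ (∑ i, exp (α * z i)) / n := by
    intro α hα
    rw [le_div_iff₀ hn0]
    calc (1 + α ^ 2 * d) * n
        = ∑ i, (1 + α * z i + if i = i₀ then (α * z i) ^ 2 / 2 else 0) := by
          rw [Finset.sum_add_distrib, Finset.sum_add_distrib, ← Finset.mul_sum, hz]
          simp only [Finset.sum_const, Finset.card_univ, Fintype.card_fin, nsmul_eq_mul,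
            Finset.sum_ite_eq', Finset.mem_univ, if_true, hd]
          field_simp
          ring
      _ ≤ ∑ i, exp (α * z i) := by
          refine Finset.sum_le_sum fun i _ => ?_
          split_ifs with h
          · rw [h]; exact quadratic_le_exp_of_nonneg (by positivity)
          · linarith [add_one_le_exp (α * z i)]
  have hd2 : 2 * d / (d + 2) ≤ log (1 + d) := le_log_one_add_of_nonneg hd0.le
  set Z := ∑ i, |z i| with hZ
  have hZi : ∀ i, |z i| ≤ Z := fun i =>
    Finset.single_le_sum (f := fun i => |z i|) (fun _ _ => abs_nonneg _) (Finset.mem_univ i)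
  have hZ0 : 0 < Z := (abs_pos.2 hi₀.ne').trans_le (hZi i₀)
  set Q := (∑ i, z i ^ 2 * exp |z i|) / n with hQ
  have hQ0 : 0 ≤ Q := by positivity
  refine ⟨2 * d / (d + 2), by positivity, max Q Z, lt_max_of_lt_right hZ0, fun α hα => ?_⟩
  have hlowα := hlow α hα
  have hRpos : 0 < (∑ i, exp (α * z i)) / n := by
    have : 0 < α ^ 2 * d := by positivity
    linarith
  rcases le_total α 1 with h1 | h1
  · rw [pw_of_le h1]
    norm_num only [rpow_ofNat]
    constructor
    · calc 2 * d / (d + 2) * α ^ 2 ≤ 2 * (α ^ 2 * d) / (α ^ 2 * d + 2) := by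
            rw [div_mul_eq_mul_div, show 2 * d * α ^ 2 = 2 * (α ^ 2 * d) by ring]
            gcongr
            exact mul_le_of_le_one_left hd0.le (pow_le_one₀ hα.le h1)
        _ ≤ log (1 + α ^ 2 * d) := le_log_one_add_of_nonneg (by positivity)
        _ ≤ _ := log_le_log (by positivity) hlowα
    · refine (log_le_sub_one_of_pos hRpos).trans
        (le_trans ?_ (mul_le_mul_of_nonneg_right (le_max_left Q Z) (by positivity)))
      rw [sub_le_iff_le_add, div_le_iff₀ hn0, hQ]
      calc ∑ i, exp (α * z i) ≤ ∑ i, (1 + α * z i + α ^ 2 * (z i ^ 2 * exp |z i|)) := by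
            refine Finset.sum_le_sum fun i _ => (exp_le_quadratic _).trans ?_
            have : |α * z i| ≤ |z i| := by
              rw [abs_mul, abs_of_pos hα]
              exact mul_le_of_le_one_left (abs_nonneg _) h1
            rw [mul_pow, mul_assoc]
            gcongr
        _ = _ := by
          rw [Finset.sum_add_distrib, Finset.sum_add_distrib, ← Finset.mul_sum, hz,
            ← Finset.mul_sum]
          simp only [Finset.sum_const, Finset.card_univ, Fintype.card_fin, nsmul_eq_mul]
          field_simp
          ring
  · rw [pw_of_ge h1, rpow_one]
    constructor
    · -- power mean inequality: `R 1 ^ α ≤ R α`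
      have hJ := rpow_arith_mean_le_arith_mean_rpow Finset.univ (fun _ : Fin n => 1 / (n : ℝ))
        (fun i => exp (z i)) (fun _ _ => by positivity) (by simp [hn0.ne'])
        (fun _ _ => (exp_pos _).le) h1
      simp only [← Finset.mul_sum, ← exp_mul] at hJ
      have hl1 := hlow 1 one_pos
      simp only [one_mul, one_pow] at hl1
      calc 2 * d / (d + 2) * α ≤ log (1 + d) * α := by gcongr
        _ = log ((1 + d) ^ α) := by rw [log_rpow (by positivity), mul_comm]
        _ ≤ _ := by
          refine log_le_log (by positivity) ?_
          calc (1 + d) ^ α ≤ ((∑ i, exp (z i)) / n) ^ α := by gcongr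
            _ = (1 / n * ∑ i, exp (z i)) ^ α := by rw [one_div_mul_eq_div]
            _ ≤ _ := hJ
            _ = _ := by
              rw [one_div_mul_eq_div]
              simp only [mul_comm]
    · refine le_trans ?_ (mul_le_mul_of_nonneg_right (le_max_right Q Z) hα.le)
      rw [log_le_iff_le_exp hRpos, div_le_iff₀ hn0]
      calc ∑ i, exp (α * z i) ≤ ∑ i : Fin n, exp (Z * α) := by
            refine Finset.sum_le_sum fun i _ => exp_le_exp.2 ?_
            rw [mul_comm]
            exact mul_le_mul_of_nonneg_right ((le_abs_self _).trans (hZi i)) hα.le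
        _ = _ := by simp [mul_comm]

/-- `n` times the log-ratio of the arithmetic to the geometric mean of the `x i ^ α`. -/
noncomputable def ell (n : ℕ) (x : Fin n → ℝ) (α : ℝ) : ℝ :=
  n * log ((∑ i, x i ^ α) / n) - α * ∑ i, log (x i)

lemma ell_bounds {n : ℕ} (hn : 1 ≤ n) (x : Fin n → ℝ) (hx : ∀ i, 0 < x i)
    (hxne : ∃ i j, x i ≠ x j) :
    ∃ c > 0, ∃ C > 0, ∀ α > 0, c * pw 2 1 α ≤ ell n x α ∧ ell n x α ≤ C * pw 2 1 α := by
  have hn0 : (0 : ℝ) < n := by exact_mod_cast hn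
  set m := (∑ i, log (x i)) / n with hm
  have hz : ∑ i, (log (x i) - m) = 0 := by
    rw [Finset.sum_sub_distrib]
    simp only [Finset.sum_const, Finset.card_univ, Fintype.card_fin, nsmul_eq_mul, hm]
    field_simp
    ring
  obtain ⟨i₀, hi₀⟩ : ∃ i, 0 < log (x i) - m := by
    by_contra! h
    have h0 := (Finset.sum_eq_zero_iff_of_nonpos fun i _ => h i).1 hz
    obtain ⟨i, j, hij⟩ := hxne
    have hi := h0 i (Finset.mem_univ _)
    have hj := h0 j (Finset.mem_univ _)
    exact hij (log_injOn_pos (hx i) (hx j) (by linarith))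
  obtain ⟨c, hc, C, hC, H⟩ := log_mean_exp_bounds hn _ hz i₀ hi₀
  refine ⟨n * c, by positivity, n * C, by positivity, fun α hα => ?_⟩
  have key : ell n x α = n * log ((∑ i, exp (α * (log (x i) - m))) / n) := by
    have e1 : ∀ i, x i ^ α = exp (α * m) * exp (α * (log (x i) - m)) := fun i => by
      rw [← exp_add, rpow_def_of_pos (hx i)]; congr 1; ring
    have hpos : 0 < ∑ i, exp (α * (log (x i) - m)) :=
      Finset.sum_pos (fun i _ => exp_pos _) ⟨i₀, Finset.mem_univ _⟩
    unfold ell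
    simp only [e1, ← Finset.mul_sum]
    rw [mul_div_assoc, log_mul (exp_pos _).ne' (by positivity), log_exp, hm]
    field_simp
    ring
  rw [key, mul_assoc, mul_assoc]
  exact ⟨mul_le_mul_of_nonneg_left (H α hα).1 hn0.le,
    mul_le_mul_of_nonneg_left (H α hα).2 hn0.le⟩

open scoped ENNReal

/-! ### The planar integral -/

lemma lintegral_rpow_Ioc_lt_top_iff (a : ℝ) :
    ∫⁻ t in Set.Ioc (0 : ℝ) 1, ENNReal.ofReal (t ^ a) < ⊤ ↔ -1 < a := by
  rw [lt_top_iff_ne_top, lintegral_ofReal_ne_top_iff_integrable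
    (by fun_prop : Measurable fun t : ℝ => t ^ a).aestronglyMeasurable
    (ae_restrict_of_forall_mem measurableSet_Ioc fun t ht => rpow_nonneg ht.1.le a),
    ← intervalIntegral.integrableOn_Ioo_rpow_iff (s := a) one_pos,
    ← integrableOn_Ioc_iff_integrableOn_Ioo]
  rfl

lemma lintegral_rpow_Ioi_lt_top_iff (a : ℝ) :
    ∫⁻ t in Set.Ioi (1 : ℝ), ENNReal.ofReal (t ^ a) < ⊤ ↔ a < -1 := by
  rw [lt_top_iff_ne_top, lintegral_ofReal_ne_top_iff_integrable
    (by fun_prop : Measurable fun t : ℝ => t ^ a).aestronglyMeasurable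
    (ae_restrict_of_forall_mem measurableSet_Ioi fun t ht =>
      rpow_nonneg (zero_le_one.trans (le_of_lt ht)) a),
    ← integrableOn_Ioi_rpow_iff (s := a) one_pos]
  rfl

lemma lintegral_pw_lt_top {a b : ℝ} (ha : -1 < a) (hb : b < -1) :
    ∫⁻ t in Set.Ioi (0 : ℝ), ENNReal.ofReal (pw a b t) < ⊤ := by
  rw [← Set.Ioc_union_Ioi_eq_Ioi zero_le_one,
    lintegral_union measurableSet_Ioi Set.Ioc_disjoint_Ioi_same, ENNReal.add_lt_top,
    setLIntegral_congr_fun measurableSet_Ioc (g := fun t => ENNReal.ofReal (t ^ a))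
      (fun t ht => by simp only [pw_of_le ht.2]),
    setLIntegral_congr_fun measurableSet_Ioi (g := fun t => ENNReal.ofReal (t ^ b))
      (fun t ht => by simp only [pw_of_ge (le_of_lt ht)])]
  exact ⟨(lintegral_rpow_Ioc_lt_top_iff a).2 ha, (lintegral_rpow_Ioi_lt_top_iff b).2 hb⟩

lemma exp_neg_le_rpow {s : ℝ} (hs : 0 ≤ s) :
    ∃ C > 0, ∀ x > 0, exp (-x) ≤ C * x ^ (-s) := by
  obtain ⟨m, hm⟩ := exists_nat_ge s
  refine ⟨max 1 m.factorial, by positivity, fun x hx => ?_⟩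
  rw [rpow_neg hx.le, ← div_eq_mul_inv, le_div_iff₀ (by positivity), exp_neg,
    inv_mul_le_iff₀ (exp_pos x)]
  rcases le_total x 1 with h | h
  · have h1 : x ^ s ≤ 1 := rpow_le_one hx.le h hs
    have h2 : 1 ≤ exp x := one_le_exp hx.le
    nlinarith [le_max_left (1 : ℝ) m.factorial]
  · have h1 : x ^ s ≤ x ^ m := by
      rw [← rpow_natCast]; exact rpow_le_rpow_of_exponent_le h hm
    have h2 := pow_div_factorial_le_exp x hx.le m
    rw [div_le_iff₀ (by positivity)] at h2
    exact (h1.trans h2).trans (by gcongr; exact le_max_right _ _)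

lemma rpow_bounds_Icc (b : ℝ) {u v : ℝ} (hu : 0 < u) (huv : u ≤ v) :
    ∃ k > 0, ∀ t ∈ Set.Icc u v, k ≤ t ^ b := by
  obtain ⟨c, hc, C, hC, H⟩ := exists_bounds_of_continuousOn (f := fun t => t ^ b) huv
    (continuousOn_id.rpow_const fun t ht => Or.inl (hu.trans_le ht.1).ne')
    (fun t ht => rpow_pos_of_pos (hu.trans_le ht.1) b)
  exact ⟨c, hc, fun t ht => (H t ht).1⟩

/-- The integral over `(α, φ)` of power weights against `exp (-c φ ℓ(α))`, where `ℓ(α)` is of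
order `α ^ 2` at `0` and of order `α` at infinity. -/
noncomputable def planar (c a₀ a₁ b₀ b₁ : ℝ) : ℝ≥0∞ :=
  ∫⁻ α in Set.Ioi (0 : ℝ), ∫⁻ φ in Set.Ioi (0 : ℝ),
    ENNReal.ofReal (pw a₀ a₁ α * pw b₀ b₁ φ * exp (-(c * φ * pw 2 1 α)))

/-- Trading `exp (-y)` for a power `y ^ (-σ)`, with `σ` depending on the region, bounds the
integrand by a product of integrable powers. -/
lemma planar_lt_top {c a₀ a₁ b₀ b₁ : ℝ} (hc : 0 < c) (h1 : -1 < b₀) (h2 : a₁ < b₀)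
    (h3 : -1 < a₀) (h4 : 2 * b₁ + 1 < a₀) : planar c a₀ a₁ b₀ b₁ < ⊤ := by
  obtain ⟨s, hs, hs'⟩ := exists_between (show max 0 (b₁ + 1) < (a₀ + 1) / 2 from
    max_lt (by linarith) (by linarith))
  obtain ⟨t, ht, ht'⟩ := exists_between (show max 0 (a₁ + 1) < b₀ + 1 from
    max_lt (by linarith) (by linarith))
  obtain ⟨hs0, hs1⟩ := max_lt_iff.1 hs
  obtain ⟨ht0, ht1⟩ := max_lt_iff.1 ht
  have hexp : ∀ σ : ℝ, 0 ≤ σ → ∃ C > 0, ∀ y > 0, exp (-(c * y)) ≤ C * y ^ (-σ) := by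
    intro σ hσ
    obtain ⟨C, hC, H⟩ := exp_neg_le_rpow hσ
    refine ⟨C * c ^ (-σ), by positivity, fun y hy => (H _ (mul_pos hc hy)).trans (le_of_eq ?_)⟩
    rw [mul_rpow hc.le hy.le, mul_assoc]
  obtain ⟨C₁, hC₁, H₁⟩ := hexp s hs0.le
  obtain ⟨C₂, hC₂, H₂⟩ := hexp t ht0.le
  obtain ⟨C₃, hC₃, H₃⟩ := hexp (max s t) (le_max_of_le_left hs0.le)
  set C := 1 + C₁ + C₂ + C₃
  have hC : 0 < C := by positivity
  have bound : ∀ α > 0, ∀ φ > 0, exp (-(c * φ * pw 2 1 α)) ≤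
      C * (pw (-2 * s) (-t) α * pw (-t) (-s) φ) := by
    intro α hα φ hφ
    rw [mul_assoc]
    rcases le_total α 1 with h | h <;> rcases le_total φ 1 with h' | h'
    · rw [pw_of_le h, pw_of_le h, pw_of_le h']
      have e1 : 1 ≤ α ^ (-2 * s) := one_le_rpow_of_pos_of_le_one_of_nonpos hα h (by linarith)
      have e2 : 1 ≤ φ ^ (-t) := one_le_rpow_of_pos_of_le_one_of_nonpos hφ h' (by linarith)
      have e3 : exp (-(c * (φ * α ^ (2 : ℝ)))) ≤ 1 := exp_le_one_iff.2 (by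
        have : 0 < c * (φ * α ^ (2 : ℝ)) := by positivity
        linarith)
      have e4 : 1 ≤ α ^ (-2 * s) * φ ^ (-t) := one_le_mul_of_one_le_of_one_le e1 e2
      have e5 : 1 ≤ C := by simp only [C]; linarith
      exact e3.trans (one_le_mul_of_one_le_of_one_le e5 e4)
    · rw [pw_of_le h, pw_of_le h, pw_of_ge h']
      refine (H₁ _ (by positivity)).trans ?_
      rw [mul_rpow hφ.le (by positivity), ← rpow_mul hα.le, mul_comm (φ ^ _),
        show (2 : ℝ) * -s = -2 * s by ring]
      gcongr
      simp only [C]; linarith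
    · rw [pw_of_ge h, pw_of_ge h, pw_of_le h', rpow_one]
      refine (H₂ _ (by positivity)).trans ?_
      rw [mul_rpow hφ.le hα.le, mul_comm (φ ^ _)]
      gcongr
      simp only [C]; linarith
    · rw [pw_of_ge h, pw_of_ge h, pw_of_ge h', rpow_one]
      refine (H₃ _ (by positivity)).trans ?_
      rw [mul_rpow hφ.le hα.le, mul_comm (φ ^ _)]
      gcongr
      · simp only [C]; linarith
      · exact le_max_right _ _
      · exact le_max_left _ _
  have hA := lintegral_pw_lt_top (a := a₀ + -2 * s) (b := a₁ + -t) (by linarith) (by linarith)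
  have hB := lintegral_pw_lt_top (a := b₀ + -t) (b := b₁ + -s) (by linarith) (by linarith)
  calc planar c a₀ a₁ b₀ b₁ ≤ ∫⁻ α in Set.Ioi (0 : ℝ), ∫⁻ φ in Set.Ioi (0 : ℝ),
        ENNReal.ofReal C * ENNReal.ofReal (pw (a₀ + -2 * s) (a₁ + -t) α) *
          ENNReal.ofReal (pw (b₀ + -t) (b₁ + -s) φ) := by
        refine setLIntegral_mono' measurableSet_Ioi fun α hα =>
          setLIntegral_mono' measurableSet_Ioi fun φ hφ => ?_
        have hα' : 0 < α := hα
        have hφ' : 0 < φ := hφ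
        have p1 := pw_pos (a := a₀) (b := a₁) hα'
        have p2 := pw_pos (a := b₀) (b := b₁) hφ'
        rw [← ENNReal.ofReal_mul hC.le, ← ENNReal.ofReal_mul (mul_nonneg hC.le (pw_pos hα').le),
          ← pw_mul hα', ← pw_mul hφ']
        apply ENNReal.ofReal_le_ofReal
        calc _ ≤ pw a₀ a₁ α * pw b₀ b₁ φ * (C * (pw (-2 * s) (-t) α * pw (-t) (-s) φ)) := by
              gcongr; exact bound α hα φ hφ
          _ = _ := by ring
    _ = ENNReal.ofReal C * (∫⁻ α in Set.Ioi (0 : ℝ), ENNReal.ofReal (pw (a₀ + -2 * s) (a₁ + -t) α))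
        * ∫⁻ φ in Set.Ioi (0 : ℝ), ENNReal.ofReal (pw (b₀ + -t) (b₁ + -s) φ) := by
        have m1 := (measurable_pw (a₀ + -2 * s) (a₁ + -t)).ennreal_ofReal
        have m2 := (measurable_pw (b₀ + -t) (b₁ + -s)).ennreal_ofReal
        simp_rw [lintegral_const_mul _ m2]
        rw [lintegral_mul_const _ (m1.const_mul _), lintegral_const_mul _ m1]
    _ < ⊤ := ENNReal.mul_lt_top (ENNReal.mul_lt_top ENNReal.ofReal_lt_top hA) hB

/-- Lower bound on `planar` from the region `α ∈ U`, `u α ^ (-e) < φ ≤ 2 u α ^ (-e)`: there the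
exponential is bounded below, and the `φ`-integral contributes `α ^ (-e b)` times the width
`u α ^ (-e)`. -/
lemma lintegral_rpow_lt_top_of_planar {c a₀ a₁ b₀ b₁ : ℝ} (hc : 0 < c)
    (hfin : planar c a₀ a₁ b₀ b₁ < ⊤) {U : Set ℝ} (hU : MeasurableSet U)
    (hU0 : U ⊆ Set.Ioi 0) (a b e u D : ℝ) (hu : 0 < u) (ha : ∀ α ∈ U, pw a₀ a₁ α = α ^ a)
    (hb : ∀ α ∈ U, ∀ φ, u * α ^ (-e) < φ → φ ≤ 2 * u * α ^ (-e) →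
      pw b₀ b₁ φ = φ ^ b ∧ φ * pw 2 1 α ≤ D) :
    ∫⁻ α in U, ENNReal.ofReal (α ^ (a - e * b - e)) < ⊤ := by
  obtain ⟨k, hk, hk'⟩ := rpow_bounds_Icc b hu (by linarith : u ≤ 2 * u)
  have hK : 0 < u * k * exp (-(c * D)) := by positivity
  have key : ENNReal.ofReal (u * k * exp (-(c * D))) *
      ∫⁻ α in U, ENNReal.ofReal (α ^ (a - e * b - e)) ≤ planar c a₀ a₁ b₀ b₁ := by
    rw [← lintegral_const_mul _
      (by fun_prop : Measurable fun α : ℝ => ENNReal.ofReal (α ^ (a - e * b - e)))]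
    refine le_trans ?_ (lintegral_mono_set hU0)
    refine setLIntegral_mono' hU fun α hα => ?_
    have hα0 : 0 < α := hU0 hα
    have hw : 0 < α ^ (-e) := by positivity
    have hsub : Set.Ioc (u * α ^ (-e)) (2 * u * α ^ (-e)) ⊆ Set.Ioi 0 := fun φ hφ =>
      lt_trans (mul_pos hu hw) hφ.1
    refine le_trans ?_ (lintegral_mono_set hsub)
    calc _ = ∫⁻ φ in Set.Ioc (u * α ^ (-e)) (2 * u * α ^ (-e)),
          ENNReal.ofReal (α ^ a * (k * α ^ (-e * b)) * exp (-(c * D))) := by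
          rw [setLIntegral_const, Real.volume_Ioc, ← ENNReal.ofReal_mul (by positivity),
            ← ENNReal.ofReal_mul (by positivity)]
          congr 1
          rw [sub_eq_add_neg, sub_eq_add_neg, rpow_add hα0, rpow_add hα0, neg_mul]
          ring
      _ ≤ _ := by
          refine setLIntegral_mono' measurableSet_Ioc fun φ hφ => ENNReal.ofReal_le_ofReal ?_
          obtain ⟨e1, e2⟩ := hb α hα φ hφ.1 hφ.2
          have hφ0 : 0 < φ := hsub hφ
          rw [ha α hα, e1]
          have e3 : φ ^ b = (φ * α ^ e) ^ b * α ^ (-e * b) := by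
            rw [mul_rpow hφ0.le (by positivity), ← rpow_mul hα0.le, mul_assoc,
              ← rpow_add hα0]
            simp
          have e4 : α ^ (-e) * α ^ e = 1 := by rw [← rpow_add hα0]; simp
          have hwe : 0 < α ^ e := by positivity
          have e5 : k ≤ (φ * α ^ e) ^ b := by
            apply hk'
            constructor
            · calc u = u * α ^ (-e) * α ^ e := by rw [mul_assoc, e4, mul_one]
                _ ≤ φ * α ^ e := by gcongr; exact hφ.1.le
            · calc φ * α ^ e ≤ 2 * u * α ^ (-e) * α ^ e := by gcongr; exact hφ.2
                _ = 2 * u := by rw [mul_assoc, e4, mul_one]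
          rw [e3, mul_assoc c]
          gcongr
  by_contra htop
  rw [not_lt_top_iff.1 htop, ENNReal.mul_top (by simpa using hK)] at key
  exact absurd (key.trans_lt hfin) (lt_irrefl _)

lemma planar_lt_top_iff {c a₀ a₁ b₀ b₁ : ℝ} (hc : 0 < c) :
    planar c a₀ a₁ b₀ b₁ < ⊤ ↔ -1 < b₀ ∧ a₁ < b₀ ∧ -1 < a₀ ∧ 2 * b₁ + 1 < a₀ := by
  refine ⟨fun h => ⟨?_, ?_, ?_, ?_⟩, fun h => planar_lt_top hc h.1 h.2.1 h.2.2.1 h.2.2.2⟩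
  · -- for each `α` in `(1, 2]` the `φ`-integral alone needs `-1 < b₀`
    by_contra hb
    have hinf : ∫⁻ t in Set.Ioc (0 : ℝ) 1, ENNReal.ofReal (t ^ b₀) = ⊤ := by
      rw [← not_lt_top_iff, lintegral_rpow_Ioc_lt_top_iff]; exact hb
    have : (⊤ : ℝ≥0∞) ≤ planar c a₀ a₁ b₀ b₁ := by
      calc (⊤ : ℝ≥0∞) = ∫⁻ α in Set.Ioc (1 : ℝ) 2, ⊤ := by
            rw [setLIntegral_const, Real.volume_Ioc]; norm_num [ENNReal.top_mul]
        _ ≤ ∫⁻ α in Set.Ioc (1 : ℝ) 2, ∫⁻ φ in Set.Ioi (0 : ℝ),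
              ENNReal.ofReal (pw a₀ a₁ α * pw b₀ b₁ φ * exp (-(c * φ * pw 2 1 α))) := by
            refine setLIntegral_mono' measurableSet_Ioc fun α hα => ?_
            have hα0 : 0 < α := one_pos.trans hα.1
            have hp1 := pw_pos (a := a₀) (b := a₁) hα0
            have hp2 := pw_pos (a := 2) (b := 1) hα0
            have hK : 0 < pw a₀ a₁ α * exp (-(c * 1 * pw 2 1 α)) := by positivity
            calc (⊤ : ℝ≥0∞) = ENNReal.ofReal (pw a₀ a₁ α * exp (-(c * 1 * pw 2 1 α))) *
                  ∫⁻ t in Set.Ioc (0 : ℝ) 1, ENNReal.ofReal (t ^ b₀) := by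
                  rw [hinf, ENNReal.mul_top (by simpa using hK)]
              _ = ∫⁻ t in Set.Ioc (0 : ℝ) 1, ENNReal.ofReal
                    (pw a₀ a₁ α * exp (-(c * 1 * pw 2 1 α)) * t ^ b₀) := by
                  rw [← lintegral_const_mul _
                    (by fun_prop : Measurable fun t : ℝ => ENNReal.ofReal (t ^ b₀))]
                  simp_rw [ENNReal.ofReal_mul hK.le]
              _ ≤ _ := by
                  refine le_trans ?_ (lintegral_mono_set
                    (Set.Ioc_subset_Ioi_self : Set.Ioc (0 : ℝ) 1 ⊆ _))
                  refine setLIntegral_mono' measurableSet_Ioc fun φ hφ =>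
                    ENNReal.ofReal_le_ofReal ?_
                  have := hφ.1
                  rw [pw_of_le hφ.2, mul_right_comm]
                  gcongr
                  exact hφ.2
        _ ≤ _ := lintegral_mono_set fun α hα => one_pos.trans hα.1
    exact absurd (this.trans_lt h) (lt_irrefl _)
  · -- `α > 1` with `φ` comparable to `1 / α` needs `a₁ < b₀`
    have := lintegral_rpow_lt_top_of_planar hc h measurableSet_Ioi
      (Set.Ioi_subset_Ioi zero_le_one) a₁ b₀ 1 (1 / 2) 1 (by norm_num)
      (fun α hα => pw_of_ge (le_of_lt hα)) (fun α hα φ _ h2 => by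
        have h1 : 1 < α := hα
        have h0 : 0 < α := one_pos.trans h1
        rw [rpow_neg_one] at h2
        have h3 : φ * α ≤ 1 := by
          calc φ * α ≤ 2 * (1 / 2) * α⁻¹ * α := by gcongr
            _ = 1 := by field_simp
        refine ⟨pw_of_le (h2.trans ?_), by rwa [pw_of_ge h1.le, rpow_one]⟩
        have := inv_le_one_of_one_le₀ h1.le
        linarith)
    rw [lintegral_rpow_Ioi_lt_top_iff] at this
    linarith
  · -- `α ≤ 1` with `φ` comparable to `1` needs `-1 < a₀`
    have := lintegral_rpow_lt_top_of_planar hc h measurableSet_Ioc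
      Set.Ioc_subset_Ioi_self a₀ b₁ 0 1 2 one_pos
      (fun α hα => pw_of_le hα.2) (fun α hα φ h1 h2 => by
        simp only [neg_zero, rpow_zero, mul_one] at h1 h2
        have h0 := hα.1
        have h3 : α ^ (2 : ℝ) ≤ 1 := rpow_le_one hα.1.le hα.2 (by norm_num)
        refine ⟨pw_of_ge h1.le, ?_⟩
        rw [pw_of_le hα.2]
        have : 0 < α ^ (2 : ℝ) := by positivity
        calc φ * α ^ (2 : ℝ) ≤ 2 * 1 := by gcongr
          _ = 2 := by norm_num)
    rw [lintegral_rpow_Ioc_lt_top_iff] at this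
    linarith
  · -- `α ≤ 1` with `φ` comparable to `1 / α ^ 2` needs `2 b₁ + 1 < a₀`
    have := lintegral_rpow_lt_top_of_planar hc h measurableSet_Ioc
      Set.Ioc_subset_Ioi_self a₀ b₁ 2 1 2 one_pos
      (fun α hα => pw_of_le hα.2) (fun α hα φ h1 h2 => by
        have h0 := hα.1
        have h3 : 1 ≤ α ^ (-2 : ℝ) :=
          one_le_rpow_of_pos_of_le_one_of_nonpos h0 hα.2 (by norm_num)
        refine ⟨pw_of_ge (by linarith), ?_⟩
        rw [pw_of_le hα.2]
        calc φ * α ^ (2 : ℝ) ≤ 2 * 1 * α ^ (-2 : ℝ) * α ^ (2 : ℝ) := by gcongr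
          _ = 2 := by rw [mul_assoc, ← rpow_add h0]; norm_num)
    rw [lintegral_rpow_Ioc_lt_top_iff] at this
    linarith

/-! ### The integral for pure power priors with `k = -1` -/

/-- The integral of the likelihood against the (two-sided) power priors `pw r₀ r₁ φ`, `pw q₀ q₁ α`
and `μ ^ k`. -/
noncomputable def model (n : ℕ) (x : Fin n → ℝ) (k q₀ q₁ r₀ r₁ : ℝ) : ℝ≥0∞ :=
  ∫⁻ α in Set.Ioi (0 : ℝ), ∫⁻ μ in Set.Ioi (0 : ℝ), ∫⁻ φ in Set.Ioi (0 : ℝ),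
    ENNReal.ofReal (pw r₀ r₁ φ * pw q₀ q₁ α * μ ^ k * stacyLikelihood n x φ μ α)

/-- `1 / Γ` is the restriction of an entire function, hence continuous on all of `ℝ`. -/
lemma continuous_inv_Gamma : Continuous fun t : ℝ => (Gamma t)⁻¹ := by
  have h : (fun t : ℝ => (Gamma t)⁻¹) = fun t : ℝ => ((Complex.Gamma (t : ℂ))⁻¹).re := by
    ext t
    rw [Complex.Gamma_ofReal, ← Complex.ofReal_inv, Complex.ofReal_re]
  rw [h]
  exact Complex.continuous_re.comp
    (Complex.differentiable_one_div_Gamma.continuous.comp Complex.continuous_ofReal)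

lemma prod_rpow_eq_exp {n : ℕ} (x : Fin n → ℝ) (hx : ∀ i, 0 < x i) (e : ℝ) :
    ∏ i, x i ^ e = exp (e * ∑ i, log (x i)) := by
  rw [Finset.mul_sum, exp_sum]
  exact Finset.prod_congr rfl fun i _ => by rw [rpow_def_of_pos (hx i), mul_comm]

lemma measurable_integrand (n : ℕ) (x : Fin n → ℝ) (hx : ∀ i, 0 < x i) (k q₀ q₁ r₀ r₁ α : ℝ) :
    Measurable fun p : ℝ × ℝ => ENNReal.ofReal
      (pw r₀ r₁ p.2 * pw q₀ q₁ α * p.1 ^ k * stacyLikelihood n x p.2 p.1 α) := by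
  have h1 : Measurable fun p : ℝ × ℝ => (Gamma p.2)⁻¹ :=
    continuous_inv_Gamma.measurable.comp measurable_snd
  have h2 : Measurable fun p : ℝ × ℝ => pw r₀ r₁ p.2 :=
    (measurable_pw r₀ r₁).comp measurable_snd
  unfold stacyLikelihood
  simp_rw [prod_rpow_eq_exp x hx, div_eq_mul_inv, ← inv_pow]
  fun_prop

/-- For `k = -1` the `μ`-integral is a Gamma integral; the result factors through `gammaRatio`
and the log-ratio of means `ell`. -/
lemma lintegral_mu {n : ℕ} (hn : 1 ≤ n) (x : Fin n → ℝ) (hx : ∀ i, 0 < x i) (q₀ q₁ r₀ r₁ : ℝ)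
    {α φ : ℝ} (hα : 0 < α) (hφ : 0 < φ) :
    ∫⁻ μ in Set.Ioi (0 : ℝ), ENNReal.ofReal
      (pw r₀ r₁ φ * pw q₀ q₁ α * μ ^ (-1 : ℝ) * stacyLikelihood n x φ μ α) =
    ENNReal.ofReal (exp (-∑ i, log (x i)) * (pw q₀ q₁ α * α ^ ((n : ℝ) - 1)) *
      (pw r₀ r₁ φ * gammaRatio n φ) * exp (-(φ * ell n x α))) := by
  have hn0 : (0 : ℝ) < n := by exact_mod_cast hn
  have : Nonempty (Fin n) := ⟨⟨0, hn⟩⟩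
  have hS : 0 < ∑ i, x i ^ α :=
    Finset.sum_pos (fun i _ => rpow_pos_of_pos (hx i) _) Finset.univ_nonempty
  set S := ∑ i, x i ^ α with hSdef
  set W := pw r₀ r₁ φ * pw q₀ q₁ α * (α ^ n / Gamma φ ^ n * ∏ i, x i ^ (α * φ - 1)) with hW
  have hG := Gamma_pos_of_pos hφ
  have hp1 := pw_pos (a := r₀) (b := r₁) hφ
  have hp2 := pw_pos (a := q₀) (b := q₁) hα
  have hW0 : 0 ≤ W := by
    have : 0 < ∏ i, x i ^ (α * φ - 1) := Finset.prod_pos fun i _ => rpow_pos_of_pos (hx i) _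
    positivity
  have hq : -1 < n * α * φ - 1 := by
    have : 0 < n * α * φ := by positivity
    linarith
  have hInt := (integrableOn_rpow_mul_exp_neg_mul_rpow hq hα hS).const_mul W
  have e1 : ∀ μ ∈ Set.Ioi (0 : ℝ), ENNReal.ofReal
      (pw r₀ r₁ φ * pw q₀ q₁ α * μ ^ (-1 : ℝ) * stacyLikelihood n x φ μ α) =
      ENNReal.ofReal (W * (μ ^ (n * α * φ - 1) * exp (-S * μ ^ α))) := by
    intro μ hμ
    have hμ0 : 0 < μ := hμ
    congr 1
    unfold stacyLikelihood
    rw [hW, sub_eq_add_neg (n * α * φ), rpow_add hμ0, ← hSdef, neg_mul, mul_comm S]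
    ring
  rw [setLIntegral_congr_fun measurableSet_Ioi e1, ← ofReal_integral_eq_lintegral_ofReal hInt
    (ae_restrict_of_forall_mem measurableSet_Ioi fun μ hμ => by
      have : (0 : ℝ) < μ := hμ
      simp only [Pi.zero_apply]
      positivity),
    integral_const_mul, integral_rpow_mul_exp_neg_mul_rpow hα hq hS]
  congr 1
  have e2 : (n * α * φ - 1 + 1) / α = n * φ := by field_simp; ring
  have e3 : -(n * α * φ - 1 + 1) / α = -(n * φ) := by rw [neg_div, e2]
  have e4 : S ^ (-(n * φ)) = exp (-(n * φ * log (S / n))) * (n : ℝ) ^ (-(n * φ)) := by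
    rw [show -(n * φ * log (S / n)) = log (S / n) * -(n * φ) by ring,
      ← rpow_def_of_pos (by positivity), ← mul_rpow (by positivity) hn0.le, div_mul_cancel₀ _ hn0.ne']
  have e5 : exp (-(φ * ell n x α)) = exp (-(n * φ * log (S / n))) *
      exp (α * φ * ∑ i, log (x i)) := by
    rw [← exp_add]; congr 1; unfold ell; ring
  rw [e2, e3, e4, e5, hW, prod_rpow_eq_exp x hx, sub_mul, one_mul, sub_eq_add_neg (α * φ * _),
    exp_add, rpow_sub_one hα.ne', rpow_natCast]
  unfold gammaRatio
  field_simp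

/-- For `k = -1` the model integral reduces to the planar one, after integrating out `μ`. -/
lemma model_neg_one {n : ℕ} (hn : 1 ≤ n) (x : Fin n → ℝ) (hx : ∀ i, 0 < x i)
    (hxne : ∃ i j, x i ≠ x j) (q₀ q₁ r₀ r₁ : ℝ) :
    model n x (-1) q₀ q₁ r₀ r₁ < ⊤ ↔
      (q₁ < r₀ ∧ 2 * r₁ + 1 < q₀ ∧ -q₀ < (n : ℝ) ∧ -r₀ < (n : ℝ)) := by
  obtain ⟨c, hc, C, hC, hell⟩ := ell_bounds hn x hx hxne
  obtain ⟨d, hd, D, hD, hgam⟩ := gammaRatio_bounds hn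
  set P := exp (-∑ i, log (x i)) with hP
  have hP0 : 0 < P := exp_pos _
  have e1 : model n x (-1) q₀ q₁ r₀ r₁ =
      ∫⁻ α in Set.Ioi (0 : ℝ), ∫⁻ φ in Set.Ioi (0 : ℝ),
        ENNReal.ofReal (P * (pw q₀ q₁ α * α ^ ((n : ℝ) - 1)) *
          (pw r₀ r₁ φ * gammaRatio n φ) * exp (-(φ * ell n x α))) := by
    unfold model
    refine setLIntegral_congr_fun measurableSet_Ioi fun α hα => ?_
    rw [lintegral_lintegral_swap
      (measurable_integrand n x hx (-1) q₀ q₁ r₀ r₁ α).aemeasurable]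
    exact setLIntegral_congr_fun measurableSet_Ioi fun φ hφ =>
      lintegral_mu hn x hx q₀ q₁ r₀ r₁ hα hφ
  set a₀ := q₀ + (n - 1) with ha₀
  set a₁ := q₁ + (n - 1) with ha₁
  set b₀ := r₀ + (n - 1) with hb₀
  set b₁ := r₁ + (n - 1) / 2 with hb₁
  have hup : model n x (-1) q₀ q₁ r₀ r₁ ≤ ENNReal.ofReal (P * D) * planar c a₀ a₁ b₀ b₁ := by
    rw [e1]
    unfold planar
    simp_rw [← lintegral_const_mul' _ _ ENNReal.ofReal_ne_top]
    refine setLIntegral_mono' measurableSet_Ioi fun α hα =>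
      setLIntegral_mono' measurableSet_Ioi fun φ hφ => ?_
    have hα0 : 0 < α := hα
    have hφ0 : 0 < φ := hφ
    have hp1 := pw_pos (a := r₀) (b := r₁) hφ0
    have hp2 := pw_pos (a := q₀) (b := q₁) hα0
    rw [← ENNReal.ofReal_mul (by positivity), ha₀, ha₁, hb₀, hb₁, ← pw_mul hα0, ← pw_mul hφ0,
      pw_same]
    refine ENNReal.ofReal_le_ofReal ?_
    have g1 := (hgam φ hφ0).2
    have g2 : exp (-(φ * ell n x α)) ≤ exp (-(c * φ * pw 2 1 α)) := by
      rw [mul_assoc, mul_left_comm]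
      have := (hell α hα0).1
      gcongr
    have g3 := gammaRatio_pos hn hφ0
    have g4 := pw_pos (a := (n : ℝ) - 1) (b := ((n : ℝ) - 1) / 2) hφ0
    calc _ ≤ P * (pw q₀ q₁ α * α ^ ((n : ℝ) - 1)) *
          (pw r₀ r₁ φ * (D * pw ((n : ℝ) - 1) (((n : ℝ) - 1) / 2) φ)) *
            exp (-(c * φ * pw 2 1 α)) := by gcongr
      _ = _ := by ring
  have hlo : ENNReal.ofReal (P * d) * planar C a₀ a₁ b₀ b₁ ≤ model n x (-1) q₀ q₁ r₀ r₁ := by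
    rw [e1]
    unfold planar
    simp_rw [← lintegral_const_mul' _ _ ENNReal.ofReal_ne_top]
    refine setLIntegral_mono' measurableSet_Ioi fun α hα =>
      setLIntegral_mono' measurableSet_Ioi fun φ hφ => ?_
    have hα0 : 0 < α := hα
    have hφ0 : 0 < φ := hφ
    have hp1 := pw_pos (a := r₀) (b := r₁) hφ0
    have hp2 := pw_pos (a := q₀) (b := q₁) hα0
    rw [← ENNReal.ofReal_mul (by positivity), ha₀, ha₁, hb₀, hb₁, ← pw_mul hα0, ← pw_mul hφ0,
      pw_same]
    refine ENNReal.ofReal_le_ofReal ?_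
    have g1 := (hgam φ hφ0).1
    have g2 : exp (-(C * φ * pw 2 1 α)) ≤ exp (-(φ * ell n x α)) := by
      rw [mul_assoc, mul_left_comm]
      have := (hell α hα0).2
      gcongr
    have g3 := pw_pos (a := (n : ℝ) - 1) (b := ((n : ℝ) - 1) / 2) hφ0
    have g4 := gammaRatio_pos hn hφ0
    calc _ = P * (pw q₀ q₁ α * α ^ ((n : ℝ) - 1)) *
          (pw r₀ r₁ φ * (d * pw ((n : ℝ) - 1) (((n : ℝ) - 1) / 2) φ)) *
            exp (-(C * φ * pw 2 1 α)) := by ring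
      _ ≤ _ := by gcongr
  have hiff : model n x (-1) q₀ q₁ r₀ r₁ < ⊤ ↔
      -1 < b₀ ∧ a₁ < b₀ ∧ -1 < a₀ ∧ 2 * b₁ + 1 < a₀ := by
    constructor
    · intro h
      rw [← planar_lt_top_iff hC]
      by_contra htop
      rw [not_lt_top_iff.1 htop, ENNReal.mul_top (by simpa using mul_pos hP0 hd)] at hlo
      exact absurd (hlo.trans_lt h) (lt_irrefl _)
    · intro h
      exact hup.trans_lt (ENNReal.mul_lt_top ENNReal.ofReal_lt_top ((planar_lt_top_iff hc).2 h))
  rw [hiff]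
  simp only [ha₀, ha₁, hb₀, hb₁]
  constructor
  · rintro ⟨h1, h2, h3, h4⟩
    exact ⟨by linarith, by linarith, by linarith, by linarith⟩
  · rintro ⟨h1, h2, h3, h4⟩
    exact ⟨by linarith, by linarith, by linarith, by linarith⟩

/-! ### Divergence for `k ≠ -1` -/

/-- The prior of `φ` times the factors of the likelihood depending only on `φ`, `x` and `α φ` is
bounded below when `φ` ranges over a compact subset of `(0, ∞)` and `α` is bounded. -/
lemma weight_bound {n : ℕ} (x : Fin n → ℝ) (hx : ∀ i, 0 < x i) (r₀ r₁ : ℝ) {u v : ℝ}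
    (hu : 0 < u) (huv : u ≤ v) :
    ∃ w > 0, ∀ α ∈ Set.Ioc (0 : ℝ) 2, ∀ φ ∈ Set.Icc u v,
      w ≤ pw r₀ r₁ φ * (1 / Gamma φ ^ n) * ∏ i, x i ^ (α * φ - 1) := by
  obtain ⟨k₀, hk₀, H₀⟩ := rpow_bounds_Icc r₀ hu huv
  obtain ⟨k₁, hk₁, H₁⟩ := rpow_bounds_Icc r₁ hu huv
  obtain ⟨g, hg, G, hG, HG⟩ := exists_bounds_of_continuousOn huv
    (continuousOn_Gamma.mono fun t ht => hu.trans_le ht.1)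
    (fun t ht => Gamma_pos_of_pos (hu.trans_le ht.1))
  set Λ := ∑ i, log (x i)
  refine ⟨min k₀ k₁ * (1 / G ^ n) * exp (-((2 * v + 1) * |Λ|)), by positivity,
    fun α hα φ hφ => ?_⟩
  have hφ0 : 0 < φ := hu.trans_le hφ.1
  have hΓ := Gamma_pos_of_pos hφ0
  have hp := pw_pos (a := r₀) (b := r₁) hφ0
  rw [prod_rpow_eq_exp x hx]
  have e1 : min k₀ k₁ ≤ pw r₀ r₁ φ := by
    unfold pw
    split_ifs
    · exact (min_le_left _ _).trans (H₀ φ hφ)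
    · exact (min_le_right _ _).trans (H₁ φ hφ)
  have e2 : -((2 * v + 1) * |Λ|) ≤ (α * φ - 1) * Λ := by
    refine le_trans (neg_le_neg ?_) (neg_abs_le _)
    rw [abs_mul]
    gcongr
    have h1 : α * φ ≤ 2 * v := mul_le_mul hα.2 hφ.2 hφ0.le (by norm_num)
    have h2 : 0 < α * φ := mul_pos hα.1 hφ0
    rw [abs_le]
    constructor <;> linarith
  gcongr
  exact (HG φ hφ).2

lemma sum_rpow_le {n : ℕ} (x : Fin n → ℝ) (hx : ∀ i, 0 < x i) {α : ℝ}
    (hα : α ∈ Set.Ioc (0 : ℝ) 2) : ∑ i, x i ^ α ≤ ∑ i, (1 + x i) ^ (2 : ℝ) := by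
  refine Finset.sum_le_sum fun i _ => ?_
  have := hx i
  have := hα.1
  calc x i ^ α ≤ (1 + x i) ^ α := by gcongr; linarith
    _ ≤ (1 + x i) ^ (2 : ℝ) := rpow_le_rpow_of_exponent_le (by linarith) hα.2

/-- For `k < -1` the `μ`-integral diverges at `0` as soon as `n α φ + k ≤ -1`. -/
lemma model_eq_top_of_lt {n : ℕ} (hn : 1 ≤ n) (x : Fin n → ℝ) (hx : ∀ i, 0 < x i)
    {k : ℝ} (hk : k < -1) (q₀ q₁ r₀ r₁ : ℝ) : model n x k q₀ q₁ r₀ r₁ = ⊤ := by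
  have hn0 : (0 : ℝ) < n := by exact_mod_cast hn
  set ε := (-1 - k) / (2 * n) with hε
  have hε0 : 0 < ε := div_pos (by linarith) (by positivity)
  obtain ⟨w, hw, Hw⟩ := weight_bound x hx r₀ r₁ (half_pos hε0) (half_le_self hε0.le)
  obtain ⟨c, hc, Hc⟩ := rpow_bounds_Icc q₁ one_pos (one_le_two : (1 : ℝ) ≤ 2)
  set T := ∑ i, (1 + x i) ^ (2 : ℝ)
  set K := w * c * exp (-T) with hK
  have hK0 : 0 < K := by positivity
  rw [← top_le_iff]
  calc (⊤ : ℝ≥0∞) = ∫⁻ α in Set.Ioc (1 : ℝ) 2, ⊤ := by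
        rw [setLIntegral_const, Real.volume_Ioc]; norm_num [ENNReal.top_mul]
    _ = ∫⁻ α in Set.Ioc (1 : ℝ) 2, ENNReal.ofReal (K * (ε - ε / 2)) *
          ∫⁻ μ in Set.Ioc (0 : ℝ) 1, ENNReal.ofReal (μ ^ (-1 : ℝ)) := by
        have hinf : ∫⁻ μ in Set.Ioc (0 : ℝ) 1, ENNReal.ofReal (μ ^ (-1 : ℝ)) = ⊤ := by
          rw [← not_lt_top_iff, lintegral_rpow_Ioc_lt_top_iff]; norm_num
        have h0 : 0 < K * (ε - ε / 2) := mul_pos hK0 (by linarith)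
        rw [hinf, ENNReal.mul_top (by simpa using h0)]
    _ = ∫⁻ α in Set.Ioc (1 : ℝ) 2, ∫⁻ μ in Set.Ioc (0 : ℝ) 1, ∫⁻ φ in Set.Ioc (ε / 2) ε,
          ENNReal.ofReal (K * μ ^ (-1 : ℝ)) := by
        refine lintegral_congr fun α => ?_
        rw [← lintegral_const_mul' _ _ ENNReal.ofReal_ne_top]
        refine setLIntegral_congr_fun measurableSet_Ioc fun μ hμ => ?_
        have := hμ.1
        simp only [setLIntegral_const, Real.volume_Ioc]
        rw [← ENNReal.ofReal_mul (mul_nonneg hK0.le (by linarith)),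
          ← ENNReal.ofReal_mul (by positivity)]
        congr 1; ring
    _ ≤ ∫⁻ α in Set.Ioc (1 : ℝ) 2, ∫⁻ μ in Set.Ioc (0 : ℝ) 1, ∫⁻ φ in Set.Ioc (ε / 2) ε,
          ENNReal.ofReal (pw r₀ r₁ φ * pw q₀ q₁ α * μ ^ k * stacyLikelihood n x φ μ α) := by
        refine setLIntegral_mono' measurableSet_Ioc fun α hα =>
          setLIntegral_mono' measurableSet_Ioc fun μ hμ =>
          setLIntegral_mono' measurableSet_Ioc fun φ hφ => ENNReal.ofReal_le_ofReal ?_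
        have hα1 := hα.1
        have hα0 : 0 < α := by linarith
        have hμ0 := hμ.1
        have hφ0 : 0 < φ := (half_pos hε0).trans hφ.1
        have g1 := Hw α ⟨hα0, hα.2⟩ φ ⟨hφ.1.le, hφ.2⟩
        have g2 : c ≤ pw q₀ q₁ α := by
          rw [pw_of_ge hα1.le]; exact Hc α ⟨hα1.le, hα.2⟩
        have g3 : 1 ≤ α ^ n := one_le_pow₀ hα1.le
        have g4 : μ ^ (-1 : ℝ) ≤ μ ^ k * μ ^ ((n : ℝ) * α * φ) := by
          rw [← rpow_add hμ0]
          refine rpow_le_rpow_of_exponent_ge hμ0 hμ.2 ?_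
          have : (n : ℝ) * α * φ ≤ n * 2 * ε := by gcongr; exacts [hα.2, hφ.2]
          have : (n : ℝ) * 2 * ε = -1 - k := by rw [hε]; field_simp
          linarith
        have g5 : exp (-T) ≤ exp (-(μ ^ α * ∑ i, x i ^ α)) := by
          have h1 : μ ^ α ≤ 1 := rpow_le_one hμ0.le hμ.2 hα0.le
          have h2 : 0 ≤ ∑ i, x i ^ α := Finset.sum_nonneg fun i _ => rpow_nonneg (hx i).le _
          gcongr
          exact (mul_le_of_le_one_left h2 h1).trans (sum_rpow_le x hx ⟨hα0, hα.2⟩)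
        have hp := pw_pos (a := q₀) (b := q₁) hα0
        calc K * μ ^ (-1 : ℝ) = w * c * 1 * μ ^ (-1 : ℝ) * exp (-T) := by rw [hK]; ring
          _ ≤ (pw r₀ r₁ φ * (1 / Gamma φ ^ n) * ∏ i, x i ^ (α * φ - 1)) * pw q₀ q₁ α * α ^ n *
              (μ ^ k * μ ^ ((n : ℝ) * α * φ)) * exp (-(μ ^ α * ∑ i, x i ^ α)) := by
              have := hw.le.trans g1
              gcongr
          _ = _ := by unfold stacyLikelihood; ring
    _ ≤ model n x k q₀ q₁ r₀ r₁ := by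
        unfold model
        refine le_trans ?_ (lintegral_mono_set
          (fun α hα => one_pos.trans hα.1 : Set.Ioc (1 : ℝ) 2 ⊆ Set.Ioi 0))
        refine lintegral_mono fun α => ?_
        refine le_trans ?_ (lintegral_mono_set (Set.Ioc_subset_Ioi_self : Set.Ioc (0 : ℝ) 1 ⊆ _))
        exact lintegral_mono fun μ => lintegral_mono_set fun φ hφ => (half_pos hε0).trans hφ.1

/-- For `k > -1` the region `μ ∈ (e ^ (1/α), 2 e ^ (1/α)]`, where `μ ^ α` stays bounded,
contributes a factor `exp ((k + 1) / α)`, which no power of `α` can compensate at `0`. -/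
lemma model_eq_top_of_gt {n : ℕ} (x : Fin n → ℝ) (hx : ∀ i, 0 < x i)
    {k : ℝ} (hk : -1 < k) (q₀ q₁ r₀ r₁ : ℝ) : model n x k q₀ q₁ r₀ r₁ = ⊤ := by
  have hk1 : 0 < k + 1 := by linarith
  obtain ⟨w, hw, Hw⟩ := weight_bound x hx r₀ r₁ one_pos (one_le_two : (1 : ℝ) ≤ 2)
  obtain ⟨c, hc, Hc⟩ := rpow_bounds_Icc k one_pos (one_le_two : (1 : ℝ) ≤ 2)
  set s := max 0 (n + q₀ + 1) with hs
  have hs0 : 0 ≤ s := le_max_left _ _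
  obtain ⟨B, hB, HB⟩ := exp_neg_le_rpow hs0
  set T := ∑ i, (1 + x i) ^ (2 : ℝ)
  set K := w * c * exp (-(2 * exp 1 * T)) with hK
  have hK0 : 0 < K := by positivity
  set K' := B * (k + 1) ^ (-s) with hK'
  have hK'0 : 0 < K' := by positivity
  rw [← top_le_iff]
  calc (⊤ : ℝ≥0∞) = ENNReal.ofReal (K * K'⁻¹) *
          ∫⁻ α in Set.Ioc (0 : ℝ) 1, ENNReal.ofReal (α ^ (-1 : ℝ)) := by
        have hinf : ∫⁻ α in Set.Ioc (0 : ℝ) 1, ENNReal.ofReal (α ^ (-1 : ℝ)) = ⊤ := by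
          rw [← not_lt_top_iff, lintegral_rpow_Ioc_lt_top_iff]; norm_num
        have h0 : 0 < K * K'⁻¹ := by positivity
        rw [hinf, ENNReal.mul_top (by simpa using h0)]
    _ ≤ ∫⁻ α in Set.Ioc (0 : ℝ) 1, ∫⁻ μ in Set.Ioc (exp (1 / α)) (2 * exp (1 / α)),
          ∫⁻ φ in Set.Ioc (1 : ℝ) 2,
          ENNReal.ofReal (K * α ^ (n + q₀) * exp (k / α)) := by
        rw [← lintegral_const_mul' _ _ ENNReal.ofReal_ne_top]
        refine setLIntegral_mono' measurableSet_Ioc fun α hα => ?_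
        have hα0 := hα.1
        simp only [setLIntegral_const, Real.volume_Ioc]
        rw [← ENNReal.ofReal_mul (by positivity), ← ENNReal.ofReal_mul (by positivity),
          ← ENNReal.ofReal_mul (by norm_num; positivity)]
        refine ENNReal.ofReal_le_ofReal ?_
        have g1 := HB ((k + 1) / α) (by positivity)
        rw [div_rpow hk1.le hα0.le, rpow_neg hα0.le, div_inv_eq_mul, ← mul_assoc, ← hK'] at g1
        have g2 : α ^ s ≤ α ^ (n + q₀ + 1) :=
          rpow_le_rpow_of_exponent_ge hα0 hα.2 (le_max_right _ _)
        have g3 : 1 ≤ K' * α ^ (n + q₀ + 1) * exp ((k + 1) / α) := by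
          rw [exp_neg] at g1
          have h5 : 1 ≤ K' * α ^ s * exp ((k + 1) / α) :=
            (inv_le_iff_one_le_mul₀ (exp_pos _)).1 g1
          exact h5.trans (by gcongr)
        rw [rpow_add_one hα0.ne', add_div, exp_add] at g3
        have g4 : K'⁻¹ * α⁻¹ ≤ α ^ (n + q₀) * (exp (k / α) * exp (1 / α)) := by
          rw [← mul_inv, inv_le_iff_one_le_mul₀ (by positivity)]
          calc (1 : ℝ) ≤ _ := g3
            _ = _ := by ring
        rw [rpow_neg_one]
        calc K * K'⁻¹ * α⁻¹ = K * (K'⁻¹ * α⁻¹) := by ring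
          _ ≤ K * (α ^ (n + q₀) * (exp (k / α) * exp (1 / α))) := by gcongr
          _ = _ := by ring
    _ ≤ ∫⁻ α in Set.Ioc (0 : ℝ) 1, ∫⁻ μ in Set.Ioc (exp (1 / α)) (2 * exp (1 / α)),
          ∫⁻ φ in Set.Ioc (1 : ℝ) 2,
          ENNReal.ofReal (pw r₀ r₁ φ * pw q₀ q₁ α * μ ^ k * stacyLikelihood n x φ μ α) := by
        refine setLIntegral_mono' measurableSet_Ioc fun α hα =>
          setLIntegral_mono' measurableSet_Ioc fun μ hμ =>
          setLIntegral_mono' measurableSet_Ioc fun φ hφ => ENNReal.ofReal_le_ofReal ?_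
        have hα0 := hα.1
        have hα2 : α ∈ Set.Ioc (0 : ℝ) 2 := ⟨hα0, hα.2.trans one_le_two⟩
        have hE : 1 ≤ exp (1 / α) := one_le_exp (by positivity)
        have hμ1 : 1 ≤ μ := hE.trans hμ.1.le
        have hμ0 : 0 < μ := by linarith
        have hφ0 : 0 < φ := one_pos.trans hφ.1
        have g1 := Hw α hα2 φ ⟨hφ.1.le, hφ.2⟩
        have g3 : 1 ≤ μ ^ ((n : ℝ) * α * φ) := one_le_rpow hμ1 (by positivity)
        have g4 : c * exp (k / α) ≤ μ ^ k := by
          have h1 : μ = μ / exp (1 / α) * exp (1 / α) := by field_simp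
          rw [h1, mul_rpow (by positivity) (exp_pos _).le, ← exp_mul, one_div_mul_eq_div]
          gcongr
          refine Hc _ ⟨?_, ?_⟩
          · rw [le_div_iff₀ (exp_pos _), one_mul]; exact hμ.1.le
          · rw [div_le_iff₀ (exp_pos _)]; exact hμ.2
        have g5 : exp (-(2 * exp 1 * T)) ≤ exp (-(μ ^ α * ∑ i, x i ^ α)) := by
          have h1 : μ ^ α ≤ 2 * exp 1 := by
            calc μ ^ α ≤ (2 * exp (1 / α)) ^ α := by gcongr; exact hμ.2
              _ = 2 ^ α * exp 1 := by
                rw [mul_rpow (by norm_num) (exp_pos _).le, ← exp_mul, one_div_mul_cancel hα0.ne']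
              _ ≤ 2 ^ (1 : ℝ) * exp 1 := by
                gcongr
                · norm_num
                · exact hα.2
              _ = 2 * exp 1 := by rw [rpow_one]
          have h2 : 0 ≤ ∑ i, x i ^ α := Finset.sum_nonneg fun i _ => rpow_nonneg (hx i).le _
          have h3 := sum_rpow_le x hx hα2
          gcongr
        have hp := pw_pos (a := q₀) (b := q₁) hα0
        calc K * α ^ (n + q₀) * exp (k / α)
            = w * pw q₀ q₁ α * α ^ n * (c * exp (k / α)) * 1 * exp (-(2 * exp 1 * T)) := by
              rw [hK, pw_of_le hα.2, rpow_add hα0, rpow_natCast]; ring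
          _ ≤ (pw r₀ r₁ φ * (1 / Gamma φ ^ n) * ∏ i, x i ^ (α * φ - 1)) * pw q₀ q₁ α * α ^ n *
              μ ^ k * μ ^ ((n : ℝ) * α * φ) * exp (-(μ ^ α * ∑ i, x i ^ α)) := by
              have := hw.le.trans g1
              gcongr
          _ = _ := by unfold stacyLikelihood; ring
    _ ≤ model n x k q₀ q₁ r₀ r₁ := by
        unfold model
        refine le_trans ?_ (lintegral_mono_set (Set.Ioc_subset_Ioi_self : Set.Ioc (0 : ℝ) 1 ⊆ _))
        refine lintegral_mono fun α => ?_
        refine le_trans ?_ (lintegral_mono_set (fun μ hμ => (exp_pos _).trans hμ.1 :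
          Set.Ioc (exp (1 / α)) (2 * exp (1 / α)) ⊆ Set.Ioi 0))
        exact lintegral_mono fun μ => lintegral_mono_set fun φ hφ => one_pos.trans hφ.1

/-- The propriety criterion for two-sided power priors. -/
lemma model_lt_top_iff {n : ℕ} (hn : 1 ≤ n) (x : Fin n → ℝ) (hx : ∀ i, 0 < x i)
    (hxne : ∃ i j, x i ≠ x j) (k q₀ q₁ r₀ r₁ : ℝ) :
    model n x k q₀ q₁ r₀ r₁ < ⊤ ↔
      (k = -1 ∧ q₁ < r₀ ∧ 2 * r₁ + 1 < q₀ ∧ -q₀ < (n : ℝ) ∧ -r₀ < (n : ℝ)) := by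
  rcases lt_trichotomy k (-1) with h | h | h
  · simp [model_eq_top_of_lt hn x hx h, h.ne]
  · rw [h, model_neg_one hn x hx hxne]; simp
  · simp [model_eq_top_of_gt x hx h, h.ne']

/-! ### Comparison of priors with power functions -/

lemma stacyLikelihood_nonneg {n : ℕ} (x : Fin n → ℝ) (hx : ∀ i, 0 < x i) {φ μ α : ℝ}
    (hφ : 0 < φ) (hμ : 0 < μ) (hα : 0 < α) : 0 ≤ stacyLikelihood n x φ μ α := by
  have := Gamma_pos_of_pos hφ
  have : 0 < ∏ i, x i ^ (α * φ - 1) := Finset.prod_pos fun i _ => rpow_pos_of_pos (hx i) _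
  unfold stacyLikelihood
  positivity

lemma exists_bound_near_zero {h : ℝ → ℝ} (hc : ContinuousOn h (Set.Ioi 0))
    (hl : limsup (fun t => ENNReal.ofReal (h t)) (𝓝[>] (0 : ℝ)) < ⊤) :
    ∃ M > 0, ∀ t, 0 < t → t ≤ 1 → h t ≤ M := by
  obtain ⟨B, hB, hB'⟩ := exists_between hl
  obtain ⟨ε, hε, H⟩ := mem_nhdsGT_iff_exists_Ioc_subset.1 (eventually_lt_of_limsup_lt hB)
  obtain ⟨C, hC⟩ := (isCompact_Icc (a := ε) (b := 1)).exists_bound_of_continuousOn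
    (hc.mono fun t ht => (hε : 0 < ε).trans_le ht.1)
  refine ⟨max 1 (max B.toReal C), by positivity, fun t h0 h1 => ?_⟩
  rcases le_total t ε with h2 | h2
  · have h3 : ENNReal.ofReal (h t) < B := H ⟨h0, h2⟩
    exact (ENNReal.ofReal_le_iff_le_toReal hB'.ne).1 h3.le |>.trans
      ((le_max_left _ _).trans (le_max_right _ _))
  · exact (le_abs_self _).trans ((hC t ⟨h2, h1⟩).trans
      ((le_max_right _ _).trans (le_max_right _ _)))

lemma exists_bound_near_top {h : ℝ → ℝ} (hc : ContinuousOn h (Set.Ioi 0))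
    (hl : limsup (fun t => ENNReal.ofReal (h t)) atTop < ⊤) :
    ∃ M > 0, ∀ t, 1 ≤ t → h t ≤ M := by
  obtain ⟨B, hB, hB'⟩ := exists_between hl
  obtain ⟨N, H⟩ := eventually_atTop.1 (eventually_lt_of_limsup_lt hB)
  obtain ⟨C, hC⟩ := (isCompact_Icc (a := 1) (b := N)).exists_bound_of_continuousOn
    (hc.mono fun t ht => one_pos.trans_le ht.1)
  refine ⟨max 1 (max B.toReal C), by positivity, fun t h1 => ?_⟩
  rcases le_total N t with h2 | h2
  · exact (ENNReal.ofReal_le_iff_le_toReal hB'.ne).1 (H t h2).le |>.trans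
      ((le_max_left _ _).trans (le_max_right _ _))
  · exact (le_abs_self _).trans ((hC t ⟨h1, h2⟩).trans
      ((le_max_right _ _).trans (le_max_right _ _)))

/-- A continuous positive prior with prescribed power behaviour at both ends is comparable to a
two-sided power function on all of `(0, ∞)`. -/
lemma prior_bounds {f : ℝ → ℝ} (hc : ContinuousOn f (Set.Ioi 0)) (hpos : ∀ t > 0, 0 < f t)
    {a b : ℝ}
    (h1 : limsup (fun t => ENNReal.ofReal (f t / t ^ a)) (𝓝[>] (0 : ℝ)) < ⊤)
    (h2 : limsup (fun t => ENNReal.ofReal (t ^ a / f t)) (𝓝[>] (0 : ℝ)) < ⊤)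
    (h3 : limsup (fun t => ENNReal.ofReal (f t / t ^ b)) atTop < ⊤)
    (h4 : limsup (fun t => ENNReal.ofReal (t ^ b / f t)) atTop < ⊤) :
    ∃ c > 0, ∃ C > 0, ∀ t > 0, c * pw a b t ≤ f t ∧ f t ≤ C * pw a b t := by
  have hr : ∀ e : ℝ, ContinuousOn (fun t : ℝ => t ^ e) (Set.Ioi 0) := fun e =>
    continuousOn_id.rpow_const fun t ht => Or.inl (ne_of_gt ht)
  have hd : ∀ e : ℝ, ContinuousOn (fun t : ℝ => f t / t ^ e) (Set.Ioi 0) := fun e =>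
    hc.div (hr e) fun t ht => (rpow_pos_of_pos ht e).ne'
  have hd' : ∀ e : ℝ, ContinuousOn (fun t : ℝ => t ^ e / f t) (Set.Ioi 0) := fun e =>
    (hr e).div hc fun t ht => (hpos t ht).ne'
  obtain ⟨M₁, hM₁, H₁⟩ := exists_bound_near_zero (hd a) h1
  obtain ⟨M₂, hM₂, H₂⟩ := exists_bound_near_zero (hd' a) h2
  obtain ⟨M₃, hM₃, H₃⟩ := exists_bound_near_top (hd b) h3
  obtain ⟨M₄, hM₄, H₄⟩ := exists_bound_near_top (hd' b) h4
  refine ⟨(max M₂ M₄)⁻¹, by positivity, max M₁ M₃, by positivity, fun t ht => ?_⟩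
  have hf := hpos t ht
  rw [inv_mul_le_iff₀ (by positivity)]
  rcases le_total t 1 with h | h
  · rw [pw_of_le h]
    have e1 := H₁ t ht h
    have e2 := H₂ t ht h
    rw [div_le_iff₀ (by positivity)] at e1 e2
    exact ⟨e2.trans (by gcongr; exact le_max_left _ _),
      e1.trans (by gcongr; exact le_max_left _ _)⟩
  · rw [pw_of_ge h]
    have e1 := H₃ t h
    have e2 := H₄ t h
    rw [div_le_iff₀ (by positivity)] at e1 e2
    exact ⟨e2.trans (by gcongr; exact le_max_right _ _),
      e1.trans (by gcongr; exact le_max_right _ _)⟩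

/-- Multiplying the priors by powers shifts the exponents of the model integral, and comparable
priors give simultaneously finite integrals. -/
lemma moment_lt_top_iff {n : ℕ} (x : Fin n → ℝ) (hx : ∀ i, 0 < x i) {πμ πα πφ : ℝ → ℝ}
    {k q₀ q₁ r₀ r₁ : ℝ}
    (hμ : ∃ c > 0, ∃ C > 0, ∀ t > 0, c * t ^ k ≤ πμ t ∧ πμ t ≤ C * t ^ k)
    (hα : ∃ c > 0, ∃ C > 0, ∀ t > 0, c * pw q₀ q₁ t ≤ πα t ∧ πα t ≤ C * pw q₀ q₁ t)
    (hφ : ∃ c > 0, ∃ C > 0, ∀ t > 0, c * pw r₀ r₁ t ≤ πφ t ∧ πφ t ≤ C * pw r₀ r₁ t)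
    (q r j : ℕ) :
    (∫⁻ α in Set.Ioi (0 : ℝ), ∫⁻ μ in Set.Ioi (0 : ℝ), ∫⁻ φ in Set.Ioi (0 : ℝ),
      ENNReal.ofReal (α ^ q * φ ^ r * μ ^ j *
        (πφ φ * πα α * πμ μ * stacyLikelihood n x φ μ α))) < ⊤ ↔
      model n x (j + k) (q + q₀) (q + q₁) (r + r₀) (r + r₁) < ⊤ := by
  obtain ⟨c₁, hc₁, C₁, hC₁, H₁⟩ := hμ
  obtain ⟨c₂, hc₂, C₂, hC₂, H₂⟩ := hα
  obtain ⟨c₃, hc₃, C₃, hC₃, H₃⟩ := hφ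
  have hc : 0 < c₁ * c₂ * c₃ := by positivity
  have split : ∀ {α μ φ : ℝ}, 0 < α → 0 < μ → 0 < φ →
      pw (r + r₀) (r + r₁) φ * pw (q + q₀) (q + q₁) α * μ ^ (j + k) =
        α ^ q * φ ^ r * μ ^ j * (pw r₀ r₁ φ * pw q₀ q₁ α * μ ^ k) := by
    intro α μ φ hα hμ hφ
    rw [← pw_mul hφ, ← pw_mul hα, rpow_add hμ, pw_same, pw_same]
    simp only [rpow_natCast]
    ring
  have hlo : ENNReal.ofReal (c₁ * c₂ * c₃) *
      model n x (j + k) (q + q₀) (q + q₁) (r + r₀) (r + r₁) ≤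
      ∫⁻ α in Set.Ioi (0 : ℝ), ∫⁻ μ in Set.Ioi (0 : ℝ), ∫⁻ φ in Set.Ioi (0 : ℝ),
        ENNReal.ofReal (α ^ q * φ ^ r * μ ^ j *
          (πφ φ * πα α * πμ μ * stacyLikelihood n x φ μ α)) := by
    unfold model
    simp_rw [← lintegral_const_mul' _ _ ENNReal.ofReal_ne_top]
    refine setLIntegral_mono' measurableSet_Ioi fun α hα =>
      setLIntegral_mono' measurableSet_Ioi fun μ hμ =>
      setLIntegral_mono' measurableSet_Ioi fun φ hφ => ?_
    have hα0 : 0 < α := hα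
    have hμ0 : 0 < μ := hμ
    have hφ0 : 0 < φ := hφ
    have hL := stacyLikelihood_nonneg x hx hφ0 hμ0 hα0
    have p1 := pw_pos (a := q₀) (b := q₁) hα0
    have p2 := pw_pos (a := r₀) (b := r₁) hφ0
    have p3 : 0 < πα α := lt_of_lt_of_le (by positivity) (H₂ α hα0).1
    have p4 : 0 < πφ φ := lt_of_lt_of_le (by positivity) (H₃ φ hφ0).1
    rw [← ENNReal.ofReal_mul hc.le, split hα0 hμ0 hφ0]
    refine ENNReal.ofReal_le_ofReal ?_
    calc _ = α ^ q * φ ^ r * μ ^ j * ((c₃ * pw r₀ r₁ φ) * (c₂ * pw q₀ q₁ α) * (c₁ * μ ^ k) *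
          stacyLikelihood n x φ μ α) := by ring
      _ ≤ _ := by
        gcongr
        exacts [(H₃ φ hφ0).1, (H₂ α hα0).1, (H₁ μ hμ0).1]
  have hup : (∫⁻ α in Set.Ioi (0 : ℝ), ∫⁻ μ in Set.Ioi (0 : ℝ), ∫⁻ φ in Set.Ioi (0 : ℝ),
        ENNReal.ofReal (α ^ q * φ ^ r * μ ^ j *
          (πφ φ * πα α * πμ μ * stacyLikelihood n x φ μ α))) ≤
      ENNReal.ofReal (C₁ * C₂ * C₃) *
        model n x (j + k) (q + q₀) (q + q₁) (r + r₀) (r + r₁) := by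
    unfold model
    simp_rw [← lintegral_const_mul' _ _ ENNReal.ofReal_ne_top]
    refine setLIntegral_mono' measurableSet_Ioi fun α hα =>
      setLIntegral_mono' measurableSet_Ioi fun μ hμ =>
      setLIntegral_mono' measurableSet_Ioi fun φ hφ => ?_
    have hα0 : 0 < α := hα
    have hμ0 : 0 < μ := hμ
    have hφ0 : 0 < φ := hφ
    have hL := stacyLikelihood_nonneg x hx hφ0 hμ0 hα0
    have p1 := pw_pos (a := q₀) (b := q₁) hα0
    have p2 := pw_pos (a := r₀) (b := r₁) hφ0
    have p3 : 0 < πα α := lt_of_lt_of_le (by positivity) (H₂ α hα0).1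
    have p5 : 0 < πμ μ := lt_of_lt_of_le (by positivity) (H₁ μ hμ0).1
    rw [← ENNReal.ofReal_mul (by positivity), split hα0 hμ0 hφ0]
    refine ENNReal.ofReal_le_ofReal ?_
    calc _ ≤ α ^ q * φ ^ r * μ ^ j * ((C₃ * pw r₀ r₁ φ) * (C₂ * pw q₀ q₁ α) * (C₁ * μ ^ k) *
          stacyLikelihood n x φ μ α) := by
          gcongr
          exacts [(H₃ φ hφ0).2, (H₂ α hα0).2, (H₁ μ hμ0).2]
      _ = _ := by ring
  constructor
  · intro h
    by_contra htop
    rw [not_lt_top_iff.1 htop, ENNReal.mul_top (by simpa using hc)] at hlo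
    exact absurd (hlo.trans_lt h) (lt_irrefl _)
  · exact fun h => hup.trans_lt (ENNReal.mul_lt_top ENNReal.ofReal_lt_top h)

end Stacy

/-- (Theorem 2.9 of the paper.) In the Stacy model with all three
parameters unknown and priors having exact asymptotic power-law behavior
`π_μ(μ) ∝ μ^k`, `π_α(α) ∝ α^{q₀}` (at `0⁺`), `π_α(α) ∝ α^{q_∞}` (at `∞`),
`π_φ(φ) ∝ φ^{r₀}` (at `0⁺`), `π_φ(φ) ∝ φ^{r_∞}` (at `∞`), the posterior is proper
iff `k = -1`, `q_∞ < r₀`, `2r_∞ + 1 < q₀`, `n > -q₀`, `n > -r₀`; and in the proper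
case the `(q,r,j)`-moment is finite iff `j = 0` and
`2(r + r_∞) + 1 - q₀ < q < r + r₀ - q_∞`. -/
theorem stacy_posterior_proper_iff
    (n : ℕ) (hn : 2 ≤ n) (x : Fin n → ℝ) (hx : ∀ i, 0 < x i) (hxne : ∃ i j, x i ≠ x j)
    (πμ πα πφ : ℝ → ℝ)
    (hπμc : ContinuousOn πμ (Set.Ioi 0)) (hπαc : ContinuousOn πα (Set.Ioi 0))
    (hπφc : ContinuousOn πφ (Set.Ioi 0))
    (hπμ0 : ∀ t > 0, 0 < πμ t) (hπα0 : ∀ t > 0, 0 < πα t) (hπφ0 : ∀ t > 0, 0 < πφ t)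
    (k q₀ qinf r₀ rinf : ℝ)
    (hμ₁ : ∃ M > 0, ∀ t > 0, πμ t ≤ M * t ^ k)
    (hμ₂ : ∃ c > 0, ∀ t > 0, c * t ^ k ≤ πμ t)
    (hα0₁ : Filter.limsup (fun t => ENNReal.ofReal (πα t / t ^ q₀)) (𝓝[>] (0:ℝ)) < ⊤)
    (hα0₂ : Filter.limsup (fun t => ENNReal.ofReal (t ^ q₀ / πα t)) (𝓝[>] (0:ℝ)) < ⊤)
    (hαinf₁ : Filter.limsup (fun t => ENNReal.ofReal (πα t / t ^ qinf)) Filter.atTop < ⊤)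
    (hαinf₂ : Filter.limsup (fun t => ENNReal.ofReal (t ^ qinf / πα t)) Filter.atTop < ⊤)
    (hφ0₁ : Filter.limsup (fun t => ENNReal.ofReal (πφ t / t ^ r₀)) (𝓝[>] (0:ℝ)) < ⊤)
    (hφ0₂ : Filter.limsup (fun t => ENNReal.ofReal (t ^ r₀ / πφ t)) (𝓝[>] (0:ℝ)) < ⊤)
    (hφinf₁ : Filter.limsup (fun t => ENNReal.ofReal (πφ t / t ^ rinf)) Filter.atTop < ⊤)
    (hφinf₂ : Filter.limsup (fun t => ENNReal.ofReal (t ^ rinf / πφ t)) Filter.atTop < ⊤) :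
    ((∫⁻ α in Set.Ioi (0:ℝ), ∫⁻ μ in Set.Ioi (0:ℝ), ∫⁻ φ in Set.Ioi (0:ℝ),
        ENNReal.ofReal (πφ φ * πα α * πμ μ * stacyLikelihood n x φ μ α)) < ⊤ ↔
      (k = -1 ∧ qinf < r₀ ∧ 2 * rinf + 1 < q₀ ∧ -q₀ < (n : ℝ) ∧ -r₀ < (n : ℝ))) ∧
    ((k = -1 ∧ qinf < r₀ ∧ 2 * rinf + 1 < q₀ ∧ -q₀ < (n : ℝ) ∧ -r₀ < (n : ℝ)) →
      ∀ q r j : ℕ,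
        ((∫⁻ α in Set.Ioi (0:ℝ), ∫⁻ μ in Set.Ioi (0:ℝ), ∫⁻ φ in Set.Ioi (0:ℝ),
            ENNReal.ofReal (α ^ q * φ ^ r * μ ^ j *
              (πφ φ * πα α * πμ μ * stacyLikelihood n x φ μ α))) < ⊤ ↔
          (j = 0 ∧ 2 * ((r : ℝ) + rinf) + 1 - q₀ < (q : ℝ) ∧
            (q : ℝ) < (r : ℝ) + r₀ - qinf))) := by
  have hn1 : 1 ≤ n := by omega
  have hμ : ∃ c > 0, ∃ C > 0, ∀ t > 0, c * t ^ k ≤ πμ t ∧ πμ t ≤ C * t ^ k := by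
    obtain ⟨M, hM, h1⟩ := hμ₁
    obtain ⟨c, hc, h2⟩ := hμ₂
    exact ⟨c, hc, M, hM, fun t ht => ⟨h2 t ht, h1 t ht⟩⟩
  have hα := Stacy.prior_bounds hπαc hπα0 hα0₁ hα0₂ hαinf₁ hαinf₂
  have hφ := Stacy.prior_bounds hπφc hπφ0 hφ0₁ hφ0₂ hφinf₁ hφinf₂
  refine ⟨?_, ?_⟩
  · have h := Stacy.moment_lt_top_iff x hx hμ hα hφ 0 0 0
    simp only [pow_zero, one_mul, Nat.cast_zero, zero_add] at h
    rw [h, Stacy.model_lt_top_iff hn1 x hx hxne]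
  · rintro ⟨hk, h1, h2, h3, h4⟩ q r j
    rw [Stacy.moment_lt_top_iff x hx hμ hα hφ q r j, Stacy.model_lt_top_iff hn1 x hx hxne]
    have hq : (0 : ℝ) ≤ q := q.cast_nonneg
    have hr : (0 : ℝ) ≤ r := r.cast_nonneg
    have hj : ((j : ℝ) + k = -1) ↔ j = 0 := by
      rw [hk, add_eq_right, Nat.cast_eq_zero]
    rw [hj]
    constructor
    · rintro ⟨e1, e2, e3, -, -⟩
      exact ⟨e1, by linarith, by linarith⟩
    · rintro ⟨e1, e2, e3⟩
      exact ⟨e1, by linarith, by linarith, by linarith, by linarith⟩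
end

section
/- Let π₃(φ) = √(φ²ψ'(φ)² − ψ'(φ) − 1). Then π₃(φ) ∝ 1 as φ → 0⁺ and π₃(φ) ∝ φ^{−1} as φ → ∞; and for the Jeffreys prior π(φ,μ,α) = π₃(φ)/μ on (0,∞)³, the integral ∫_{(0,∞)³} π(φ,μ,α) · L(φ,μ,α) dφ dμ dα is infinite for every integer n ≥ 2 and all positive data x_1,…,x_n not all equal; i.e., the posterior in the Stacy model with all parameters unknown is improper. -/
/-!
The series `ψ'(φ) = ∑ 1 / (φ + k) ^ 2` follows by differentiating termwise, twice, the series of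
`log Γ` that comes from Gauss's limit formula (`hasSum_trigamma`). Comparing the summand with
telescoping differences gives
`1/φ + 1/(2φ²) + 1/(7φ³) ≤ ψ'(φ) ≤ 1/φ + 1/(2φ²) + 1/(6φ³)` for `φ ≥ 1`
(`le_trigamma`, `trigamma_le`). Any coefficient of `φ⁻³` above `1/8` makes `π₃(φ)²` of exact order
`φ⁻²` at infinity (`pi3_bounds_atTop`). Near `0`, the recurrence `ψ'(φ) = 1/φ² + ψ'(φ + 1)` cancels
the poles and leaves `π₃(φ)² → ψ'(1) - 1 > 0`; the same bounds, applied at `φ + 1`, make this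
quantitative (`pi3_bounds_zero`).

The posterior mass escapes along `α → ∞` with `αφ` of order one. If `M` bounds the data, then on
`α ≥ 40`, `1 ≤ αφ ≤ 2`, `1/2 ≤ Mμ ≤ 1` every factor of the integrand is bounded below
(`integrand_lower_bound`): in particular `α / Γ(φ) ≥ αφ ≥ 1`, and `(μ x_i)^α ≤ 1` controls the
exponential. For fixed `α` this region has area proportional to `1/α`, and `∫ dα/α` diverges.
-/

open MeasureTheory Real Filter Topology

/-- The digamma function `ψ(x) = d/dx log Γ(x)`. -/
noncomputable def digamma (x : ℝ) : ℝ := deriv (fun t => Real.log (Real.Gamma t)) x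

/-- The trigamma function `ψ'(x)`, the derivative of the digamma function. -/
noncomputable def trigamma (x : ℝ) : ℝ := deriv digamma x

/-! ### Series for the digamma and trigamma functions -/

/-- The `k`-th term of the series of `log Γ(x) + log x`. All these terms vanish at `x = 1`. -/
noncomputable def logGammaTerm (k : ℕ) (x : ℝ) : ℝ :=
  x * (log ((k : ℝ) + 2) - log ((k : ℝ) + 1)) - log (x + ((k : ℝ) + 1)) + log ((k : ℝ) + 1)

/-- The derivative of `logGammaTerm k`. -/
noncomputable def digammaTerm (k : ℕ) (x : ℝ) : ℝ :=
  (log ((k : ℝ) + 2) - log ((k : ℝ) + 1)) - 1 / (x + ((k : ℝ) + 1))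

lemma hasDerivAt_logGammaTerm (k : ℕ) {x : ℝ} (hx : 0 < x) :
    HasDerivAt (logGammaTerm k) (digammaTerm k x) x := by
  have hpos : 0 < x + ((k : ℝ) + 1) := by positivity
  have h1 : HasDerivAt (fun y : ℝ => y + ((k : ℝ) + 1)) 1 x := (hasDerivAt_id x).add_const _
  have h2 := h1.log hpos.ne'
  have h3 := (((hasDerivAt_id x).mul_const
    (log ((k : ℝ) + 2) - log ((k : ℝ) + 1))).sub h2).add_const (log ((k : ℝ) + 1))
  rw [one_mul] at h3
  exact h3

lemma hasDerivAt_digammaTerm (k : ℕ) {x : ℝ} (hx : 0 < x) :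
    HasDerivAt (digammaTerm k) (1 / (x + ((k : ℝ) + 1)) ^ 2) x := by
  have hpos : 0 < x + ((k : ℝ) + 1) := by positivity
  have h1 : HasDerivAt (fun y : ℝ => y + ((k : ℝ) + 1)) 1 x := (hasDerivAt_id x).add_const _
  have h2 := (h1.inv hpos.ne').const_sub (log ((k : ℝ) + 2) - log ((k : ℝ) + 1))
  have e : digammaTerm k = fun y : ℝ =>
      (log ((k : ℝ) + 2) - log ((k : ℝ) + 1)) - (y + ((k : ℝ) + 1))⁻¹ := by
    funext y
    simp [digammaTerm]
  rw [e]
  rw [neg_div, neg_neg] at h2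
  exact h2

lemma summable_inv_nat_add_one_sq : Summable fun k : ℕ => 1 / ((k : ℝ) + 1) ^ 2 := by
  have h := (summable_nat_add_iff 1).2 (Real.summable_one_div_nat_pow.2 (by norm_num : 1 < 2))
  simpa using h

/-- Since `1 / (k + 2) ≤ log ((k + 2) / (k + 1)) ≤ 1 / (k + 1)`, the derivative of
`logGammaTerm k` is of order `1 / k ^ 2`, locally uniformly. -/
lemma abs_digammaTerm_le (k : ℕ) {x M : ℝ} (hx : 0 < x) (hM : x ≤ M) (hM1 : 1 ≤ M) :
    ‖digammaTerm k x‖ ≤ M * (1 / ((k : ℝ) + 1) ^ 2) := by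
  have hk : (0 : ℝ) < (k : ℝ) + 1 := by positivity
  have hk2 : (0 : ℝ) < (k : ℝ) + 2 := by positivity
  have hlog : log ((k : ℝ) + 2) - log ((k : ℝ) + 1) = log (((k : ℝ) + 2) / ((k : ℝ) + 1)) :=
    (Real.log_div hk2.ne' hk.ne').symm
  have hup : log (((k : ℝ) + 2) / ((k : ℝ) + 1)) ≤ 1 / ((k : ℝ) + 1) := by
    refine (Real.log_le_sub_one_of_pos (by positivity)).trans_eq ?_
    field_simp
    ring
  have hlo : 1 / ((k : ℝ) + 2) ≤ log (((k : ℝ) + 2) / ((k : ℝ) + 1)) := by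
    refine le_trans (le_of_eq ?_) (Real.one_sub_inv_le_log_of_pos (by positivity))
    field_simp
    ring
  rw [Real.norm_eq_abs, digammaTerm, hlog, abs_le]
  have ha : 1 / ((k : ℝ) + 1) - 1 / (x + ((k : ℝ) + 1)) ≤ M * (1 / ((k : ℝ) + 1) ^ 2) := by
    have : 1 / ((k : ℝ) + 1) - 1 / (x + ((k : ℝ) + 1))
        = x / (((k : ℝ) + 1) * (x + ((k : ℝ) + 1))) := by
      field_simp
      ring
    rw [this, mul_one_div]
    apply div_le_div₀ (by linarith) hM (by positivity)
    nlinarith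
  have hb : 1 / (x + ((k : ℝ) + 1)) - 1 / ((k : ℝ) + 2) ≤ M * (1 / ((k : ℝ) + 1) ^ 2) := by
    have h1 : 1 / (x + ((k : ℝ) + 1)) ≤ 1 / ((k : ℝ) + 1) :=
      one_div_le_one_div_of_le hk (by linarith)
    have h2 : 1 / ((k : ℝ) + 1) - 1 / ((k : ℝ) + 2) = 1 / (((k : ℝ) + 1) * ((k : ℝ) + 2)) := by
      field_simp
      ring
    have h3 : 1 / (((k : ℝ) + 1) * ((k : ℝ) + 2)) ≤ 1 / ((k : ℝ) + 1) ^ 2 := by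
      apply one_div_le_one_div_of_le (by positivity)
      nlinarith
    have h4 : 1 / ((k : ℝ) + 1) ^ 2 ≤ M * (1 / ((k : ℝ) + 1) ^ 2) :=
      le_mul_of_one_le_left (by positivity) hM1
    linarith
  constructor <;> linarith

lemma sum_logGammaTerm (x : ℝ) (n : ℕ) :
    ∑ k ∈ Finset.range n, logGammaTerm k x =
      Real.BohrMollerup.logGammaSeq x n + log x + x * (log ((n : ℝ) + 1) - log n) := by
  have h : ∑ k ∈ Finset.range n, logGammaTerm k x = x * log ((n : ℝ) + 1) + log (n.factorial)
      - ∑ k ∈ Finset.range n, log (x + ((k : ℝ) + 1)) := by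
    induction n with
    | zero => simp
    | succ n ih =>
      have e : log ((n + 1).factorial : ℝ) = log ((n : ℝ) + 1) + log (n.factorial : ℝ) := by
        rw [Nat.factorial_succ, Nat.cast_mul, Real.log_mul (by positivity) (by positivity)]
        push_cast
        rfl
      have e2 : ((n + 1 : ℕ) : ℝ) + 1 = (n : ℝ) + 2 := by push_cast; ring
      rw [Finset.sum_range_succ, Finset.sum_range_succ, ih, e, e2, logGammaTerm]
      ring
  rw [h, Real.BohrMollerup.logGammaSeq, Finset.sum_range_succ']
  push_cast
  rw [add_zero]
  ring

lemma summable_digammaTerm {x : ℝ} (hx : 0 < x) : Summable fun k => digammaTerm k x :=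
  Summable.of_norm_bounded (summable_inv_nat_add_one_sq.mul_left (x + 1))
    fun k => abs_digammaTerm_le k hx (by linarith) (by linarith)

lemma logGammaTerm_one (k : ℕ) : logGammaTerm k 1 = 0 := by
  rw [logGammaTerm, show (1 : ℝ) + ((k : ℝ) + 1) = (k : ℝ) + 2 by ring]
  ring

lemma summable_logGammaTerm {x : ℝ} (hx : 0 < x) : Summable fun k => logGammaTerm k x :=
  summable_of_summable_hasDerivAt_of_isPreconnected
    (t := Set.Ioo 0 (x + 2)) (y₀ := 1) (summable_inv_nat_add_one_sq.mul_left (x + 2))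
    isOpen_Ioo isPreconnected_Ioo
    (fun k _ hy => hasDerivAt_logGammaTerm k hy.1)
    (fun k _ hy => abs_digammaTerm_le k hy.1 hy.2.le (by linarith))
    ⟨one_pos, by linarith⟩ (by simp only [logGammaTerm_one]; exact summable_zero)
    ⟨hx, by linarith⟩

lemma log_Gamma_eq {x : ℝ} (hx : 0 < x) :
    log (Gamma x) = ∑' k, logGammaTerm k x - log x := by
  have h1 := (summable_logGammaTerm hx).hasSum.tendsto_sum_nat
  have h2 := ((Real.BohrMollerup.tendsto_log_gamma hx).add_const (log x)).add
    (Real.tendsto_log_nat_add_one_sub_log.const_mul x)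
  simp only [← sum_logGammaTerm] at h2
  have := tendsto_nhds_unique h1 h2
  linarith

lemma digamma_eq {x : ℝ} (hx : 0 < x) : digamma x = ∑' k, digammaTerm k x - 1 / x := by
  have h := hasDerivAt_tsum_of_isPreconnected
    (t := Set.Ioo 0 (x + 2)) (y₀ := 1) (y := x) (summable_inv_nat_add_one_sq.mul_left (x + 2))
    isOpen_Ioo isPreconnected_Ioo
    (fun k _ hy => hasDerivAt_logGammaTerm k hy.1)
    (fun k _ hy => abs_digammaTerm_le k hy.1 hy.2.le (by linarith))
    ⟨one_pos, by linarith⟩ (by simp only [logGammaTerm_one]; exact summable_zero)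
    ⟨hx, by linarith⟩
  have h2 := h.sub (Real.hasDerivAt_log hx.ne')
  have h3 : (fun t => log (Gamma t)) =ᶠ[𝓝 x] (fun z => ∑' k, logGammaTerm k z) - log := by
    filter_upwards [Ioi_mem_nhds hx] with t ht
    exact log_Gamma_eq ht
  rw [digamma, h3.deriv_eq, h2.deriv, one_div]

lemma inv_add_sq_le (k : ℕ) {x : ℝ} (hx : 0 < x) :
    ‖1 / (x + ((k : ℝ) + 1)) ^ 2‖ ≤ 1 / ((k : ℝ) + 1) ^ 2 := by
  rw [Real.norm_of_nonneg (by positivity)]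
  apply one_div_le_one_div_of_le (by positivity)
  apply pow_le_pow_left₀ (by positivity)
  linarith

lemma trigamma_eq {x : ℝ} (hx : 0 < x) :
    trigamma x = 1 / x ^ 2 + ∑' k : ℕ, 1 / (x + ((k : ℝ) + 1)) ^ 2 := by
  have h := hasDerivAt_tsum_of_isPreconnected
    (t := Set.Ioi (0 : ℝ)) (y₀ := x) (y := x) summable_inv_nat_add_one_sq
    isOpen_Ioi isPreconnected_Ioi
    (fun k _ hy => hasDerivAt_digammaTerm k hy)
    (fun k _ hy => inv_add_sq_le k hy)
    hx (summable_digammaTerm hx) hx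
  have h2 := h.sub (hasDerivAt_inv hx.ne')
  have h3 : digamma =ᶠ[𝓝 x] (fun z => ∑' k, digammaTerm k z) - fun z => z⁻¹ := by
    filter_upwards [Ioi_mem_nhds hx] with t ht
    simpa using digamma_eq ht
  rw [trigamma, h3.deriv_eq, h2.deriv]
  ring

lemma hasSum_trigamma {x : ℝ} (hx : 0 < x) :
    HasSum (fun k : ℕ => 1 / (x + (k : ℝ)) ^ 2) (trigamma x) := by
  have hs : Summable fun k : ℕ => 1 / (x + ((k : ℝ) + 1)) ^ 2 :=
    Summable.of_norm_bounded summable_inv_nat_add_one_sq fun k => inv_add_sq_le k hx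
  rw [trigamma_eq hx, ← hasSum_nat_add_iff' 1]
  simpa using hs.hasSum

lemma trigamma_add_one {x : ℝ} (hx : 0 < x) : trigamma x = 1 / x ^ 2 + trigamma (x + 1) := by
  rw [trigamma_eq hx, ← (hasSum_trigamma (by linarith : 0 < x + 1)).tsum_eq]
  congr 2
  funext k
  ring

/-! ### Asymptotic behaviour of `π₃` -/

lemma tendsto_rational_bound (c x : ℝ) :
    Tendsto (fun n : ℕ => 1 / (x + n) + 1 / (2 * (x + n) ^ 2) + c / (x + n) ^ 3) atTop (𝓝 0) := by
  have h : Tendsto (fun n : ℕ => (x + (n : ℝ))⁻¹) atTop (𝓝 0) :=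
    tendsto_inv_atTop_zero.comp
      (tendsto_atTop_add_const_left _ _ tendsto_natCast_atTop_atTop)
  have h2 := (h.add ((h.pow 2).const_mul (1 / 2))).add ((h.pow 3).const_mul c)
  norm_num at h2
  refine h2.congr fun n => ?_
  simp only [mul_inv, div_eq_mul_inv]
  ring

lemma sum_telescope (f : ℝ → ℝ) (x : ℝ) (n : ℕ) :
    ∑ k ∈ Finset.range n, (f (x + (k : ℝ)) - f (x + (k : ℝ) + 1)) = f x - f (x + n) := by
  have := Finset.sum_range_sub' (fun k : ℕ => f (x + (k : ℝ))) n
  simp only [Nat.cast_add, Nat.cast_one, Nat.cast_zero, add_zero, ← add_assoc] at this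
  exact this

/-- With `f y = 1 / y + 1 / (2 y ^ 2) + 1 / (7 y ^ 3)` one has `f y - f (y + 1) ≤ 1 / y ^ 2` for
`y ≥ 1`, and the sum over `y = x, x + 1, …` telescopes. -/
lemma le_trigamma {x : ℝ} (hx : 1 ≤ x) :
    1 / x + 1 / (2 * x ^ 2) + (1 / 7) / x ^ 3 ≤ trigamma x := by
  have ht := (tendsto_rational_bound (1 / 7) x).const_sub
    (1 / x + 1 / (2 * x ^ 2) + (1 / 7) / x ^ 3)
  rw [sub_zero] at ht
  refine le_of_tendsto_of_tendsto' ht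
    (hasSum_trigamma (by linarith : 0 < x)).tendsto_sum_nat fun n => ?_
  rw [← sum_telescope (fun y => 1 / y + 1 / (2 * y ^ 2) + (1 / 7) / y ^ 3) x n]
  refine Finset.sum_le_sum fun k _ => ?_
  have hy : 1 ≤ x + (k : ℝ) := by
    have : (0 : ℝ) ≤ k := k.cast_nonneg
    linarith
  generalize x + (k : ℝ) = y at hy
  have hy0 : 0 < y := by linarith
  have key : 1 / y ^ 2 - ((1 / y + 1 / (2 * y ^ 2) + (1 / 7) / y ^ 3)
      - (1 / (y + 1) + 1 / (2 * (y + 1) ^ 2) + (1 / 7) / (y + 1) ^ 3))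
      = (y ^ 2 + y - 2) / (14 * (y ^ 3 * (y + 1) ^ 3)) := by
    field_simp
    ring
  have : 0 ≤ (y ^ 2 + y - 2) / (14 * (y ^ 3 * (y + 1) ^ 3)) :=
    div_nonneg (by nlinarith) (by positivity)
  linarith

/-- With `f y = 1 / y + 1 / (2 y ^ 2) + 1 / (6 y ^ 3)` one has `1 / y ^ 2 ≤ f y - f (y + 1)` for
`y > 0`, and the sum over `y = x, x + 1, …` telescopes. -/
lemma trigamma_le {x : ℝ} (hx : 0 < x) :
    trigamma x ≤ 1 / x + 1 / (2 * x ^ 2) + (1 / 6) / x ^ 3 := by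
  have ht := (tendsto_rational_bound (1 / 6) x).const_sub
    (1 / x + 1 / (2 * x ^ 2) + (1 / 6) / x ^ 3)
  rw [sub_zero] at ht
  refine le_of_tendsto_of_tendsto' (hasSum_trigamma hx).tendsto_sum_nat ht fun n => ?_
  rw [← sum_telescope (fun y => 1 / y + 1 / (2 * y ^ 2) + (1 / 6) / y ^ 3) x n]
  refine Finset.sum_le_sum fun k _ => ?_
  have hy : 0 < x + (k : ℝ) := by positivity
  generalize x + (k : ℝ) = y at hy
  have key : ((1 / y + 1 / (2 * y ^ 2) + (1 / 6) / y ^ 3)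
      - (1 / (y + 1) + 1 / (2 * (y + 1) ^ 2) + (1 / 6) / (y + 1) ^ 3)) - 1 / y ^ 2
      = 1 / (6 * (y ^ 3 * (y + 1) ^ 3)) := by
    field_simp
    ring
  have : 0 ≤ 1 / (6 * (y ^ 3 * (y + 1) ^ 3)) := by positivity
  linarith

/-- Writing `S = ψ'(φ + 1) = ψ'(φ) - 1 / φ ^ 2`, the expression under the root equals
`S + φ ^ 2 * S ^ 2 - 1`, in which the poles at `0` have cancelled. -/
lemma pi3_bounds_zero {φ : ℝ} (h0 : 0 < φ) (h1 : φ ≤ 1 / 20) :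
    1 / 2 ≤ √(φ ^ 2 * trigamma φ ^ 2 - trigamma φ - 1) ∧
      √(φ ^ 2 * trigamma φ ^ 2 - trigamma φ - 1) ≤ 3 := by
  have hup := trigamma_le (by linarith : 0 < φ + 1)
  have hlo := le_trigamma (by linarith : 1 ≤ φ + 1)
  have e : φ ^ 2 * trigamma φ ^ 2 - trigamma φ - 1
      = trigamma (φ + 1) + φ ^ 2 * trigamma (φ + 1) ^ 2 - 1 := by
    rw [trigamma_add_one h0]
    field_simp
    ring
  rw [e]
  generalize trigamma (φ + 1) = S at *
  have hS2 : S ≤ 2 := by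
    have a1 : 1 / (φ + 1) ≤ 1 := by rw [div_le_one (by linarith)]; linarith
    have a2 : 1 / (2 * (φ + 1) ^ 2) ≤ 1 / 2 :=
      one_div_le_one_div_of_le (by norm_num) (by nlinarith)
    have a3 : (1 / 6) / (φ + 1) ^ 3 ≤ 1 / 6 :=
      div_le_self (by norm_num) (one_le_pow₀ (by linarith))
    linarith
  have hS1 : 5 / 4 ≤ S := by
    have a1 : 9 / 10 ≤ 1 / (φ + 1) := by rw [le_div_iff₀ (by linarith)]; linarith
    have a2 : 4 / 10 ≤ 1 / (2 * (φ + 1) ^ 2) := by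
      rw [le_div_iff₀ (by positivity)]; nlinarith
    have a3 : 0 ≤ (1 / 7) / (φ + 1) ^ 3 := by positivity
    linarith
  have hq : φ ^ 2 * S ^ 2 ≤ 1 := by
    rw [← mul_pow]
    exact pow_le_one₀ (by positivity) (by nlinarith)
  have hq0 : 0 ≤ φ ^ 2 * S ^ 2 := by positivity
  constructor
  · apply Real.le_sqrt_of_sq_le
    linarith
  · rw [Real.sqrt_le_left (by norm_num)]
    linarith

/-- Writing `ψ'(φ) = (1 + 1 / (2 φ) + c / φ ^ 2) / φ`, with `1 / 7 ≤ c ≤ 1 / 6`, the expression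
under the root is `(2 c - 1 / 4 + c ^ 2 / φ ^ 2) / φ ^ 2`. -/
lemma pi3_bounds_atTop {φ : ℝ} (h1 : 1 ≤ φ) :
    1 / 6 * φ⁻¹ ≤ √(φ ^ 2 * trigamma φ ^ 2 - trigamma φ - 1) ∧
      √(φ ^ 2 * trigamma φ ^ 2 - trigamma φ - 1) ≤ φ⁻¹ := by
  have h0 : 0 < φ := by linarith
  have hup := trigamma_le h0
  have hlo := le_trigamma h1
  obtain ⟨c, hc⟩ : ∃ c, trigamma φ = 1 / φ + 1 / (2 * φ ^ 2) + c / φ ^ 3 :=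
    ⟨(trigamma φ - 1 / φ - 1 / (2 * φ ^ 2)) * φ ^ 3, by field_simp; ring⟩
  rw [hc] at hup hlo
  have hc6 : c ≤ 1 / 6 := by
    have : c / φ ^ 3 ≤ (1 / 6) / φ ^ 3 := by linarith
    rwa [div_le_div_iff_of_pos_right (by positivity)] at this
  have hc7 : 1 / 7 ≤ c := by
    have : (1 / 7) / φ ^ 3 ≤ c / φ ^ 3 := by linarith
    rwa [div_le_div_iff_of_pos_right (by positivity)] at this
  have e : φ ^ 2 * trigamma φ ^ 2 - trigamma φ - 1
      = (2 * c - 1 / 4 + c ^ 2 * φ⁻¹ ^ 2) * φ⁻¹ ^ 2 := by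
    rw [hc]
    field_simp
    ring
  rw [e]
  have hi0 : 0 < φ⁻¹ := by positivity
  have hi1 : φ⁻¹ ^ 2 ≤ 1 := pow_le_one₀ hi0.le (inv_le_one_of_one_le₀ h1)
  have hq0 : 0 ≤ c ^ 2 * φ⁻¹ ^ 2 := by positivity
  have hq1 : c ^ 2 * φ⁻¹ ^ 2 ≤ 1 / 4 := by nlinarith [sq_nonneg φ⁻¹]
  constructor
  · apply Real.le_sqrt_of_sq_le
    rw [mul_pow]
    gcongr
    linarith
  · rw [Real.sqrt_le_left hi0.le]
    exact mul_le_of_le_one_left (by positivity) (by linarith)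

lemma limsup_ofReal_lt_top {l : Filter ℝ} {f : ℝ → ℝ} (C : ℝ) (h : ∀ᶠ t in l, f t ≤ C) :
    Filter.limsup (fun t => ENNReal.ofReal (f t)) l < ⊤ :=
  (Filter.limsup_le_of_le (h := h.mono fun _ ht => ENNReal.ofReal_le_ofReal ht)).trans_lt
    ENNReal.ofReal_lt_top

/-! ### Divergence of the integral -/

/-- `Γ ≤ 1` on `[1, 2]` by convexity, so `Γ(φ) = Γ(φ + 1) / φ ≤ 1 / φ` on `(0, 1]`. -/
lemma Gamma_le_inv {φ : ℝ} (h0 : 0 < φ) (h1 : φ ≤ 1) : Gamma φ ≤ 1 / φ := by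
  have h := Real.convexOn_Gamma.le_max_of_mem_Icc (x := 1) (y := 2) (z := φ + 1)
    (by simp) (by simp) ⟨by linarith, by linarith⟩
  rw [Real.Gamma_one, Real.Gamma_two, max_self, Real.Gamma_add_one h0.ne'] at h
  rw [le_div_iff₀ h0]
  linarith

/-- On the region `α ≥ 40`, `1 ≤ α φ ≤ 2`, `1 / 2 ≤ M μ ≤ 1`, where `M` bounds the data, the
integrand is bounded below by a positive constant. -/
lemma integrand_lower_bound (n : ℕ) (x : Fin n → ℝ) {m M : ℝ} (hm : 0 < m) (hm1 : m ≤ 1)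
    (hM : 1 ≤ M) (hmx : ∀ i, m ≤ x i) (hxM : ∀ i, x i ≤ M) {α μ φ : ℝ} (hα : 40 ≤ α)
    (hμ : μ ∈ Set.Icc (1 / (2 * M)) (1 / M)) (hφ : φ ∈ Set.Icc (1 / α) (2 / α)) :
    1 / 2 * (1 * m ^ n * (1 / (2 * M)) ^ ((n : ℝ) * 2) * Real.exp (-n)) ≤
      √(φ ^ 2 * trigamma φ ^ 2 - trigamma φ - 1) / μ * stacyLikelihood n x φ μ α := by
  have hα0 : 0 < α := by linarith
  have hφ0 : 0 < φ := lt_of_lt_of_le (by positivity) hφ.1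
  have hφ1 : φ ≤ 1 / 20 := hφ.2.trans (by rw [div_le_div_iff₀ hα0 (by norm_num)]; linarith)
  have ht1 : 1 ≤ α * φ := by
    have := hφ.1
    rw [div_le_iff₀ hα0] at this
    linarith
  have ht2 : α * φ ≤ 2 := by
    have := hφ.2
    rw [le_div_iff₀ hα0] at this
    linarith
  have hM0 : 0 < M := by linarith
  have hμ0 : 0 < μ := lt_of_lt_of_le (by positivity) hμ.1
  have hμM : μ * M ≤ 1 := by
    have := hμ.2
    rwa [le_div_iff₀ hM0] at this
  have hμ1 : μ ≤ 1 := by nlinarith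
  have hx0 : ∀ i, 0 < x i := fun i => hm.trans_le (hmx i)
  have b1 : 1 / 2 ≤ √(φ ^ 2 * trigamma φ ^ 2 - trigamma φ - 1) / μ :=
    (pi3_bounds_zero hφ0 hφ1).1.trans (le_div_self (Real.sqrt_nonneg _) hμ0 hμ1)
  have b2 : 1 ≤ α ^ n / Gamma φ ^ n := by
    have hG := Real.Gamma_pos_of_pos hφ0
    rw [← div_pow]
    apply one_le_pow₀
    rw [one_le_div hG]
    refine (Gamma_le_inv hφ0 (by linarith)).trans ?_
    rw [div_le_iff₀ hφ0]
    exact ht1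
  have b3 : m ^ n ≤ ∏ i, x i ^ (α * φ - 1) := by
    have : ∏ _i : Fin n, m ≤ ∏ i, x i ^ (α * φ - 1) := by
      refine Finset.prod_le_prod (fun _ _ => hm.le) fun i _ => ?_
      calc m = m ^ (1 : ℝ) := (Real.rpow_one m).symm
        _ ≤ m ^ (α * φ - 1) := Real.rpow_le_rpow_of_exponent_ge hm hm1 (by linarith)
        _ ≤ x i ^ (α * φ - 1) := Real.rpow_le_rpow hm.le (hmx i) (by linarith)
    simpa using this
  have b4 : (1 / (2 * M)) ^ ((n : ℝ) * 2) ≤ μ ^ ((n : ℝ) * α * φ) := by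
    have hn : (0 : ℝ) ≤ n := n.cast_nonneg
    rw [mul_assoc]
    calc (1 / (2 * M)) ^ ((n : ℝ) * 2) ≤ μ ^ ((n : ℝ) * 2) :=
          Real.rpow_le_rpow (by positivity) hμ.1 (by positivity)
      _ ≤ μ ^ ((n : ℝ) * (α * φ)) :=
          Real.rpow_le_rpow_of_exponent_ge hμ0 hμ1 (by gcongr)
  have b5 : Real.exp (-n) ≤ Real.exp (-(μ ^ α * ∑ i, x i ^ α)) := by
    apply Real.exp_le_exp.2
    apply neg_le_neg
    rw [Finset.mul_sum]
    have : ∑ i, μ ^ α * x i ^ α ≤ ∑ _i : Fin n, (1 : ℝ) := by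
      refine Finset.sum_le_sum fun i _ => ?_
      rw [← Real.mul_rpow hμ0.le (hx0 i).le]
      refine Real.rpow_le_one (mul_nonneg hμ0.le (hx0 i).le) ?_ hα0.le
      exact (mul_le_mul_of_nonneg_left (hxM i) hμ0.le).trans hμM
    simpa using this
  rw [stacyLikelihood]
  have hG := Real.Gamma_pos_of_pos hφ0
  have hP : 0 ≤ ∏ i, x i ^ (α * φ - 1) := by
    exact Finset.prod_nonneg fun i _ => (Real.rpow_pos_of_pos (hx0 i) _).le
  gcongr

lemma const_mul_le_setLIntegral {f : ℝ → ENNReal} {a b : ℝ} (c : ENNReal) (ha : 0 < a)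
    (h : ∀ t ∈ Set.Icc a b, c ≤ f t) :
    c * ENNReal.ofReal (b - a) ≤ ∫⁻ t in Set.Ioi (0 : ℝ), f t := by
  calc c * ENNReal.ofReal (b - a) = ∫⁻ _ in Set.Icc a b, c := by
        rw [setLIntegral_const, Real.volume_Icc]
    _ ≤ ∫⁻ t in Set.Icc a b, f t := setLIntegral_mono' measurableSet_Icc h
    _ ≤ ∫⁻ t in Set.Ioi (0 : ℝ), f t :=
        lintegral_mono_set fun t ht => lt_of_lt_of_le ha ht.1

lemma setLIntegral_Ioi_inv (a : ℝ) (ha : 0 < a) :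
    ∫⁻ t in Set.Ioi a, ENNReal.ofReal t⁻¹ = ⊤ := by
  by_contra h
  refine not_integrableOn_Ioi_inv (a := a) ⟨measurable_inv.aestronglyMeasurable, ?_⟩
  rw [hasFiniteIntegral_iff_ofReal]
  · exact lt_top_iff_ne_top.2 h
  · filter_upwards [ae_restrict_mem measurableSet_Ioi] with t ht
    exact inv_nonneg.2 (ha.trans ht).le

lemma posterior_improper (n : ℕ) (x : Fin n → ℝ) (hx : ∀ i, 0 < x i) :
    (∫⁻ α in Set.Ioi (0:ℝ), ∫⁻ μ in Set.Ioi (0:ℝ), ∫⁻ φ in Set.Ioi (0:ℝ),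
        ENNReal.ofReal (√(φ ^ 2 * trigamma φ ^ 2 - trigamma φ - 1) / μ *
          stacyLikelihood n x φ μ α)) = ⊤ := by
  obtain ⟨M, hM, hxM⟩ : ∃ M : ℝ, 1 ≤ M ∧ ∀ i, x i ≤ M := by
    refine ⟨1 + ∑ i, x i, ?_, fun i => ?_⟩
    · have := Finset.sum_nonneg fun i (_ : i ∈ Finset.univ) => (hx i).le
      linarith
    · have := Finset.single_le_sum (f := x) (fun i _ => (hx i).le) (Finset.mem_univ i)
      linarith
  obtain ⟨m, hm, hm1, hmx⟩ : ∃ m : ℝ, 0 < m ∧ m ≤ 1 ∧ ∀ i, m ≤ x i := by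
    have hs : 0 ≤ ∑ i, (x i)⁻¹ := Finset.sum_nonneg fun i _ => (inv_pos.2 (hx i)).le
    refine ⟨(1 + ∑ i, (x i)⁻¹)⁻¹, by positivity, inv_le_one_of_one_le₀ (by linarith),
      fun i => ?_⟩
    have := Finset.single_le_sum (f := fun i => (x i)⁻¹)
      (fun i _ => (inv_pos.2 (hx i)).le) (Finset.mem_univ i)
    exact inv_le_of_inv_le₀ (hx i) (by linarith)
  have hM0 : 0 < M := by linarith
  set c : ℝ := 1 / 2 * (1 * m ^ n * (1 / (2 * M)) ^ ((n : ℝ) * 2) * Real.exp (-n)) with hc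
  have hc0 : 0 < c := by positivity
  rw [eq_top_iff]
  calc (⊤ : ENNReal)
      = ENNReal.ofReal c * ENNReal.ofReal (1 / M - 1 / (2 * M)) *
          ∫⁻ α in Set.Ioi (40 : ℝ), ENNReal.ofReal α⁻¹ := by
        rw [setLIntegral_Ioi_inv 40 (by norm_num), ENNReal.mul_top]
        have : 0 < 1 / M - 1 / (2 * M) := by
          rw [sub_pos]
          exact one_div_lt_one_div_of_lt hM0 (by linarith)
        exact mul_ne_zero (ENNReal.ofReal_pos.2 hc0).ne' (ENNReal.ofReal_pos.2 this).ne'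
    _ = ∫⁻ α in Set.Ioi (40 : ℝ),
          ENNReal.ofReal c * ENNReal.ofReal (1 / M - 1 / (2 * M)) * ENNReal.ofReal α⁻¹ :=
        (lintegral_const_mul _ (by fun_prop)).symm
    _ ≤ ∫⁻ α in Set.Ioi (40 : ℝ), ∫⁻ μ in Set.Ioi (0:ℝ), ∫⁻ φ in Set.Ioi (0:ℝ),
        ENNReal.ofReal (√(φ ^ 2 * trigamma φ ^ 2 - trigamma φ - 1) / μ *
          stacyLikelihood n x φ μ α) := by
        refine setLIntegral_mono' measurableSet_Ioi fun α hα => ?_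
        have hα' : 40 < α := hα
        have hα0 : 0 < α := by linarith
        rw [mul_right_comm]
        refine const_mul_le_setLIntegral _ (by positivity) fun μ hμ => ?_
        -- `α⁻¹` is the length of the interval over which `φ` ranges
        rw [show α⁻¹ = 2 / α - 1 / α by field_simp; norm_num]
        refine const_mul_le_setLIntegral _ (by positivity) fun φ hφ => ?_
        exact ENNReal.ofReal_le_ofReal
          (integrand_lower_bound n x hm hm1 hM hmx hxM hα'.le hμ hφ)
    _ ≤ _ := lintegral_mono_set (Set.Ioi_subset_Ioi (by norm_num))

/-- (Corollary 3.1 of the paper.) The Jeffreys-prior factor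
`π₃(φ) = √(φ²ψ'(φ)² − ψ'(φ) − 1)` satisfies `π₃(φ) ∝ 1` as `φ → 0⁺` and
`π₃(φ) ∝ φ⁻¹` as `φ → ∞`, and the Jeffreys prior `π₃(φ)/μ` yields an improper
posterior in the Stacy model, for all `n ≥ 2` and positive data not all equal. -/
theorem jeffreys_prior_power_law_and_improper :
    (Filter.limsup (fun φ =>
        ENNReal.ofReal (Real.sqrt (φ ^ 2 * trigamma φ ^ 2 - trigamma φ - 1) / 1))
        (𝓝[>] (0:ℝ)) < ⊤ ∧
      Filter.limsup (fun φ =>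
        ENNReal.ofReal (1 / Real.sqrt (φ ^ 2 * trigamma φ ^ 2 - trigamma φ - 1)))
        (𝓝[>] (0:ℝ)) < ⊤) ∧
    (Filter.limsup (fun φ =>
        ENNReal.ofReal (Real.sqrt (φ ^ 2 * trigamma φ ^ 2 - trigamma φ - 1) / φ ^ (-1 : ℝ)))
        Filter.atTop < ⊤ ∧
      Filter.limsup (fun φ =>
        ENNReal.ofReal (φ ^ (-1 : ℝ) / Real.sqrt (φ ^ 2 * trigamma φ ^ 2 - trigamma φ - 1)))
        Filter.atTop < ⊤) ∧
    (∀ (n : ℕ), 2 ≤ n → ∀ x : Fin n → ℝ, (∀ i, 0 < x i) → (∃ i j, x i ≠ x j) →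
      (∫⁻ α in Set.Ioi (0:ℝ), ∫⁻ μ in Set.Ioi (0:ℝ), ∫⁻ φ in Set.Ioi (0:ℝ),
        ENNReal.ofReal (Real.sqrt (φ ^ 2 * trigamma φ ^ 2 - trigamma φ - 1) / μ *
          stacyLikelihood n x φ μ α)) = ⊤) := by
  refine ⟨⟨?_, ?_⟩, ⟨?_, ?_⟩, fun n _ x hx _ => posterior_improper n x hx⟩
  · refine limsup_ofReal_lt_top 3 ?_
    filter_upwards [Ioc_mem_nhdsGT (by norm_num : (0 : ℝ) < 1 / 20)] with φ hφ
    rw [div_one]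
    exact (pi3_bounds_zero hφ.1 hφ.2).2
  · refine limsup_ofReal_lt_top 2 ?_
    filter_upwards [Ioc_mem_nhdsGT (by norm_num : (0 : ℝ) < 1 / 20)] with φ hφ
    have h := (pi3_bounds_zero hφ.1 hφ.2).1
    rw [div_le_iff₀ (by linarith)]
    linarith
  · refine limsup_ofReal_lt_top 1 ?_
    filter_upwards [Filter.eventually_ge_atTop 1] with φ hφ
    have hi : 0 < φ⁻¹ := inv_pos.2 (by linarith)
    rw [Real.rpow_neg_one, div_le_one hi]
    exact (pi3_bounds_atTop hφ).2
  · refine limsup_ofReal_lt_top 6 ?_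
    filter_upwards [Filter.eventually_ge_atTop 1] with φ hφ
    have hi : 0 < φ⁻¹ := inv_pos.2 (by linarith)
    have h := (pi3_bounds_atTop hφ).1
    rw [Real.rpow_neg_one, div_le_iff₀ (by linarith)]
    linarith
end
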